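/- arXiv:1212.0216 — 2 statements merged into one kernel-verified Lean document; each statement's English description precedes it below -/
import Mathlib

section
/- Let Y ⊆ X be a compact A-minimal subset, and suppose that for every root α there exists an A_α-minimal subset Y_α ⊆ Y such that A·Y_α = Y. Then Y is a single A-orbit; in particular Y is a compact A-orbit. -/
/-! Let `L` be the stabiliser of `Y` in `G` and let `R = retSet G Y` be the set of all `g` with
`g Y ∩ Y ≠ ∅`. Compactness of `Y` makes `R` closed, and `L R L = R`, where `A ⊆ L`.

*Root groups.* Fix a root `α`, the minimal set `Y_α` of `A_α`, and a one-parameter group `b t` in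
`A` complementary to `A_α`. The translates `b t Y_α` are `A_α`-minimal and fill `Y`, so by Baire's
theorem boundedly many `t` suffice and some `b r` with `r > 0` preserves `Y_α` (`exists_period`). If
a nontrivial `u ∈ U_α` lies in `R`, it maps one translate `W` onto another, because `U_α` commutes
with `A_α`. A commutator with `b r` is then a nontrivial element of `U_α` preserving `W`, and
contracting it by `b r` makes these elements dense in `U_α`; so `U_α` preserves `W`, and, conjugating
by `b t`, every translate. Hence `U_α ⊆ L` (`unipotent_invariance`, `elemU_invariance`).

*Elements of `R` near the identity.* Let `r i j` mean `i = j` or `U_{ij} ⊆ L`. By the commutator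
relations `r` is a preorder, and by Gaussian elimination all `g` near `1` supported on `r` lie in
`L` (`supported_mem`). Conversely every `g ∈ R` near `1` is supported on `r` (`near_supported`):
otherwise, dividing by an element of `L` near `1` supported on `r`, there would be elements of `R`
tending to `1`, vanishing at the off-diagonal places in `r` and not diagonal. Rescaling them by
conjugation with `A` and passing to limits gives a nontrivial root element of `R` for a root outside
`r` (`blowup`), contradicting the definition of `r`.

*Closing.* Take a regular `a ∈ A`. By recurrence `h a ^ m y = y` for some `y ∈ Y`, some large `m`
and some `h` near `1`; then `h ∈ R` is supported on `r`. By the implicit function theorem `h a ^ m`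
is conjugate, by an element near `1` supported on `r`, hence in `L`, to a regular diagonal element
(`diagonalise_nhds`). So a regular element `d ∈ A` fixes a point `z ∈ Y` (`exists_regular_fixed`).
By density of `A z`, `d` fixes `Y` pointwise; if `g y ∈ A z` with `g` near `1`, then `g⁻¹ d g`
fixes `y` and is close to `d`, so discreteness of stabilisers forces `g` to commute with `d`, which
means `g ∈ A`. Hence `y ∈ A z` (`orbit_of_regular`). -/

open Matrix MeasureTheory Pointwise

/-- `G = SL_n(ℝ)`. -/
abbrev SLR (n : ℕ) := Matrix.SpecialLinearGroup (Fin n) ℝ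

/-- The standard topology on `SL_n(ℝ)`, as a subspace of the matrices. -/
instance (n : ℕ) : TopologicalSpace (SLR n) :=
  inferInstanceAs (TopologicalSpace {A : Matrix (Fin n) (Fin n) ℝ // A.det = 1})

/-- `Γ = SL_n(ℤ)`, viewed as a subgroup of `SL_n(ℝ)`. -/
def GammaZ (n : ℕ) : Subgroup (SLR n) :=
  (Matrix.SpecialLinearGroup.map (n := Fin n) (Int.castRingHom ℝ)).range

/-- `A`: the set of diagonal matrices in `SL_n(ℝ)` with positive diagonal entries. -/
def posDiag (n : ℕ) : Set (SLR n) :=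
  {g | (∀ i j, i ≠ j → g.1 i j = 0) ∧ (∀ i, 0 < g.1 i i)}

/-- `A_α`: the kernel of the root `α = α_{ij}`, `α(a) = a_{ii}/a_{jj}`, i.e. the set of
`a ∈ A` with `a_{ii} = a_{jj}`. -/
def rootKer (n : ℕ) (i j : Fin n) : Set (SLR n) :=
  {g | g ∈ posDiag n ∧ g.1 i i = g.1 j j}

/-- `u_α(s) = I + s E_{ij}`, an element of the root group `U_α`. -/
noncomputable def elemU (n : ℕ) {i j : Fin n} (hij : i ≠ j) (s : ℝ) : SLR n :=
  ⟨Matrix.transvection i j s, Matrix.det_transvection_of_ne i j hij s⟩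

/-- A nonempty subset `Z` is `S`-minimal if it is invariant under each element of `S`
and every `S`-orbit of a point of `Z` is dense in `Z`. -/
def IsMinimalOn {G X : Type*} [SMul G X] [TopologicalSpace X] (S : Set G) (Z : Set X) : Prop :=
  Z.Nonempty ∧ (∀ g ∈ S, (g • ·) '' Z = Z) ∧ ∀ z ∈ Z, Z ⊆ closure ((· • z) '' S)

/-- `Γ` is a lattice in `G`: a discrete subgroup such that `G/Γ` carries a (nonzero)
finite `G`-invariant Borel measure. -/
def IsLattice {G : Type*} [Group G] [TopologicalSpace G] (Γ : Subgroup G) : Prop :=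
  DiscreteTopology Γ ∧
    ∃ μ : @Measure (G ⧸ Γ) (borel _),
      μ Set.univ ≠ 0 ∧ μ Set.univ ≠ ⊤ ∧
      ∀ (g : G) (s : Set (G ⧸ Γ)), μ ((g • ·) ⁻¹' s) = μ s

/-! ### Analysis of matrices near the identity -/

open Classical in
/-- Coordinate projection of matrices: keep the entries `(i, j)` with `r i j`, kill the others. -/
noncomputable def maskL {n : ℕ} (r : Fin n → Fin n → Prop) :
    Matrix (Fin n) (Fin n) ℝ →ₗ[ℝ] Matrix (Fin n) (Fin n) ℝ where
  toFun Q := Matrix.of fun i j => if r i j then Q i j else 0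
  map_add' P Q := by ext i j; by_cases h : r i j <;> simp [h]
  map_smul' c Q := by ext i j; by_cases h : r i j <;> simp [h]

lemma maskL_pos {n : ℕ} {r : Fin n → Fin n → Prop} (Q : Matrix (Fin n) (Fin n) ℝ) {i j : Fin n}
    (h : r i j) : maskL r Q i j = Q i j := by
  simp [maskL, h]

lemma maskL_neg {n : ℕ} {r : Fin n → Fin n → Prop} (Q : Matrix (Fin n) (Fin n) ℝ) {i j : Fin n}
    (h : ¬ r i j) : maskL r Q i j = 0 := by
  simp [maskL, h]

lemma maskL_one {n : ℕ} {r : Fin n → Fin n → Prop} (hr : ∀ i, r i i) :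
    maskL r (1 : Matrix (Fin n) (Fin n) ℝ) = 1 := by
  ext i j
  by_cases h : r i j
  · rw [maskL_pos _ h]
  · rw [maskL_neg _ h, Matrix.one_apply_ne]
    rintro rfl; exact h (hr i)

/-- The three-variable map `F(S, h, q)` of `clos_abs`; its zeros are diagonalisations of products
`h * D`. Here `S` collects the contraction factors of conjugation by `D`, and `q` collects the
unknown triangular and diagonal factors. -/
def closF {E : Type*} [Ring E] (π lo up di : E → E) (H : E → E → E) (p : E × E × E) : E :=
  (1 + up (H p.1 (π p.2.2))) * (1 + lo (π p.2.2)) * π p.2.1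
    - (1 + di (π p.2.2)) * (1 + up (π p.2.2)) * (1 + lo (H p.1 (π p.2.2)))
    + (p.2.2 - π p.2.2)

section Normed

variable {E : Type*} [NormedRing E] [NormedAlgebra ℝ E] [CompleteSpace E]

open Filter Topology in
lemma factor_abs (π : E →L[ℝ] E) (hπ1 : π 1 = 1) :
    Filter.map (fun Q : E => π Q * (1 + (Q - π Q))) (𝓝 1) = 𝓝 1 := by
  have h1 : HasStrictFDerivAt (fun Q : E => π Q) π 1 := π.hasStrictFDerivAt
  have h2 : HasStrictFDerivAt (fun Q : E => 1 + (Q - π Q)) (ContinuousLinearMap.id ℝ _ - π) 1 :=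
    ((hasStrictFDerivAt_id _).sub h1).const_add 1
  have h4 := (h1.mul' h2).map_nhds_eq_of_surj ?_
  · have e : (fun Q : E => π Q) 1 * (fun Q : E => 1 + (Q - π Q)) 1 = 1 := by
      simp [hπ1]
    rw [Pi.mul_apply, e] at h4
    exact h4
  · rw [LinearMap.range_eq_top]
    intro Q
    refine ⟨Q, ?_⟩
    simp [hπ1]

open Filter Topology in
/-- The implicit function theorem for `closF`: its derivative in `q` at the base point is the map of
`hs`, whose surjectivity makes `(S, h, F(S, h, q))` open there, so that `F(S, h, q) = 0` has small
solutions `q` for all `(S, h)` near `(0, 1)`. -/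
lemma clos_abs (π lo up di : E →L[ℝ] E) (H : E →L[ℝ] E →L[ℝ] E) (hπ1 : π 1 = 1)
    (hs : ∀ e, ∃ q, lo (π q) - up (π q) - di (π q) + (q - π q) = e) :
    Filter.map (fun p : E × E × E => (p.1, p.2.1, closF π lo up di (fun a b => H a b) p))
      (𝓝 (0, 1, 0)) = 𝓝 (0, 1, 0) := by
  let x0 : E × E × E := (0, 1, 0)
  have dS : HasStrictFDerivAt (fun p : E × E × E => p.1) (ContinuousLinearMap.fst ℝ E (E × E)) x0 :=
    hasStrictFDerivAt_fst
  have dh : HasStrictFDerivAt (fun p : E × E × E => p.2.1)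
      ((ContinuousLinearMap.fst ℝ E E).comp (ContinuousLinearMap.snd ℝ E (E × E))) x0 :=
    hasStrictFDerivAt_fst.comp x0 hasStrictFDerivAt_snd
  have dQ : HasStrictFDerivAt (fun p : E × E × E => p.2.2)
      ((ContinuousLinearMap.snd ℝ E E).comp (ContinuousLinearMap.snd ℝ E (E × E))) x0 :=
    hasStrictFDerivAt_snd.comp x0 hasStrictFDerivAt_snd
  have dT : ∀ (s : E →L[ℝ] E) {f : E × E × E → E} {f' : E × E × E →L[ℝ] E},
      HasStrictFDerivAt f f' x0 → HasStrictFDerivAt (fun p => s (f p)) (s.comp f') x0 :=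
    fun s f f' hf => s.hasStrictFDerivAt.comp x0 hf
  have dπ := dT π dQ
  have dH := H.hasStrictFDerivAt_of_bilinear dS dπ
  have F1 := (dT up dH).const_add 1
  have F2 := (dT lo dπ).const_add 1
  have F3 := dT π dh
  have F4 := (dT di dπ).const_add 1
  have F5 := (dT up dπ).const_add 1
  have F6 := (dT lo dH).const_add 1
  have F := (((F1.mul' F2).mul' F3).sub ((F4.mul' F5).mul' F6)).add (dQ.sub dπ)
  have G := dS.prodMk (dh.prodMk F)
  have hz : closF π lo up di (fun a b => H a b) x0 = 0 := by
    simp [closF, x0, hπ1]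
  have h4 := G.map_nhds_eq_of_surj ?_
  · have h5 : Filter.map (fun p : E × E × E => (p.1, p.2.1, closF π lo up di (fun a b => H a b) p))
        (𝓝 x0) = 𝓝 (x0.1, x0.2.1, closF π lo up di (fun a b => H a b) x0) := h4
    rw [hz] at h5
    exact h5
  · rw [LinearMap.range_eq_top]
    rintro ⟨s, h, e⟩
    obtain ⟨q, hq⟩ := hs (e - π h)
    refine ⟨(s, h, q), ?_⟩
    refine Prod.ext rfl (Prod.ext rfl ?_)
    rw [eq_sub_iff_add_eq] at hq
    simp only [x0, hπ1]
    simp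
    rw [← hq]
    abel

end Normed

/-- The Hadamard product as a bilinear map. -/
def hadL (n : ℕ) : Matrix (Fin n) (Fin n) ℝ →ₗ[ℝ] Matrix (Fin n) (Fin n) ℝ →ₗ[ℝ]
    Matrix (Fin n) (Fin n) ℝ :=
  LinearMap.mk₂ ℝ (fun S Q => S ⊙ Q) (fun _ _ _ => Matrix.add_hadamard _ _ _)
    (fun _ _ _ => Matrix.smul_hadamard _ _ _)
    (fun _ _ _ => Matrix.hadamard_add _ _ _) (fun _ _ _ => Matrix.hadamard_smul _ _ _)

section NormedMatrices

attribute [local instance] Matrix.linftyOpNormedRing Matrix.linftyOpNormedAlgebra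

open Filter Topology in
lemma factor_norm {n : ℕ} {r : Fin n → Fin n → Prop} (hr : ∀ i, r i i) :
    Filter.map (fun Q : Matrix (Fin n) (Fin n) ℝ => maskL r Q * (1 + (Q - maskL r Q))) (𝓝 1)
      = 𝓝 1 :=
  factor_abs (LinearMap.toContinuousLinearMap (maskL r)) (maskL_one hr)

open Filter Topology in
lemma clos_norm {n : ℕ} {r : Fin n → Fin n → Prop} (hr : ∀ i, r i i) :
    Filter.map (fun p : Matrix (Fin n) (Fin n) ℝ × Matrix (Fin n) (Fin n) ℝ ×
        Matrix (Fin n) (Fin n) ℝ => (p.1, p.2.1,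
          closF (maskL r) (maskL fun i j => j < i) (maskL fun i j => i < j)
            (maskL fun i j => i = j) (fun S Q => S ⊙ Q) p)) (𝓝 (0, 1, 0))
      = 𝓝 (0, 1, 0) := by
  refine clos_abs (LinearMap.toContinuousLinearMap (maskL r))
    (LinearMap.toContinuousLinearMap (maskL _)) (LinearMap.toContinuousLinearMap (maskL _))
    (LinearMap.toContinuousLinearMap (maskL _)) (hadL n).toContinuousBilinearMap (maskL_one hr) ?_
  intro e
  classical
  -- the linear map acts on each entry as `±1`
  refine ⟨Matrix.of fun i j => if ¬ r i j then e i j else if j < i then e i j else - e i j, ?_⟩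
  ext i j
  simp only [LinearMap.coe_toContinuousLinearMap', Matrix.add_apply, Matrix.sub_apply]
  by_cases h : r i j
  · rcases lt_trichotomy i j with hij | hij | hij
    · simp [maskL, h, hij, hij.not_gt, hij.ne]
    · subst hij; simp [maskL, h]
    · simp [maskL, h, hij, hij.not_gt, hij.ne']
  · simp [maskL, h]

end NormedMatrices

open Filter Topology in
lemma factor_std {n : ℕ} {r : Fin n → Fin n → Prop} (hr : ∀ i, r i i) :
    Filter.map (fun Q : Matrix (Fin n) (Fin n) ℝ => maskL r Q * (1 + (Q - maskL r Q))) (𝓝 1)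
      = 𝓝 1 := factor_norm hr

open Filter Topology in
lemma clos_std {n : ℕ} {r : Fin n → Fin n → Prop} (hr : ∀ i, r i i) :
    Filter.map (fun p : Matrix (Fin n) (Fin n) ℝ × Matrix (Fin n) (Fin n) ℝ ×
        Matrix (Fin n) (Fin n) ℝ => (p.1, p.2.1,
          closF (maskL r) (maskL fun i j => j < i) (maskL fun i j => i < j)
            (maskL fun i j => i = j) (fun S Q => S ⊙ Q) p)) (𝓝 (0, 1, 0))
      = 𝓝 (0, 1, 0) := clos_norm hr

lemma continuous_maskL {n : ℕ} (r : Fin n → Fin n → Prop) :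
    Continuous (maskL r) := by
  refine continuous_matrix fun i j => ?_
  by_cases h : r i j
  · simp only [maskL_pos _ h]; fun_prop
  · simp only [maskL_neg _ h]; fun_prop

open Filter Topology in
/-- Near the identity, every matrix factors as `b * (1 + w)` with `b` supported on `r` and `w`
supported off `r`. -/
lemma factor_nhds {n : ℕ} {r : Fin n → Fin n → Prop} (hr : ∀ i, r i i)
    {V : Set (Matrix (Fin n) (Fin n) ℝ)} (hV : V ∈ 𝓝 1) :
    ∀ᶠ g in 𝓝 (1 : Matrix (Fin n) (Fin n) ℝ), ∃ b w : Matrix (Fin n) (Fin n) ℝ,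
      b ∈ V ∧ (∀ i j, ¬ r i j → b i j = 0) ∧ (∀ i j, r i j → w i j = 0) ∧ g = b * (1 + w) := by
  have hc : Tendsto (maskL r) (𝓝 1) (𝓝 (1 : Matrix (Fin n) (Fin n) ℝ)) := by
    have := (continuous_maskL r).tendsto (1 : Matrix (Fin n) (Fin n) ℝ)
    rwa [maskL_one hr] at this
  rw [← factor_std hr, eventually_map]
  filter_upwards [hc hV] with Q hQ
  refine ⟨maskL r Q, Q - maskL r Q, hQ, fun i j h => maskL_neg _ h, fun i j h => ?_, rfl⟩
  rw [Matrix.sub_apply, maskL_pos _ h, sub_self]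

/-- Matrices supported on a transitive relation are closed under multiplication. -/
lemma supp_mul {n : ℕ} {r : Fin n → Fin n → Prop} (ht : ∀ i j k, r i j → r j k → r i k)
    {P Q : Matrix (Fin n) (Fin n) ℝ} (hP : ∀ i j, ¬ r i j → P i j = 0)
    (hQ : ∀ i j, ¬ r i j → Q i j = 0) (i j : Fin n) (h : ¬ r i j) : (P * Q) i j = 0 := by
  rw [Matrix.mul_apply]
  refine Finset.sum_eq_zero fun k _ => ?_
  by_cases h1 : r i k
  · rw [hQ k j fun h2 => h (ht _ _ _ h1 h2), mul_zero]
  · rw [hP i k h1, zero_mul]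

lemma supp_one_add {n : ℕ} {r : Fin n → Fin n → Prop} (hr : ∀ i, r i i)
    {P : Matrix (Fin n) (Fin n) ℝ} (hP : ∀ i j, ¬ r i j → P i j = 0) (i j : Fin n)
    (h : ¬ r i j) : (1 + P) i j = 0 := by
  rw [Matrix.add_apply, hP i j h, Matrix.one_apply_ne, add_zero]
  rintro rfl; exact h (hr i)

open Filter Topology in
/-- Uniform diagonalisation: if `h` is close to `1` and supported on the preorder `r`, and
`D = diag(ε ^ i)` has widely separated entries, then `h * D` is conjugate to a diagonal matrix
`diag(d) * D`, with all `d i` between `1 / 2` and `2`, by a matrix `p` close to `1` and supported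
on `r`. The neighbourhood of `1` does not depend on `ε`. -/
lemma diagonalise_nhds {n : ℕ} {r : Fin n → Fin n → Prop} (hr : ∀ i, r i i)
    (ht : ∀ i j k, r i j → r j k → r i k)
    {V : Set (Matrix (Fin n) (Fin n) ℝ)} (hV : V ∈ 𝓝 1) :
    ∃ ε₀ > 0, ∀ᶠ h in 𝓝 (1 : Matrix (Fin n) (Fin n) ℝ), ∀ ε : ℝ, 0 < ε → ε < ε₀ →
      (∀ i j, ¬ r i j → h i j = 0) →
      ∃ (p : Matrix (Fin n) (Fin n) ℝ) (d : Fin n → ℝ), p ∈ V ∧ (∀ i j, ¬ r i j → p i j = 0) ∧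
        (∀ i, 1 / 2 < d i ∧ d i < 2) ∧
        p * h * diagonal (fun i : Fin n => ε ^ (i : ℕ)) =
          diagonal d * diagonal (fun i : Fin n => ε ^ (i : ℕ)) * p := by
  let E := Matrix (Fin n) (Fin n) ℝ
  let lo : E →ₗ[ℝ] E := maskL fun i j => j < i
  let up : E →ₗ[ℝ] E := maskL fun i j => i < j
  let di : E →ₗ[ℝ] E := maskL fun i j => i = j
  let P : E × E × E → E := fun x => (1 + up (x.1 ⊙ maskL r x.2.2)) * (1 + lo (maskL r x.2.2))
  have hm := fun s : Fin n → Fin n → Prop => continuous_maskL s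
  have hPc : Continuous P := by
    have h1 : Continuous fun x : E × E × E => x.1 ⊙ maskL r x.2.2 := by
      refine continuous_matrix fun i j => ?_
      have h3 : Continuous fun x : E × E × E => maskL r x.2.2 := (hm r).comp (by fun_prop)
      exact Continuous.mul (by fun_prop) (h3.matrix_elem i j)
    exact (continuous_const.add ((hm _).comp h1)).mul
      (continuous_const.add ((hm _).comp ((hm r).comp (by fun_prop))))
  have hP1 : P (0, 1, 0) = 1 := by simp [P]
  have e1 : ∀ᶠ x in 𝓝 ((0, 1, 0) : E × E × E), P x ∈ V := by
    have := hPc.tendsto (0, 1, 0)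
    rw [hP1] at this
    exact this hV
  have e2 : ∀ᶠ x in 𝓝 ((0, 1, 0) : E × E × E), ∀ i, 1 / 2 < 1 + x.2.2 i i ∧ 1 + x.2.2 i i < 2 := by
    rw [eventually_all]
    intro i
    have hc : Continuous fun x : E × E × E => 1 + x.2.2 i i := by fun_prop
    refine hc.continuousAt.eventually (Ioo_mem_nhds ?_ ?_)
    · change (1 / 2 : ℝ) < 1 + 0; norm_num
    · change (1 + 0 : ℝ) < 2; norm_num
  have e3 := e1.and e2
  have e4 : ∀ᶠ y in 𝓝 ((0, 1, 0) : E × E × E), ∃ x : E × E × E,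
      (P x ∈ V ∧ ∀ i, 1 / 2 < 1 + x.2.2 i i ∧ 1 + x.2.2 i i < 2) ∧
      (x.1, x.2.1, closF (maskL r) lo up di (fun S Q => S ⊙ Q) x) = y := by
    rw [← clos_std hr, eventually_map]
    filter_upwards [e3] with x hx
    exact ⟨x, hx, rfl⟩
  rw [nhds_prod_eq, nhds_prod_eq] at e4
  obtain ⟨pS, hS, p2, h2, hh⟩ := eventually_prod_iff.mp e4
  obtain ⟨ph, h1, p0, h0, hh2⟩ := eventually_prod_iff.mp h2
  -- the contraction factors tend to `0` with `ε`
  let S : ℝ → E := fun ε => Matrix.of fun i j => if i = j then 0 else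
    ε ^ ((i : ℕ) - (j : ℕ) + ((j : ℕ) - (i : ℕ)))
  have hSc : Continuous S := by
    refine continuous_matrix fun i j => ?_
    by_cases hij : i = j
    · simp only [S, Matrix.of_apply, hij, if_true]; fun_prop
    · simp only [S, Matrix.of_apply, hij, if_false]; fun_prop
  have hS0 : S 0 = 0 := by
    ext i j
    by_cases hij : i = j
    · simp only [S, Matrix.of_apply, hij, if_true]; rfl
    · have : (i : ℕ) ≠ j := fun h => hij (Fin.ext h)
      simp only [S, Matrix.of_apply, hij, if_false]
      exact zero_pow (by omega)
  have hSt : ∀ᶠ ε in 𝓝 (0 : ℝ), pS (S ε) := by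
    have := hSc.tendsto 0
    rw [hS0] at this
    exact this.eventually hS
  obtain ⟨ε₀, hε₀, hball⟩ := Metric.eventually_nhds_iff.mp hSt
  refine ⟨ε₀, hε₀, ?_⟩
  filter_upwards [h1] with h hph ε hε hε' hsupp
  obtain ⟨⟨S', h', Q⟩, ⟨hx1, hx2⟩, hx3⟩ :=
    hh (hball (y := ε) (by rw [Real.dist_eq]; simpa [abs_of_pos hε] using hε')) (hh2 hph h0.self_of_nhds)
  simp only [Prod.mk.injEq] at hx3
  obtain ⟨rfl, rfl, hF⟩ := hx3
  have hph' : maskL r h' = h' := by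
    ext i j
    by_cases hij : r i j
    · rw [maskL_pos _ hij]
    · rw [maskL_neg _ hij, hsupp i j hij]
  have hmask : ∀ (s : Fin n → Fin n → Prop) (M : E), (∀ i j, ¬ r i j → M i j = 0) →
      ∀ i j, ¬ r i j → maskL s M i j = 0 := by
    intro s M hM i j hij
    by_cases hs : s i j
    · rw [maskL_pos _ hs, hM i j hij]
    · rw [maskL_neg _ hs]
  have hQr : ∀ i j, ¬ r i j → maskL r Q i j = 0 := fun i j hij => maskL_neg _ hij
  have hSQr : ∀ i j, ¬ r i j → (S ε ⊙ maskL r Q) i j = 0 := fun i j hij => by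
    rw [Matrix.hadamard_apply, hQr i j hij, mul_zero]
  have k1 := supp_one_add hr (hmask (fun i j => i < j) _ hSQr)
  have k2 := supp_one_add hr (hmask (fun i j => j < i) _ hQr)
  have k3 := supp_one_add hr (hmask (fun i j => i = j) _ hQr)
  have k4 := supp_one_add hr (hmask (fun i j => i < j) _ hQr)
  have k5 := supp_one_add hr (hmask (fun i j => j < i) _ hSQr)
  have kL := supp_mul ht (supp_mul ht k1 k2) hsupp
  have kR := supp_mul ht (supp_mul ht k3 k4) k5
  simp only [closF, hph'] at hF
  -- off `r` the equation says that `Q` vanishes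
  have hQ : maskL r Q = Q := by
    ext i j
    by_cases hij : r i j
    · rw [maskL_pos _ hij]
    · have this : _ = (0 : ℝ) := congrFun (congrFun hF i) j
      rw [Matrix.add_apply, Matrix.sub_apply, Matrix.sub_apply] at this
      have a1 := kL i j hij
      have a2 := kR i j hij
      simp only [lo, up, di] at this
      rw [a1, a2, hQr i j hij] at this
      rw [hQr i j hij]
      linarith
  refine ⟨P (S ε, h', Q), fun i => 1 + Q i i, hx1, supp_mul ht k1 k2, hx2, ?_⟩
  rw [hQ, sub_self, add_zero, sub_eq_zero] at hF
  set D : E := diagonal fun i : Fin n => ε ^ (i : ℕ) with hD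
  have c1 : (1 + lo (S ε ⊙ Q)) * D = D * (1 + lo Q) := by
    rw [add_mul, mul_add, one_mul, mul_one]
    congr 1
    ext i j
    rw [hD, Matrix.mul_diagonal, Matrix.diagonal_mul]
    by_cases hij : j < i
    · simp only [lo]
      rw [maskL_pos (r := fun i j => j < i) _ hij, maskL_pos (r := fun i j => j < i) _ hij, Matrix.hadamard_apply]
      have : (j : ℕ) < i := hij
      simp only [S, Matrix.of_apply, hij.ne', if_false]
      have e : (i : ℕ) = ((i : ℕ) - j + (j - i)) + j := by omega
      have : ε ^ (i : ℕ) = ε ^ ((i : ℕ) - j + (j - i)) * ε ^ (j : ℕ) := by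
        rw [← pow_add, ← e]
      rw [this]
      ring
    · simp only [lo]
      rw [maskL_neg (r := fun i j => j < i) _ hij, maskL_neg (r := fun i j => j < i) _ hij]; ring
  have c2 : (1 + up Q) * D = D * (1 + up (S ε ⊙ Q)) := by
    rw [add_mul, mul_add, one_mul, mul_one]
    congr 1
    ext i j
    rw [hD, Matrix.mul_diagonal, Matrix.diagonal_mul]
    by_cases hij : i < j
    · simp only [up]
      rw [maskL_pos (r := fun i j => i < j) _ hij, maskL_pos (r := fun i j => i < j) _ hij, Matrix.hadamard_apply]
      have : (i : ℕ) < j := hij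
      simp only [S, Matrix.of_apply, hij.ne, if_false]
      have e : (j : ℕ) = ((i : ℕ) - j + (j - i)) + i := by omega
      have : ε ^ (j : ℕ) = ε ^ ((i : ℕ) - j + (j - i)) * ε ^ (i : ℕ) := by
        rw [← pow_add, ← e]
      rw [this]
      ring
    · simp only [up]
      rw [maskL_neg (r := fun i j => i < j) _ hij, maskL_neg (r := fun i j => i < j) _ hij]; ring
  have c3 : diagonal (fun i => 1 + Q i i) = 1 + di Q := by
    ext i j
    by_cases hij : i = j
    · subst hij
      rw [Matrix.diagonal_apply_eq]
      change _ = (1 : Matrix (Fin n) (Fin n) ℝ) i i + maskL (fun i j => i = j) Q i i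
      rw [Matrix.one_apply_eq, maskL_pos (r := fun i j => i = j) _ rfl]
    · rw [Matrix.diagonal_apply_ne _ hij]
      change _ = (1 : Matrix (Fin n) (Fin n) ℝ) i j + maskL (fun i j => i = j) Q i j
      rw [Matrix.one_apply_ne hij, maskL_neg (r := fun i j => i = j) _ hij, add_zero]
  simp only [P]
  rw [hQ, hF, c3, mul_assoc _ _ D, c1, mul_assoc (1 + di Q), ← mul_assoc (1 + up Q), c2]
  simp only [mul_assoc]

/-! ### Return sets and minimal sets for a continuous action -/

section Action

variable {G X : Type*} [Group G] [MulAction G X]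

/-- The set of group elements that move some point of `Y` to a point of `Y`. -/
def retSet (G : Type*) {X : Type*} [Group G] [MulAction G X] (Y : Set X) : Set G :=
  {g | ∃ y ∈ Y, g • y ∈ Y}

lemma retSet_inv {Y : Set X} {g : G} (h : g ∈ retSet G Y) : g⁻¹ ∈ retSet G Y := by
  obtain ⟨y, hy, hgy⟩ := h
  exact ⟨g • y, hgy, by simpa using hy⟩

lemma smul_mem_of_stab {Y : Set X} {l : G} (hl : l ∈ MulAction.stabilizer G Y) {y : X}
    (hy : y ∈ Y) : l • y ∈ Y := by
  have : l • Y = Y := hl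
  rw [← this]
  exact Set.smul_mem_smul_set hy

lemma retSet_mul_left {Y : Set X} {g l : G} (hl : l ∈ MulAction.stabilizer G Y)
    (h : g ∈ retSet G Y) : l * g ∈ retSet G Y := by
  obtain ⟨y, hy, hgy⟩ := h
  exact ⟨y, hy, by rw [mul_smul]; exact smul_mem_of_stab hl hgy⟩

lemma retSet_mul_right {Y : Set X} {g l : G} (hl : l ∈ MulAction.stabilizer G Y)
    (h : g ∈ retSet G Y) : g * l ∈ retSet G Y := by
  obtain ⟨y, hy, hgy⟩ := h
  exact ⟨l⁻¹ • y, smul_mem_of_stab (inv_mem hl) hy, by simpa [mul_smul] using hgy⟩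

lemma isClosed_retSet [TopologicalSpace G] [TopologicalSpace X] [ContinuousSMul G X] {Y : Set X} (hc : IsCompact Y) (hY : IsClosed Y) :
    IsClosed (retSet G Y) := by
  have : CompactSpace Y := isCompact_iff_compactSpace.mp hc
  have h1 : IsClosed {p : G × Y | p.1 • (p.2 : X) ∈ Y} :=
    hY.preimage (by fun_prop : Continuous fun p : G × Y => p.1 • (p.2 : X))
  have h2 := isClosedMap_fst_of_compactSpace (X := G) (Y := Y) _ h1
  convert h2 using 1
  ext g
  constructor
  · rintro ⟨y, hy, hgy⟩
    exact ⟨(g, ⟨y, hy⟩), hgy, rfl⟩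
  · rintro ⟨⟨g', y⟩, hgy, rfl⟩
    exact ⟨y, y.2, hgy⟩

variable [TopologicalSpace X]

lemma IsMinimalOn.smul_mem {S : Set G} {Z : Set X} (h : IsMinimalOn S Z) {g : G} (hg : g ∈ S)
    {z : X} (hz : z ∈ Z) : g • z ∈ Z := by
  have := h.2.1 g hg
  rw [← this]
  exact ⟨z, hz, rfl⟩

/-- Two closed minimal sets with a common point coincide. -/
lemma IsMinimalOn.eq_of_mem {S : Set G} {Z Z' : Set X} (h : IsMinimalOn S Z)
    (h' : IsMinimalOn S Z') (hc : IsClosed Z) (hc' : IsClosed Z') {x : X} (hx : x ∈ Z)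
    (hx' : x ∈ Z') : Z = Z' := by
  refine Set.Subset.antisymm ((h.2.2 x hx).trans (closure_minimal ?_ hc'))
    ((h'.2.2 x hx').trans (closure_minimal ?_ hc))
  · rintro _ ⟨g, hg, rfl⟩; exact h'.smul_mem hg hx'
  · rintro _ ⟨g, hg, rfl⟩; exact h.smul_mem hg hx

/-- Translates of a minimal set by elements commuting with the acting set are minimal. -/
lemma IsMinimalOn.smul [ContinuousConstSMul G X] {S : Set G} {Z : Set X} (h : IsMinimalOn S Z)
    {g : G} (hg : ∀ s ∈ S, g * s = s * g) : IsMinimalOn S (g • Z) := by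
  refine ⟨h.1.smul_set, fun s hs => ?_, ?_⟩
  · change s • g • Z = g • Z
    have h1 : s • Z = Z := h.2.1 s hs
    rw [smul_smul, ← hg s hs, mul_smul, h1]
  · rintro _ ⟨z, hz, rfl⟩
    refine (Set.smul_set_mono (h.2.2 z hz)).trans ?_
    rw [← closure_smul]
    refine closure_mono ?_
    rintro _ ⟨_, ⟨s, hs, rfl⟩, rfl⟩
    exact ⟨s, hs, by simp only [smul_smul, hg s hs]⟩

variable [TopologicalSpace G] [ContinuousSMul G X] [T2Space X]

/-- A compact set that is minimal for `S · {b t}` and swept out by the translates `b t • Z` of a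
closed `S`-minimal set `Z` is already swept out by a bounded set of `t` (by Baire's theorem), so
that some `b r` with `r > 0` preserves `Z`. -/
lemma exists_period {A S : Subgroup G} {Y Z : Set X} {b : ℝ → G} (hbc : Continuous b)
    (hb : ∀ s t, b (s + t) = b s * b t) (hbA : ∀ t, b t ∈ A) (hbS : ∀ t, ∀ s ∈ S, b t * s = s * b t)
    (hA : ∀ a ∈ A, ∃ s ∈ S, ∃ t, a = s * b t) (hYc : IsCompact Y)
    (hY : IsMinimalOn (A : Set G) Y) (hZY : Z ⊆ Y) (hZc : IsCompact Z)
    (hZ : IsMinimalOn (S : Set G) Z) (hsw : ∀ y ∈ Y, ∃ t, ∃ z ∈ Z, y = b t • z) :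
    ∃ r > 0, b r • Z = Z := by
  have hb0 : b 0 = 1 := by simpa using hb 0 0
  let C : ℕ → Set X := fun k => (fun p : ℝ × X => b p.1 • p.2) '' (Set.Icc (-(k : ℝ)) k ×ˢ Z)
  have hC : ∀ k, IsCompact (C k) := fun k =>
    (isCompact_Icc.prod hZc).image (by fun_prop : Continuous fun p : ℝ × X => b p.1 • p.2)
  have : CompactSpace Y := isCompact_iff_compactSpace.mp hYc
  have : Nonempty Y := hY.1.to_subtype
  obtain ⟨k, hk⟩ := nonempty_interior_of_iUnion_of_closed
    (f := fun k => (Subtype.val ⁻¹' C k : Set Y))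
    (fun k => (hC k).isClosed.preimage continuous_subtype_val) (by
      refine Set.eq_univ_of_forall fun y => ?_
      obtain ⟨t, z, hz, e⟩ := hsw y y.2
      obtain ⟨k, hk⟩ := exists_nat_ge |t|
      exact Set.mem_iUnion.mpr ⟨k, (t, z), ⟨abs_le.mp hk, hz⟩, e.symm⟩)
  obtain ⟨O, hO, hOe⟩ := isOpen_induced_iff.mp (isOpen_interior (s := (Subtype.val ⁻¹' C k : Set Y)))
  obtain ⟨y0, hy0⟩ := hk
  have hOC : ∀ y ∈ Y, y ∈ O → y ∈ C k := fun y hy hyO => by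
    have : (⟨y, hy⟩ : Y) ∈ interior (Subtype.val ⁻¹' C k : Set Y) := by rw [← hOe]; exact hyO
    exact interior_subset (s := (Subtype.val ⁻¹' C k : Set Y)) this
  have hy0O : (y0 : X) ∈ O := by
    have : y0 ∈ Subtype.val ⁻¹' O := by rw [hOe]; exact hy0
    exact this
  -- every point of `Y` is moved into `O` by `A`
  have hcov : Y ⊆ ⋃ a : A, (fun x : X => (a : G) • x) ⁻¹' O := by
    intro y hy
    obtain ⟨x, hxO, ⟨a, ha, rfl⟩⟩ := mem_closure_iff.mp (hY.2.2 y hy y0.2) O hO hy0O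
    exact Set.mem_iUnion.mpr ⟨⟨a, ha⟩, hxO⟩
  obtain ⟨F, hF⟩ := hYc.elim_finite_subcover _
    (fun a : A => hO.preimage (continuous_const_smul (a : G))) hcov
  choose s hs t hst using hA
  have hkey : ∀ c ∈ S, ∀ t v, (c * b t)⁻¹ * b v = b (-t + v) * c⁻¹ := by
    intro c hc t v
    have h3 : b (-t) = (b t)⁻¹ := eq_inv_of_mul_eq_one_left (by rw [← hb, neg_add_cancel, hb0])
    rw [_root_.mul_inv_rev, ← h3, mul_assoc, ← hbS v _ (inv_mem hc), ← mul_assoc, ← hb]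
  let T : ℝ := k + ∑ a ∈ F, |t a a.2|
  have hT : ∀ y ∈ Y, ∃ v, |v| ≤ T ∧ ∃ z ∈ Z, y = b v • z := by
    intro y hy
    obtain ⟨a, haF, ha⟩ := Set.mem_iUnion₂.mp (hF hy)
    obtain ⟨⟨v, z⟩, ⟨hv, hz⟩, e⟩ := hOC _ (hY.smul_mem a.2 hy) ha
    have e' : b v • z = (a : G) • y := e
    refine ⟨-(t a a.2) + v, ?_, (s a a.2)⁻¹ • z, hZ.smul_mem (inv_mem (hs a a.2)) hz, ?_⟩
    · have h1 : |t a a.2| ≤ ∑ a ∈ F, |t a a.2| :=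
        Finset.single_le_sum (f := fun a : A => |t a a.2|) (fun _ _ => abs_nonneg _) haF
      have h2 : |v| ≤ k := abs_le.mpr hv
      calc |-(t a a.2) + v| ≤ |-(t a a.2)| + |v| := abs_add_le _ _
        _ ≤ T := by rw [abs_neg]; simp only [T]; linarith
    · have h4 : y = (a : G)⁻¹ • b v • z := by rw [e', inv_smul_smul]
      have h5 : (a : G) = s a a.2 * b (t a a.2) := hst a a.2
      rw [h4, smul_smul, smul_smul, ← hkey _ (hs a a.2), ← h5]
  obtain ⟨z, hz⟩ := hZ.1
  obtain ⟨v, hv, z', hz', e⟩ := hT (b (2 * T + 1) • z) (hY.smul_mem (hbA _) (hZY hz))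
  have hT0 : |v| ≤ T := hv
  have hr : 0 < -v + (2 * T + 1) := by
    have := abs_nonneg v
    have := le_abs_self v
    linarith
  refine ⟨_, hr, ?_⟩
  have hmin : IsMinimalOn (S : Set G) (b (-v + (2 * T + 1)) • Z) := hZ.smul fun s hs => hbS _ s hs
  refine hmin.eq_of_mem hZ (hZc.smul _).isClosed hZc.isClosed (x := z') ?_ hz'
  refine ⟨z, hz, ?_⟩
  change b (-v + (2 * T + 1)) • z = z'
  rw [hb, mul_smul, e, ← mul_smul, ← hb, neg_add_cancel, hb0, one_smul]

/-- If a one-parameter group `u`, expanded by conjugation by `b`, has a nontrivial element in the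
return set of `Y`, then all of it preserves `Y`. -/
lemma unipotent_invariance {A S : Subgroup G} {Y Z : Set X} {b u : ℝ → G} (hbc : Continuous b)
    (hb : ∀ s t, b (s + t) = b s * b t) (hbA : ∀ t, b t ∈ A) (hbS : ∀ t, ∀ s ∈ S, b t * s = s * b t)
    (hA : ∀ a ∈ A, ∃ s ∈ S, ∃ t, a = s * b t) (hYc : IsCompact Y)
    (hY : IsMinimalOn (A : Set G) Y) (hZY : Z ⊆ Y) (hZc : IsCompact Z)
    (hZ : IsMinimalOn (S : Set G) Z) (hAZ : (A : Set G) • Z = Y)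
    (huc : Continuous u) (hu : ∀ s t, u (s + t) = u s * u t)
    (huS : ∀ t, ∀ s ∈ S, u t * s = s * u t)
    (hbu : ∀ r s, b r * u s = u (Real.exp (2 * r) * s) * b r)
    {s : ℝ} (hs : s ≠ 0) (hret : u s ∈ retSet G Y) (x : ℝ) : ∀ y ∈ Y, u x • y ∈ Y := by
  have hb0 : b 0 = 1 := by simpa using hb 0 0
  have hu0 : u 0 = 1 := by simpa using hu 0 0
  have hbinv : ∀ t, b (-t) = (b t)⁻¹ := fun t =>
    eq_inv_of_mul_eq_one_left (by rw [← hb, neg_add_cancel, hb0])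
  have huinv : ∀ t, u (-t) = (u t)⁻¹ := fun t =>
    eq_inv_of_mul_eq_one_left (by rw [← hu, neg_add_cancel, hu0])
  have hsw : ∀ y ∈ Y, ∃ t, ∃ z ∈ Z, y = b t • z := by
    intro y hy
    rw [← hAZ] at hy
    obtain ⟨a, ha, z, hz, rfl⟩ := Set.mem_smul.mp hy
    obtain ⟨c, hc, t, rfl⟩ := hA a ha
    exact ⟨t, c • z, hZ.smul_mem hc hz, by rw [smul_smul, hbS t c hc]⟩
  obtain ⟨r, hr, hrZ⟩ := exists_period hbc hb hbA hbS hA hYc hY hZY hZc hZ hsw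
  obtain ⟨y, hy, huy⟩ := hret
  obtain ⟨t, z, hz, rfl⟩ := hsw y hy
  obtain ⟨t', z', hz', e⟩ := hsw _ huy
  have hmt : ∀ t, IsMinimalOn (S : Set G) (b t • Z) := fun t => hZ.smul (hbS t)
  -- `u s` maps the piece `b t • Z` to the piece `b t' • Z`
  have h1 : u s • b t • Z = b t' • Z :=
    ((hmt t).smul (huS s)).eq_of_mem (hmt t') ((hZc.smul _).smul _).isClosed
      (hZc.smul _).isClosed (x := u s • b t • z) ⟨b t • z, ⟨z, hz, rfl⟩, rfl⟩ ⟨z', hz', e.symm⟩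
  set W := b t • Z with hW
  let H := MulAction.stabilizer G W
  have hbr : b r ∈ H := by
    change b r • b t • Z = b t • Z
    rw [smul_smul, ← hb, add_comm, hb, mul_smul, hrZ]
  have hw : b (t - t') * u s ∈ H := by
    change (b (t - t') * u s) • W = W
    rw [mul_smul, h1, smul_smul, ← hb, sub_add_cancel]
  have hs1 : u ((Real.exp (2 * r) - 1) * s) ∈ H := by
    have h2 := H.mul_mem (H.inv_mem hw) (H.mul_mem (H.mul_mem hbr hw) (H.inv_mem hbr))
    convert h2 using 1
    have h3 : b r * b (t - t') = b (t - t') * b r := by rw [← hb, add_comm, hb]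
    rw [← mul_assoc (b r), h3, mul_assoc (b (t - t')) (b r), hbu r s, sub_mul, one_mul, sub_eq_neg_add,
      hu, huinv]
    group
  let D : AddSubgroup ℝ :=
    { carrier := {x | u x ∈ H}
      zero_mem' := by change u 0 ∈ H; rw [hu0]; exact H.one_mem
      add_mem' := fun {p q} hp hq => by change u (p + q) ∈ H; rw [hu]; exact H.mul_mem hp hq
      neg_mem' := fun {p} hp => by change u (-p) ∈ H; rw [huinv]; exact H.inv_mem hp }
  -- contraction by `b r` produces arbitrarily small elements of `D`
  have hcon : ∀ k : ℕ, Real.exp (-(2 * r)) ^ k * ((Real.exp (2 * r) - 1) * s) ∈ D := by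
    intro k
    induction k with
    | zero => change u _ ∈ H; simpa using hs1
    | succ k ih =>
      change u _ ∈ H
      have h2 := H.mul_mem (H.mul_mem (H.inv_mem hbr) ih) hbr
      convert h2 using 1
      rw [← hbinv, hbu, mul_assoc, ← hb, neg_add_cancel, hb0, mul_one, pow_succ']
      congr 1
      rw [mul_neg]
      ring
  have hne : (Real.exp (2 * r) - 1) * s ≠ 0 := by
    refine mul_ne_zero ?_ hs
    have : 1 < Real.exp (2 * r) := Real.one_lt_exp_iff.mpr (by linarith)
    linarith
  have hdense : Dense (D : Set ℝ) := by
    refine D.dense_of_not_isolated_zero fun ε hε => ?_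
    have hlim : Filter.Tendsto (fun k : ℕ => Real.exp (-(2 * r)) ^ k *
        |(Real.exp (2 * r) - 1) * s|) Filter.atTop (nhds (0 * |(Real.exp (2 * r) - 1) * s|)) :=
      (tendsto_pow_atTop_nhds_zero_of_lt_one (Real.exp_pos _).le
        (Real.exp_lt_one_iff.mpr (by linarith))).mul_const _
    rw [zero_mul] at hlim
    obtain ⟨k, hk⟩ := (hlim.eventually (gt_mem_nhds hε)).exists
    set q := Real.exp (-(2 * r)) ^ k * ((Real.exp (2 * r) - 1) * s) with hq
    have hqabs : |q| < ε := by
      rw [hq, abs_mul, abs_of_pos (pow_pos (Real.exp_pos _) k)]; exact hk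
    have hq0 : q ≠ 0 := mul_ne_zero (pow_ne_zero _ (Real.exp_pos _).ne') hne
    rcases lt_or_gt_of_ne hq0 with h | h
    · exact ⟨-q, D.neg_mem (hcon k), by linarith, by rw [← abs_of_neg h]; exact hqabs⟩
    · exact ⟨q, hcon k, h, by rw [← abs_of_pos h]; exact hqabs⟩
  have hall : ∀ x, ∀ w ∈ W, u x • w ∈ W := by
    intro x w hw
    have hcl : IsClosed {x : ℝ | u x • w ∈ W} :=
      (hZc.smul (b t)).isClosed.preimage (by fun_prop : Continuous fun x => u x • w)
    have hsub : (D : Set ℝ) ⊆ {x : ℝ | u x • w ∈ W} := fun x hx => smul_mem_of_stab hx hw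
    exact hcl.closure_subset_iff.mpr hsub (hdense x)
  intro y hy
  obtain ⟨v, z₂, hz₂, rfl⟩ := hsw y hy
  have h2 : u x * b v = b (v - t) * u (Real.exp (2 * (-(v - t))) * x) * b t := by
    rw [hbu, mul_assoc _ (b (v - t)), ← hb, sub_add_cancel, ← mul_assoc, ← Real.exp_add]
    congr 2
    rw [mul_neg, add_neg_cancel, Real.exp_zero, one_mul]
  rw [smul_smul, h2, mul_smul, mul_smul]
  obtain ⟨z₃, hz₃, e3⟩ := hall (Real.exp (2 * (-(v - t))) * x) (b t • z₂) ⟨z₂, hz₂, rfl⟩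
  have e3' : b t • z₃ = u (Real.exp (2 * (-(v - t))) * x) • b t • z₂ := e3
  rw [← e3', smul_smul, ← hb]
  exact hY.smul_mem (hbA _) (hZY hz₃)

end Action

/-! ### The group `SL_n(ℝ)` -/

instance (n : ℕ) : IsTopologicalGroup (SLR n) := Matrix.SpecialLinearGroup.topologicalGroup

instance (n : ℕ) : T2Space (SLR n) :=
  inferInstanceAs (T2Space {A : Matrix (Fin n) (Fin n) ℝ // A.det = 1})

lemma isInducing_val (n : ℕ) :
    Topology.IsInducing (fun g : SLR n => (g.1 : Matrix (Fin n) (Fin n) ℝ)) := ⟨rfl⟩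

lemma continuous_val (n : ℕ) : Continuous (fun g : SLR n => (g.1 : Matrix (Fin n) (Fin n) ℝ)) :=
  (isInducing_val n).continuous

lemma continuous_entry {n : ℕ} (i j : Fin n) : Continuous fun g : SLR n => g.1 i j :=
  (continuous_val n).matrix_elem i j

instance (n : ℕ) : FirstCountableTopology (Matrix (Fin n) (Fin n) ℝ) :=
  inferInstanceAs (FirstCountableTopology (Fin n → Fin n → ℝ))

instance (n : ℕ) : FirstCountableTopology (SLR n) :=
  (isInducing_val n).firstCountableTopology

open Filter Topology in
lemma tendsto_SLR {n : ℕ} {ι : Type*} {l : Filter ι} {f : ι → SLR n} {g : SLR n} :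
    Tendsto f l (𝓝 g) ↔ ∀ i j, Tendsto (fun k => (f k).1 i j) l (𝓝 (g.1 i j)) := by
  refine (isInducing_val n).tendsto_nhds_iff.trans ?_
  constructor
  · intro h i j
    exact ((continuous_id.matrix_elem i j).tendsto _).comp h
  · intro h
    exact tendsto_pi_nhds.mpr fun i => tendsto_pi_nhds.mpr fun j => h i j

lemma val_mul {n : ℕ} (g h : SLR n) : (g * h).1 = g.1 * h.1 := rfl

lemma val_one (n : ℕ) : (1 : SLR n).1 = 1 := rfl

/-- The positive diagonal element of `SL_n(ℝ)` with entries proportional to `exp (v i)`. -/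
noncomputable def dgm {n : ℕ} (v : Fin n → ℝ) : SLR n :=
  ⟨diagonal fun i => Real.exp (v i - (∑ k, v k) / n), by
    rw [det_diagonal, ← Real.exp_sum, Finset.sum_sub_distrib, Finset.sum_const, Finset.card_univ,
      Fintype.card_fin, nsmul_eq_mul]
    rcases Nat.eq_zero_or_pos n with rfl | h
    · simp
    · rw [mul_div_cancel₀ _ (by positivity), sub_self, Real.exp_zero]⟩

lemma dgm_val {n : ℕ} (v : Fin n → ℝ) :
    (dgm v).1 = diagonal fun i => Real.exp (v i - (∑ k, v k) / n) := rfl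

lemma dgm_add {n : ℕ} (v w : Fin n → ℝ) : dgm (v + w) = dgm v * dgm w := by
  apply Subtype.ext
  rw [val_mul, dgm_val, dgm_val, dgm_val, diagonal_mul_diagonal]
  congr 1
  ext i
  rw [← Real.exp_add]
  congr 1
  simp only [Pi.add_apply, Finset.sum_add_distrib]
  ring

lemma dgm_zero (n : ℕ) : dgm (0 : Fin n → ℝ) = 1 := by
  simpa using dgm_add (0 : Fin n → ℝ) 0

lemma dgm_neg {n : ℕ} (v : Fin n → ℝ) : dgm (-v) = (dgm v)⁻¹ :=
  eq_inv_of_mul_eq_one_left (by rw [← dgm_add, neg_add_cancel, dgm_zero])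

lemma continuous_dgm (n : ℕ) : Continuous (dgm : (Fin n → ℝ) → SLR n) := by
  refine (isInducing_val n).continuous_iff.mpr ?_
  change Continuous fun v : Fin n → ℝ => diagonal fun i => Real.exp (v i - (∑ k, v k) / n)
  fun_prop

lemma dgm_mem {n : ℕ} (v : Fin n → ℝ) : dgm v ∈ posDiag n :=
  ⟨fun i j h => by rw [dgm_val, diagonal_apply_ne _ h],
    fun i => by rw [dgm_val, diagonal_apply_eq]; exact Real.exp_pos _⟩

lemma posDiag_val {n : ℕ} {g : SLR n} (hg : g ∈ posDiag n) :
    g.1 = diagonal fun i => g.1 i i := by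
  ext i j
  by_cases h : i = j
  · subst h; rw [diagonal_apply_eq]
  · rw [diagonal_apply_ne _ h, hg.1 i j h]

lemma exists_dgm {n : ℕ} {g : SLR n} (hg : g ∈ posDiag n) : ∃ v, g = dgm v := by
  refine ⟨fun i => Real.log (g.1 i i), Subtype.ext ?_⟩
  have h1 : ∑ k, Real.log (g.1 k k) = 0 := by
    rw [← Real.log_prod (fun i _ => (hg.2 i).ne'), ← det_diagonal, ← posDiag_val hg, g.2,
      Real.log_one]
  rw [dgm_val, h1]
  conv_lhs => rw [posDiag_val hg]
  congr 1
  ext i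
  rw [zero_div, sub_zero, Real.exp_log (hg.2 i)]

/-- The group `A` of positive diagonal elements, as a subgroup. -/
def posDiagSub (n : ℕ) : Subgroup (SLR n) where
  carrier := posDiag n
  mul_mem' := by
    intro a b ha hb
    obtain ⟨v, rfl⟩ := exists_dgm ha
    obtain ⟨w, rfl⟩ := exists_dgm hb
    rw [← dgm_add]; exact dgm_mem _
  one_mem' := by rw [← dgm_zero]; exact dgm_mem _
  inv_mem' := by
    intro a ha
    obtain ⟨v, rfl⟩ := exists_dgm ha
    rw [← dgm_neg]; exact dgm_mem _

lemma dgm_mem_rootKer {n : ℕ} {v : Fin n → ℝ} {i j : Fin n} :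
    dgm v ∈ rootKer n i j ↔ v i = v j := by
  refine ⟨fun h => ?_, fun h => ⟨dgm_mem v, ?_⟩⟩
  · have := h.2
    rw [dgm_val, diagonal_apply_eq, diagonal_apply_eq, Real.exp_eq_exp] at this
    linarith
  · rw [dgm_val, diagonal_apply_eq, diagonal_apply_eq, h]

/-- The kernel `A_α` of a root, as a subgroup. -/
def rootKerSub (n : ℕ) (i j : Fin n) : Subgroup (SLR n) where
  carrier := rootKer n i j
  mul_mem' := by
    intro a b ha hb
    obtain ⟨v, rfl⟩ := exists_dgm ha.1
    obtain ⟨w, rfl⟩ := exists_dgm hb.1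
    rw [← dgm_add, dgm_mem_rootKer, Pi.add_apply, Pi.add_apply, dgm_mem_rootKer.mp ha,
      dgm_mem_rootKer.mp hb]
  one_mem' := by rw [← dgm_zero, dgm_mem_rootKer]; rfl
  inv_mem' := by
    intro a ha
    obtain ⟨v, rfl⟩ := exists_dgm ha.1
    rw [← dgm_neg, dgm_mem_rootKer, Pi.neg_apply, Pi.neg_apply, dgm_mem_rootKer.mp ha]

lemma dgm_comm {n : ℕ} (v w : Fin n → ℝ) : dgm v * dgm w = dgm w * dgm v := by
  rw [← dgm_add, add_comm, dgm_add]

lemma conj_apply {n : ℕ} (v : Fin n → ℝ) (g : SLR n) (i j : Fin n) :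
    (dgm v * g * (dgm v)⁻¹).1 i j = Real.exp (v i - v j) * g.1 i j := by
  rw [← dgm_neg, val_mul, val_mul, dgm_val, dgm_val, mul_diagonal, diagonal_mul, mul_right_comm,
    ← Real.exp_add]
  congr 2
  simp only [Pi.neg_apply, Finset.sum_neg_distrib]
  ring

lemma elemU_val {n : ℕ} {i j : Fin n} (hij : i ≠ j) (s : ℝ) :
    (elemU n hij s).1 = transvection i j s := rfl

lemma elemU_apply {n : ℕ} {i j : Fin n} (hij : i ≠ j) (s : ℝ) (k l : Fin n) :
    (elemU n hij s).1 k l = (1 : Matrix (Fin n) (Fin n) ℝ) k l + if i = k ∧ j = l then s else 0 := by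
  rw [elemU_val, transvection, Matrix.add_apply, single_apply]

lemma elemU_add {n : ℕ} {i j : Fin n} (hij : i ≠ j) (s t : ℝ) :
    elemU n hij (s + t) = elemU n hij s * elemU n hij t := by
  apply Subtype.ext
  rw [val_mul, elemU_val, elemU_val, elemU_val, transvection_mul_transvection_same _ _ hij]

lemma elemU_zero {n : ℕ} {i j : Fin n} (hij : i ≠ j) : elemU n hij 0 = 1 := by
  simpa using elemU_add hij 0 0

lemma elemU_neg {n : ℕ} {i j : Fin n} (hij : i ≠ j) (s : ℝ) :
    elemU n hij (-s) = (elemU n hij s)⁻¹ :=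
  eq_inv_of_mul_eq_one_left (by rw [← elemU_add, neg_add_cancel, elemU_zero])

lemma continuous_elemU {n : ℕ} {i j : Fin n} (hij : i ≠ j) : Continuous (elemU n hij) := by
  refine (isInducing_val n).continuous_iff.mpr ?_
  refine continuous_matrix fun k l => ?_
  change Continuous fun s => (elemU n hij s).1 k l
  simp only [elemU_apply]
  by_cases h : i = k ∧ j = l
  · simp only [h, and_self, if_true]; fun_prop
  · simp only [h, if_false]; fun_prop

lemma conj_elemU {n : ℕ} {i j : Fin n} (hij : i ≠ j) (v : Fin n → ℝ) (s : ℝ) :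
    dgm v * elemU n hij s = elemU n hij (Real.exp (v i - v j) * s) * dgm v := by
  rw [← mul_inv_eq_iff_eq_mul]
  apply Subtype.ext
  ext k l
  rw [conj_apply, elemU_apply, elemU_apply]
  by_cases h : i = k ∧ j = l
  · obtain ⟨rfl, rfl⟩ := h
    simp [hij]
  · simp only [if_neg h, add_zero]
    by_cases hkl : k = l
    · subst hkl; simp
    · rw [one_apply_ne hkl, mul_zero]

lemma elemU_commutator {n : ℕ} {i j k : Fin n} (hij : i ≠ j) (hjk : j ≠ k) (hik : i ≠ k) (s : ℝ) :
    elemU n hik s = elemU n hij s * elemU n hjk 1 * elemU n hij (-s) * elemU n hjk (-1) := by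
  have h : elemU n hik s * elemU n hjk 1 * elemU n hij s = elemU n hij s * elemU n hjk 1 := by
    apply Subtype.ext
    rw [val_mul, val_mul, val_mul]
    simp only [elemU_val, transvection]
    simp [add_mul, mul_add, hjk.symm, hik.symm]
    abel
  rw [elemU_neg, elemU_neg, eq_mul_inv_iff_mul_eq, eq_mul_inv_iff_mul_eq]
  exact h

/-- For every root `α`, a nontrivial element of `U_α` in the return set of `Y` forces the whole
group `U_α` to preserve `Y`. -/
lemma elemU_invariance {n : ℕ} {X : Type*} [TopologicalSpace X] [T2Space X] [MulAction (SLR n) X]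
    [ContinuousSMul (SLR n) X] {Y : Set X} (hYc : IsCompact Y) (hYmin : IsMinimalOn (posDiag n) Y)
    {i j : Fin n} (hij : i ≠ j)
    (h : ∃ Z ⊆ Y, IsCompact Z ∧ IsMinimalOn (rootKer n i j) Z ∧ posDiag n • Z = Y)
    {s : ℝ} (hs : s ≠ 0) (hret : elemU n hij s ∈ retSet (SLR n) Y) (x : ℝ) :
    ∀ y ∈ Y, elemU n hij x • y ∈ Y := by
  obtain ⟨Z, hZY, hZc, hZ, hAZ⟩ := h
  refine unipotent_invariance (A := posDiagSub n) (S := rootKerSub n i j) (Z := Z)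
    (b := fun t => dgm (Pi.single i (2 * t))) ?_ ?_ (fun t => dgm_mem _) ?_ ?_ hYc hYmin hZY hZc hZ
    hAZ (continuous_elemU hij) (elemU_add hij) ?_ ?_ hs hret x
  · exact (continuous_dgm n).comp ((continuous_single i).comp (by fun_prop))
  · intro s t
    rw [← dgm_add, ← Pi.single_add, mul_add]
  · intro t a ha
    obtain ⟨v, rfl⟩ := exists_dgm ha.1
    exact dgm_comm _ _
  · intro a ha
    obtain ⟨v, rfl⟩ := exists_dgm ha
    refine ⟨dgm (v + Pi.single i (v j - v i)), dgm_mem_rootKer.mpr ?_, (v i - v j) / 2, ?_⟩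
    · rw [Pi.add_apply, Pi.add_apply, Pi.single_eq_same, Pi.single_eq_of_ne hij.symm]; ring
    · rw [← dgm_add, add_assoc, ← Pi.single_add, mul_div_cancel₀ _ two_ne_zero, sub_add_sub_cancel,
        sub_self, Pi.single_zero, add_zero]
  · intro t a ha
    obtain ⟨v, rfl⟩ := exists_dgm ha.1
    rw [conj_elemU, dgm_mem_rootKer.mp ha, sub_self, Real.exp_zero, one_mul]
  · intro r s
    rw [conj_elemU, Pi.single_eq_same, Pi.single_eq_of_ne hij.symm, sub_zero]

/-! ### Elements near the identity supported on a preorder -/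

lemma rel_trans {n : ℕ} {L : Subgroup (SLR n)} (i j k : Fin n)
    (h1 : ∀ (hij : i ≠ j) (s : ℝ), elemU n hij s ∈ L)
    (h2 : ∀ (hjk : j ≠ k) (s : ℝ), elemU n hjk s ∈ L) (hik : i ≠ k) (s : ℝ) :
    elemU n hik s ∈ L := by
  by_cases hij : i = j
  · subst hij; exact h2 hik s
  by_cases hjk : j = k
  · subst hjk; exact h1 hik s
  rw [elemU_commutator hij hjk hik]
  exact L.mul_mem (L.mul_mem (L.mul_mem (h1 hij _) (h2 hjk _)) (h1 hij _)) (h2 hjk _)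

lemma elemU_mul_apply {n : ℕ} {i k : Fin n} (hik : i ≠ k) (c : ℝ) (g : SLR n) (p q : Fin n) :
    (elemU n hik c * g).1 p q = if p = i then g.1 i q + c * g.1 k q else g.1 p q := by
  rw [val_mul, elemU_val]
  by_cases h : p = i
  · subst h
    rw [if_pos rfl, transvection_mul_apply_same]
  · rw [if_neg h, transvection_mul_apply_of_ne _ _ _ _ h]

open Filter Topology in
/-- A subgroup containing `A` and the root groups of a preorder `r` contains all elements near the
identity that are supported on `r`. This is Gaussian elimination, one column after the other; the
columns outside `S` are already cleared. -/
lemma supported_mem_aux {n : ℕ} {L : Subgroup (SLR n)} (hA : posDiag n ⊆ L)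
    {r : Fin n → Fin n → Prop} (ht : ∀ i j k, r i j → r j k → r i k)
    (hrL : ∀ i j, r i j → ∀ (hij : i ≠ j) (s : ℝ), elemU n hij s ∈ L) (S : Finset (Fin n)) :
    ∀ᶠ g in 𝓝 (1 : SLR n), (∀ i j, ¬ r i j → g.1 i j = 0) →
      (∀ j ∉ S, ∀ i, i ≠ j → g.1 i j = 0) → g ∈ L := by
  induction S using Finset.induction_on with
  | empty =>
    have h1 : ∀ᶠ g in 𝓝 (1 : SLR n), ∀ i, 0 < g.1 i i := by
      rw [eventually_all]
      intro i
      refine (continuous_entry i i).continuousAt.eventually (lt_mem_nhds ?_)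
      change (0 : ℝ) < (1 : Matrix (Fin n) (Fin n) ℝ) i i
      rw [one_apply_eq]; exact one_pos
    filter_upwards [h1] with g hg _ hd
    exact hA ⟨fun i j hij => hd j (Finset.notMem_empty _) i hij, hg⟩
  | insert k S _ ih =>
    -- the entries of column `k` outside the rows `T` are already cleared
    have key : ∀ T : Finset (Fin n), ∀ᶠ g in 𝓝 (1 : SLR n), (∀ i j, ¬ r i j → g.1 i j = 0) →
        (∀ j ∉ insert k S, ∀ i, i ≠ j → g.1 i j = 0) → (∀ i ∉ T, i ≠ k → g.1 i k = 0) →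
        g ∈ L := by
      intro T
      induction T using Finset.induction_on with
      | empty =>
        filter_upwards [ih] with g hg hs hd hk
        refine hg hs fun j hj i hij => ?_
        by_cases hjk : j = k
        · subst hjk; exact hk i (Finset.notMem_empty _) hij
        · exact hd j (by simp [hjk, hj]) i hij
      | insert i T _ ihT =>
        by_cases hik : i = k
        · filter_upwards [ihT] with g hg hs hd hk
          refine hg hs hd fun i' hi' hne => hk i' ?_ hne
          rw [Finset.mem_insert, not_or]
          exact ⟨fun h => hne (h.trans hik), hi'⟩
        by_cases hrik : r i k
        swap
        · filter_upwards [ihT] with g hg hs hd hk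
          refine hg hs hd fun i' hi' hne => ?_
          by_cases h : i' = i
          · subst h; exact hs _ _ hrik
          · exact hk i' (by simp [h, hi']) hne
        have hkk : ∀ᶠ g in 𝓝 (1 : SLR n), 0 < g.1 k k := by
          refine (continuous_entry k k).continuousAt.eventually (lt_mem_nhds ?_)
          change (0 : ℝ) < (1 : Matrix (Fin n) (Fin n) ℝ) k k
          rw [one_apply_eq]; exact one_pos
        have hlim : Tendsto (fun g : SLR n => elemU n hik (-(g.1 i k / g.1 k k)) * g) (𝓝 1)
            (𝓝 1) := by
          have hc : ContinuousAt (fun g : SLR n => elemU n hik (-(g.1 i k / g.1 k k)) * g) 1 := by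
            refine ContinuousAt.mul ((continuous_elemU hik).continuousAt.comp ?_) continuousAt_id
            refine ((continuous_entry i k).continuousAt.div
              (continuous_entry k k).continuousAt ?_).neg
            rw [val_one, one_apply_eq]; exact one_ne_zero
          have h1 := hc.tendsto
          have h2 : elemU n hik (-((1 : SLR n).1 i k / (1 : SLR n).1 k k)) * 1 = 1 := by
            rw [val_one, one_apply_ne hik, zero_div, neg_zero, elemU_zero, mul_one]
          rwa [h2] at h1
        filter_upwards [hlim.eventually ihT, hkk] with g hg hgk hs hd hk
        have hmem := hg ?_ ?_ ?_
        · exact (L.mul_mem_cancel_left (hrL i k hrik hik _)).mp hmem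
        · intro p q hpq
          rw [elemU_mul_apply]
          split_ifs with hp
          · subst hp
            rw [hs p q hpq, hs k q fun h => hpq (ht _ _ _ hrik h), mul_zero, add_zero]
          · exact hs p q hpq
        · intro q hq p hpq
          have hkq : k ≠ q := fun h => hq (by simp [h])
          rw [elemU_mul_apply]
          split_ifs with hp
          · subst hp
            rw [hd q hq p hpq, hd q hq k hkq, mul_zero, add_zero]
          · exact hd q hq p hpq
        · intro p hp hpk
          rw [elemU_mul_apply]
          split_ifs with hpi
          · field_simp
            ring
          · exact hk p (by simp [hpi, hp]) hpk
    filter_upwards [key Finset.univ] with g hg hs hd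
    exact hg hs hd fun i hi => absurd (Finset.mem_univ i) hi

open Filter Topology in
lemma supported_mem {n : ℕ} {L : Subgroup (SLR n)} (hA : posDiag n ⊆ L)
    {r : Fin n → Fin n → Prop} (ht : ∀ i j k, r i j → r j k → r i k)
    (hrL : ∀ i j, r i j → ∀ (hij : i ≠ j) (s : ℝ), elemU n hij s ∈ L) :
    ∀ᶠ g in 𝓝 (1 : SLR n), (∀ i j, ¬ r i j → g.1 i j = 0) → g ∈ L := by
  filter_upwards [supported_mem_aux hA ht hrL Finset.univ] with g hg hs
  exact hg hs fun j hj => absurd (Finset.mem_univ j) hj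

/-! ### Blowing up: unipotent elements in closed conjugation-invariant sets -/

open Filter Topology in
/-- Contraction: an element that is unipotent and triangular for the ordering given by `v` can be
conjugated by `A` towards a single root group, namely that of its nonzero entry closest to the
diagonal. -/
lemma contract_to_root {n : ℕ} {R : Set (SLR n)} (hRc : IsClosed R)
    (hRA : ∀ v, ∀ g ∈ R, dgm v * g * (dgm v)⁻¹ ∈ R) {v : Fin n → ℝ} (hv : Function.Injective v)
    {M : SLR n} (hM : M ∈ R) (hd : ∀ i, M.1 i i = 1) (hup : ∀ i j, v i < v j → M.1 i j = 0)
    (hne : ∃ i j, v j < v i ∧ M.1 i j ≠ 0) :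
    ∃ (i j : Fin n) (hij : i ≠ j), M.1 i j ≠ 0 ∧ elemU n hij (M.1 i j) ∈ R := by
  classical
  obtain ⟨i', j', h', hn'⟩ := hne
  obtain ⟨⟨i, j⟩, hmem, hmin⟩ := Finset.exists_min_image
    (Finset.univ.filter fun p : Fin n × Fin n => v p.2 < v p.1 ∧ M.1 p.1 p.2 ≠ 0)
    (fun p => v p.1 - v p.2) ⟨(i', j'), by simp [h', hn']⟩
  simp only [Finset.mem_filter, Finset.mem_univ, true_and] at hmem
  obtain ⟨hlt, hn⟩ := hmem
  have hmin' : ∀ p q, v q < v p → M.1 p q ≠ 0 → v i - v j ≤ v p - v q := fun p q h1 h2 =>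
    hmin (p, q) (by simp [h1, h2])
  have hij : i ≠ j := fun h => by subst h; exact lt_irrefl _ hlt
  refine ⟨i, j, hij, hn, ?_⟩
  -- monotone, constant exactly on `[v j, v i]`
  let φ : ℝ → ℝ := fun x => min x (v j) + max (x - v i) 0
  have hφ : φ (v i) = φ (v j) := by
    simp only [φ]
    rw [min_eq_right hlt.le, sub_self, max_self, min_self, max_eq_right (by linarith)]
  have hφ2 : ∀ x y, x < y → v i - v j ≤ y - x → ¬ (x = v j ∧ y = v i) → φ x < φ y := by
    intro x y hxy h1 h2
    simp only [φ]
    rcases le_or_gt (v j) x with h3 | h3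
    · have h4 : v i < y := by
        rcases lt_or_eq_of_le h3 with h5 | h5
        · linarith
        · refine lt_of_le_of_ne (by linarith) fun h6 => h2 ⟨h5.symm, h6.symm⟩
      rw [min_eq_right h3, min_eq_right (h3.trans hxy.le)]
      have : max (x - v i) 0 < max (y - v i) 0 := by
        rw [max_eq_left (b := (0 : ℝ)) (by linarith : 0 ≤ y - v i)]
        exact max_lt (by linarith) (by linarith)
      linarith
    · have h4 : min x (v j) < min y (v j) := by
        rw [min_eq_left h3.le]; exact lt_min hxy h3
      have h5 : max (x - v i) 0 ≤ max (y - v i) 0 := max_le_max (by linarith) le_rfl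
      linarith
  have hlim : Tendsto (fun t : ℝ => dgm (fun k => -t * φ (v k)) * M *
      (dgm (fun k => -t * φ (v k)))⁻¹) atTop (𝓝 (elemU n hij (M.1 i j))) := by
    rw [tendsto_SLR]
    intro p q
    simp only [conj_apply, elemU_apply]
    by_cases hpq : p = q
    · subst hpq
      have : ¬ (i = p ∧ j = p) := fun h => hij (h.1.trans h.2.symm)
      simp [this, hd]
    rw [one_apply_ne hpq, zero_add]
    by_cases h1 : i = p ∧ j = q
    · obtain ⟨rfl, rfl⟩ := h1
      simp [hφ]
    rw [if_neg h1]
    by_cases h0 : M.1 p q = 0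
    · simp [h0]
    have h2 : v q < v p := by
      rcases lt_trichotomy (v p) (v q) with h | h | h
      · exact absurd (hup p q h) h0
      · exact absurd (hv h) hpq
      · exact h
    have h3 : φ (v q) < φ (v p) := hφ2 _ _ h2 (hmin' p q h2 h0)
      fun h => h1 ⟨(hv h.2).symm, (hv h.1).symm⟩
    have h4 : Tendsto (fun t : ℝ => Real.exp (-t * φ (v p) - -t * φ (v q))) atTop (𝓝 0) := by
      refine Real.tendsto_exp_atBot.comp ?_
      have : (fun t : ℝ => -t * φ (v p) - -t * φ (v q)) =
          fun t => t * -(φ (v p) - φ (v q)) := by ext t; ring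
      rw [this]
      exact tendsto_id.atTop_mul_const_of_neg (by linarith)
    simpa using h4.mul_const (M.1 p q)
  exact hRc.mem_of_tendsto hlim (Eventually.of_forall fun t => hRA _ _ hM)

open Filter Topology in
/-- If a closed `A`-conjugation-invariant set `R` accumulates at `1` along elements that vanish on
`r` off the diagonal and have a nonzero entry below the diagonal for the ordering `v`, then
conjugating by elements of `A` so that these entries get size one gives a nontrivial unipotent
element of `R` in the limit. -/
lemma blowup_ord {n : ℕ} {r : Fin n → Fin n → Prop} {R : Set (SLR n)} (hRc : IsClosed R)
    (hRA : ∀ v, ∀ g ∈ R, dgm v * g * (dgm v)⁻¹ ∈ R) {v : Fin n → ℝ} (hv : Function.Injective v)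
    (hf : ∃ᶠ h in 𝓝 (1 : SLR n), h ∈ R ∧ (∀ i j, i ≠ j → r i j → h.1 i j = 0) ∧
      ∃ i j, v j < v i ∧ h.1 i j ≠ 0) :
    ∃ (i j : Fin n) (hij : i ≠ j) (s : ℝ), s ≠ 0 ∧ ¬ r i j ∧ elemU n hij s ∈ R := by
  classical
  let B : Finset (Fin n × Fin n) := Finset.univ.filter fun p => v p.2 < v p.1
  have hB : ∀ p, p ∈ B ↔ v p.2 < v p.1 := fun p => by simp [B]
  have hone : ∀ i j, v j < v i → (1 : Matrix (Fin n) (Fin n) ℝ) i j = 0 := fun i j h =>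
    one_apply_ne fun e => by subst e; exact lt_irrefl _ h
  let f : SLR n → ℝ → ℝ := fun h t => ∑ p ∈ B, |h.1 p.1 p.2| * Real.exp (t * (v p.1 - v p.2))
  have hsmall : ∀ᶠ h in 𝓝 (1 : SLR n), f h 0 < 1 := by
    have hc : Continuous fun h : SLR n => f h 0 :=
      continuous_finsetSum _ fun p _ => ((continuous_entry p.1 p.2).abs).mul continuous_const
    refine hc.continuousAt.eventually (gt_mem_nhds ?_)
    have : f 1 0 = 0 := Finset.sum_eq_zero fun p hp => by
      rw [val_one, hone _ _ ((hB p).mp hp), abs_zero, zero_mul]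
    change f 1 0 < 1
    rw [this]; exact one_pos
  obtain ⟨h, hlim, hh⟩ := exists_seq_forall_of_frequently (hf.and_eventually hsmall)
  have ht : ∀ k, ∃ t : ℝ, 0 ≤ t ∧ f (h k) t = 1 := by
    intro k
    obtain ⟨⟨-, -, i, j, hij, hne⟩, h0⟩ := hh k
    have hc : Continuous (f (h k)) :=
      continuous_finsetSum _ fun p _ => by fun_prop
    have hge : ∀ t, |(h k).1 i j| * Real.exp (t * (v i - v j)) ≤ f (h k) t := fun t =>
      Finset.single_le_sum (f := fun p : Fin n × Fin n =>
        |(h k).1 p.1 p.2| * Real.exp (t * (v p.1 - v p.2))) (fun _ _ => by positivity)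
        ((hB (i, j)).mpr hij)
    have htop : Tendsto (fun t : ℝ => |(h k).1 i j| * Real.exp (t * (v i - v j))) atTop atTop :=
      (Real.tendsto_exp_atTop.comp
        (tendsto_id.atTop_mul_const (by linarith : 0 < v i - v j))).const_mul_atTop
        (abs_pos.mpr hne)
    obtain ⟨T, hT, hT0⟩ := ((htop.eventually_ge_atTop 1).and (eventually_ge_atTop 0)).exists
    obtain ⟨t, ht, e⟩ := intermediate_value_Icc hT0 hc.continuousOn
      ⟨h0.le, hT.trans (hge T)⟩
    exact ⟨t, ht.1, e⟩
  choose t ht0 ht1 using ht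
  let h' : ℕ → SLR n := fun k => dgm (fun i => t k * v i) * h k * (dgm fun i => t k * v i)⁻¹
  have h'R : ∀ k, h' k ∈ R := fun k => hRA _ _ (hh k).1.1
  have h'e : ∀ k i j, (h' k).1 i j = Real.exp (t k * (v i - v j)) * (h k).1 i j := fun k i j => by
    simp only [h']; rw [conj_apply, mul_sub]
  have hlim' := fun i j => tendsto_SLR.mp hlim i j
  have hdiag : ∀ i, Tendsto (fun k => (h' k).1 i i) atTop (𝓝 1) := by
    intro i
    have := hlim' i i
    rw [val_one, one_apply_eq] at this
    simpa [h'e] using this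
  have hupper : ∀ i j, v i < v j → Tendsto (fun k => (h' k).1 i j) atTop (𝓝 0) := by
    intro i j hij
    have h1 := (hlim' i j).abs
    rw [val_one, one_apply_ne (fun e => by subst e; exact lt_irrefl _ hij), abs_zero] at h1
    refine squeeze_zero_norm (fun k => ?_) h1
    rw [h'e, Real.norm_eq_abs, abs_mul, Real.abs_exp]
    refine mul_le_of_le_one_left (abs_nonneg _) (Real.exp_le_one_iff.mpr ?_)
    exact mul_nonpos_of_nonneg_of_nonpos (ht0 k) (by linarith)
  have hsum : ∀ k, ∑ p ∈ B, |(h' k).1 p.1 p.2| = 1 := by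
    intro k
    refine Eq.trans ?_ (ht1 k)
    refine Finset.sum_congr rfl fun p _ => ?_
    rw [h'e, abs_mul, Real.abs_exp, mul_comm]
  have hbd : ∀ᶠ k in atTop, (h' k).1 ∈
      Set.pi Set.univ fun _ : Fin n => Set.pi Set.univ fun _ : Fin n => Set.Icc (-2 : ℝ) 2 := by
    have h1 : ∀ᶠ k in atTop, ∀ i j, (h' k).1 i j ∈ Set.Icc (-2 : ℝ) 2 := by
      rw [eventually_all]; intro i
      rw [eventually_all]; intro j
      rcases lt_trichotomy (v i) (v j) with hij | hij | hij
      · exact (hupper i j hij).eventually (Icc_mem_nhds (by norm_num) (by norm_num))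
      · rw [hv hij]
        exact (hdiag j).eventually (Icc_mem_nhds (by norm_num) (by norm_num))
      · refine Eventually.of_forall fun k => abs_le.mp ?_
        have := Finset.single_le_sum (f := fun p : Fin n × Fin n => |(h' k).1 p.1 p.2|)
          (fun _ _ => abs_nonneg _) ((hB (i, j)).mpr hij)
        rw [hsum k] at this
        simp only at this
        linarith
    filter_upwards [h1] with k hk i _ j _
    exact hk i j
  have hcpt : IsCompact (Set.pi Set.univ fun _ : Fin n => Set.pi Set.univ fun _ : Fin n =>
      Set.Icc (-2 : ℝ) 2) := isCompact_univ_pi fun _ => isCompact_univ_pi fun _ => isCompact_Icc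
  obtain ⟨M, -, φ, hφ, hφM⟩ := hcpt.tendsto_subseq' hbd.frequently
  have hent : ∀ i j, Tendsto (fun k => (h' (φ k)).1 i j) atTop (𝓝 (M i j)) := fun i j =>
    tendsto_pi_nhds.mp (tendsto_pi_nhds.mp hφM i) j
  have hdet : (Matrix.of M).det = 1 := by
    have hM : Tendsto (fun k => (h' (φ k)).1) atTop (𝓝 (Matrix.of M)) := hφM
    have h1 := (Continuous.matrix_det continuous_id).continuousAt.tendsto.comp hM
    refine tendsto_nhds_unique h1 ?_
    have : (fun g : Matrix (Fin n) (Fin n) ℝ => (id g).det) ∘ (fun k => (h' (φ k)).1) =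
        fun _ => 1 := funext fun k => (h' (φ k)).2
    rw [this]
    exact tendsto_const_nhds
  let N : SLR n := ⟨Matrix.of M, hdet⟩
  have hNlim : Tendsto (fun k => h' (φ k)) atTop (𝓝 N) := tendsto_SLR.mpr hent
  have hNR : N ∈ R := hRc.mem_of_tendsto hNlim (Eventually.of_forall fun k => h'R _)
  have hφt := hφ.tendsto_atTop
  obtain ⟨i, j, hij, hn, hu⟩ := contract_to_root hRc hRA hv hNR
    (fun i => tendsto_nhds_unique (hent i i) ((hdiag i).comp hφt))
    (fun i j hij => tendsto_nhds_unique (hent i j) ((hupper i j hij).comp hφt)) (by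
      by_contra! hcon
      have h1 : Tendsto (fun k => ∑ p ∈ B, |(h' (φ k)).1 p.1 p.2|) atTop
          (𝓝 (∑ p ∈ B, |M p.1 p.2|)) := tendsto_finsetSum _ fun p _ => (hent p.1 p.2).abs
      simp only [hsum] at h1
      have h2 := tendsto_nhds_unique h1 tendsto_const_nhds
      have h3 : ∑ p ∈ B, |M p.1 p.2| = 0 := Finset.sum_eq_zero fun p hp => by
        rw [abs_eq_zero]; exact hcon p.1 p.2 ((hB p).mp hp)
      linarith)
  refine ⟨i, j, hij, _, hn, fun hr => hn ?_, hu⟩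
  refine tendsto_nhds_unique (hent i j) ?_
  have : (fun k => (h' (φ k)).1 i j) = fun _ => 0 := funext fun k => by
    rw [h'e, (hh (φ k)).1.2.1 i j hij hr, mul_zero]
  rw [this]
  exact tendsto_const_nhds

open Filter Topology in
lemma blowup {n : ℕ} {r : Fin n → Fin n → Prop} {R : Set (SLR n)} (hRc : IsClosed R)
    (hRA : ∀ v, ∀ g ∈ R, dgm v * g * (dgm v)⁻¹ ∈ R)
    (hf : ∃ᶠ h in 𝓝 (1 : SLR n), h ∈ R ∧ (∀ i j, i ≠ j → r i j → h.1 i j = 0) ∧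
      ∃ i j, i ≠ j ∧ h.1 i j ≠ 0) :
    ∃ (i j : Fin n) (hij : i ≠ j) (s : ℝ), s ≠ 0 ∧ ¬ r i j ∧ elemU n hij s ∈ R := by
  have hcast : Function.Injective fun i : Fin n => ((i : ℕ) : ℝ) :=
    Nat.cast_injective.comp Fin.val_injective
  have h2 : ∃ᶠ h in 𝓝 (1 : SLR n),
      (h ∈ R ∧ (∀ i j, i ≠ j → r i j → h.1 i j = 0) ∧
        ∃ i j : Fin n, ((j : ℕ) : ℝ) < ((i : ℕ) : ℝ) ∧ h.1 i j ≠ 0) ∨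
      (h ∈ R ∧ (∀ i j, i ≠ j → r i j → h.1 i j = 0) ∧
        ∃ i j : Fin n, -((j : ℕ) : ℝ) < -((i : ℕ) : ℝ) ∧ h.1 i j ≠ 0) := by
    refine hf.mono ?_
    rintro h ⟨h1, h2, i, j, hij, hne⟩
    rcases lt_or_gt_of_ne hij with hlt | hlt
    · exact Or.inr ⟨h1, h2, i, j, neg_lt_neg (Nat.cast_lt.mpr hlt), hne⟩
    · exact Or.inl ⟨h1, h2, i, j, Nat.cast_lt.mpr hlt, hne⟩
  rcases frequently_or_distrib.mp h2 with h3 | h3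
  · exact blowup_ord hRc hRA hcast h3
  · exact blowup_ord hRc hRA (v := fun i => -((i : ℕ) : ℝ)) (neg_injective.comp hcast) h3

/-! ### The return set near the identity -/

open Classical in
/-- Rescaling of a matrix of positive determinant to determinant one (and `1` for all other
matrices). -/
noncomputable def normM {n : ℕ} (b : Matrix (Fin n) (Fin n) ℝ) : SLR n :=
  if h : 0 < b.det then
    ⟨(b.det ^ (-(1 / n : ℝ))) • b, by
      rw [det_smul, Fintype.card_fin]
      rcases Nat.eq_zero_or_pos n with rfl | hn
      · simp
      · have hn' : (n : ℝ) ≠ 0 := by positivity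
        rw [← Real.rpow_mul_natCast h.le, neg_mul, one_div_mul_cancel hn', Real.rpow_neg_one,
          inv_mul_cancel₀ h.ne']⟩
  else 1

lemma normM_val' {n : ℕ} {b : Matrix (Fin n) (Fin n) ℝ} (h : 0 < b.det) :
    (normM b).1 = (b.det ^ (-(1 / n : ℝ))) • b := congrArg Subtype.val (dif_pos h)

lemma normM_val {n : ℕ} {b : Matrix (Fin n) (Fin n) ℝ} (h : 0 < b.det) :
    ∃ c : ℝ, 0 < c ∧ (normM b).1 = c • b :=
  ⟨b.det ^ (-(1 / n : ℝ)), Real.rpow_pos_of_pos h _, normM_val' h⟩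

open Filter Topology in
lemma det_pos_nhds (n : ℕ) : ∀ᶠ b in 𝓝 (1 : Matrix (Fin n) (Fin n) ℝ), 0 < b.det := by
  have hc : Continuous fun b : Matrix (Fin n) (Fin n) ℝ => b.det :=
    Continuous.matrix_det continuous_id
  refine hc.continuousAt.eventually (lt_mem_nhds ?_)
  change (0 : ℝ) < (1 : Matrix (Fin n) (Fin n) ℝ).det
  rw [det_one]; exact one_pos

open Filter Topology in
lemma tendsto_normM (n : ℕ) : Tendsto normM (𝓝 (1 : Matrix (Fin n) (Fin n) ℝ)) (𝓝 (1 : SLR n)) := by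
  rw [tendsto_SLR]
  intro i j
  have hc : ContinuousAt
      (fun b : Matrix (Fin n) (Fin n) ℝ => b.det ^ (-(1 / n : ℝ)) * b i j) 1 := by
    refine ContinuousAt.mul (ContinuousAt.rpow_const
      (Continuous.matrix_det continuous_id).continuousAt (Or.inl ?_))
      (continuous_id.matrix_elem i j).continuousAt
    rw [det_one]; exact one_ne_zero
  have h1 := hc.tendsto
  rw [det_one, Real.one_rpow, one_mul] at h1
  refine h1.congr' ?_
  filter_upwards [det_pos_nhds n] with b hb
  exact (congrFun (congrFun (normM_val' hb) i) j).symm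

open Filter Topology in
/-- If `r` accounts for all root groups meeting the closed conjugation-invariant set `R`, then
elements of `R` near the identity are supported on `r`: otherwise splitting off the part supported
on `r` leaves an element of `R` that can be blown up to a root element outside `r`. -/
lemma near_supported {n : ℕ} {r : Fin n → Fin n → Prop} (hr : ∀ i, r i i)
    {R : Set (SLR n)} {L : Subgroup (SLR n)} (hRc : IsClosed R)
    (hRA : ∀ v, ∀ g ∈ R, dgm v * g * (dgm v)⁻¹ ∈ R) (hLR : ∀ l ∈ L, ∀ g ∈ R, l * g ∈ R)
    (hL : ∀ᶠ g in 𝓝 (1 : SLR n), (∀ i j, ¬ r i j → g.1 i j = 0) → g ∈ L)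
    (hno : ∀ (i j : Fin n) (hij : i ≠ j) (s : ℝ), s ≠ 0 → elemU n hij s ∈ R → r i j) :
    ∀ᶠ g in 𝓝 (1 : SLR n), g ∈ R → ∀ i j, ¬ r i j → g.1 i j = 0 := by
  by_contra hcon
  rw [not_eventually] at hcon
  have hf : ∃ᶠ h in 𝓝 (1 : SLR n), h ∈ R ∧ (∀ i j, i ≠ j → r i j → h.1 i j = 0) ∧
      ∃ i j, i ≠ j ∧ h.1 i j ≠ 0 := by
    rw [frequently_iff]
    intro U hU
    -- `U` contains `(normM b)⁻¹ * g` for `b` and `g` close to the identity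
    have hlim : Tendsto (fun p : Matrix (Fin n) (Fin n) ℝ × SLR n => (normM p.1)⁻¹ * p.2)
        (𝓝 1 ×ˢ 𝓝 1) (𝓝 1) := by
      have h1 : Tendsto (fun p : Matrix (Fin n) (Fin n) ℝ × SLR n => (normM p.1)⁻¹ * p.2)
          (𝓝 1 ×ˢ 𝓝 1) (𝓝 (1⁻¹ * 1)) :=
        ((tendsto_normM n).comp tendsto_fst).inv.mul tendsto_snd
      simpa using h1
    obtain ⟨pb, hpb, pg, hpg, hU'⟩ := eventually_prod_iff.mp (hlim.eventually hU)
    have hV : {b : Matrix (Fin n) (Fin n) ℝ | pb b ∧ 0 < b.det ∧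
        ((∀ i j, ¬ r i j → (normM b).1 i j = 0) → normM b ∈ L)} ∈ 𝓝 1 :=
      hpb.and ((det_pos_nhds n).and ((tendsto_normM n).eventually hL))
    have hval1 : Tendsto (fun g : SLR n => g.1) (𝓝 1) (𝓝 (1 : Matrix (Fin n) (Fin n) ℝ)) :=
      (continuous_val n).tendsto (1 : SLR n)
    have hfac := hval1.eventually (factor_nhds hr hV)
    obtain ⟨g, hg, ⟨b, w, ⟨hb1, hb2, hb3⟩, hbr, hwr, e⟩, hgp⟩ :=
      (hcon.and_eventually (hfac.and hpg)).exists
    simp only [not_forall, exists_prop] at hg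
    obtain ⟨hgR, i, j, hrij, hgij⟩ := hg
    obtain ⟨c, hc, ec⟩ := normM_val hb2
    have hbL : normM b ∈ L := hb3 fun i j hij => by
      rw [ec, Matrix.smul_apply, hbr i j hij, smul_zero]
    -- since `g` is not supported on `r`, the factor `w` does not vanish
    have hw : ∃ i j, i ≠ j ∧ w i j ≠ 0 := by
      by_contra! hw
      have hw0 : w = 0 := by
        ext i j
        by_cases hij : i = j
        · subst hij; exact hwr i i (hr i)
        · exact hw i j hij
      rw [hw0, add_zero, mul_one] at e
      exact hgij (by rw [← hbr i j hrij, ← e])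
    have hval : ((normM b)⁻¹ * g).1 = c⁻¹ • (1 + w) := by
      have h1 : (normM b).1 * (c⁻¹ • (1 + w)) = g.1 := by
        rw [ec, smul_mul_smul_comm, mul_inv_cancel₀ hc.ne', one_smul]
        exact e.symm
      rw [val_mul, ← h1, ← mul_assoc, ← val_mul, inv_mul_cancel, val_one, one_mul]
    have hoff : ∀ i j, i ≠ j → ((normM b)⁻¹ * g).1 i j = c⁻¹ * w i j := fun i j hij => by
      rw [hval, Matrix.smul_apply, Matrix.add_apply, one_apply_ne hij, zero_add, smul_eq_mul]
    obtain ⟨i', j', hij', hw'⟩ := hw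
    refine ⟨(normM b)⁻¹ * g, hU' hb1 hgp, hLR _ (L.inv_mem hbL) _ hgR, fun i j hij h => ?_,
      i', j', hij', ?_⟩
    · rw [hoff i j hij, hwr i j h, mul_zero]
    · rw [hoff i' j' hij']
      exact mul_ne_zero (inv_ne_zero hc.ne') hw'
  obtain ⟨i, j, hij, s, hs, hrij, hu⟩ := blowup hRc hRA hf
  exact hrij (hno i j hij s hs hu)

/-! ### Closing up an almost periodic orbit -/

section Quotient

variable {n : ℕ} {Γ : Subgroup (SLR n)}

open Filter Topology in
/-- Neighbourhoods in `G/Γ` come from neighbourhoods of the identity in `G`. -/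
lemma smul_nhds (y : SLR n ⧸ Γ) {W : Set (SLR n)} (hW : W ∈ 𝓝 1) :
    (fun g : SLR n => g • y) '' W ∈ 𝓝 y := by
  obtain ⟨g₀, rfl⟩ := QuotientGroup.mk_surjective y
  have h1 : IsOpenMap fun g : SLR n => g • (QuotientGroup.mk g₀ : SLR n ⧸ Γ) :=
    QuotientGroup.isOpenMap_coe.comp (isOpenMap_mul_right g₀)
  have := h1.image_mem_nhds hW
  simpa using this

open Filter Topology in
/-- Point stabilisers in `G/Γ` are discrete. -/
lemma stab_discrete [DiscreteTopology Γ] (y : SLR n ⧸ Γ) :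
    ∀ᶠ x in 𝓝 (1 : SLR n), x • y = y → x = 1 := by
  obtain ⟨g₀, rfl⟩ := QuotientGroup.mk_surjective y
  obtain ⟨U, hU, hUe⟩ := isOpen_induced_iff.mp (isOpen_discrete ({1} : Set Γ))
  have hU1 : (1 : SLR n) ∈ U := by
    have : (1 : Γ) ∈ Subtype.val ⁻¹' U := by rw [hUe]; rfl
    exact this
  have hc : Continuous fun x : SLR n => g₀⁻¹ * x⁻¹ * g₀ :=
    (continuous_const.mul continuous_inv).mul continuous_const
  have hU' : g₀⁻¹ * (1 : SLR n)⁻¹ * g₀ ∈ U := by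
    rw [inv_one, mul_one, inv_mul_cancel]; exact hU1
  have h1 : ∀ᶠ x in 𝓝 (1 : SLR n), g₀⁻¹ * x⁻¹ * g₀ ∈ U :=
    (hc.tendsto 1).eventually (hU.mem_nhds hU')
  filter_upwards [h1] with x hx he
  have h2 : (QuotientGroup.mk (x * g₀) : SLR n ⧸ Γ) = QuotientGroup.mk g₀ := he
  rw [QuotientGroup.eq] at h2
  have h3 : (x * g₀)⁻¹ * g₀ = g₀⁻¹ * x⁻¹ * g₀ := by group
  rw [h3] at h2
  have h4 : (⟨_, h2⟩ : Γ) ∈ Subtype.val ⁻¹' U := hx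
  rw [hUe] at h4
  have h5 : g₀⁻¹ * x⁻¹ * g₀ = 1 := congrArg Subtype.val h4
  have h6 : x = g₀ * (g₀⁻¹ * x⁻¹ * g₀)⁻¹ * g₀⁻¹ := by group
  rw [h6, h5]; group

open Filter Topology in
/-- If a regular element of `A` fixes a point `z` of the minimal set `Y`, then `Y` is the orbit
of `z`. -/
lemma orbit_of_regular [DiscreteTopology Γ] {Y : Set (SLR n ⧸ Γ)}
    (hY : IsMinimalOn (posDiag n) Y) {d : SLR n} (hd : d ∈ posDiag n)
    (hreg : ∀ i j, i ≠ j → d.1 i i ≠ d.1 j j) {z : SLR n ⧸ Γ} (hz : z ∈ Y) (hdz : d • z = z) :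
    Y = (· • z) '' posDiag n := by
  have hcomm : ∀ a ∈ posDiag n, d * a = a * d := by
    intro a ha
    obtain ⟨v, rfl⟩ := exists_dgm hd
    obtain ⟨w, rfl⟩ := exists_dgm ha
    exact dgm_comm _ _
  -- by density of the orbit of `z`, the element `d` fixes `Y` pointwise
  have hfix : ∀ y ∈ Y, d • y = y := by
    intro y hy
    have hcl : IsClosed {y : SLR n ⧸ Γ | d • y = y} :=
      isClosed_eq (continuous_const_smul d) continuous_id
    refine closure_minimal ?_ hcl (hY.2.2 z hz hy)
    rintro _ ⟨a, ha, rfl⟩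
    change d • a • z = a • z
    rw [smul_smul, hcomm a ha, mul_smul, hdz]
  refine Set.Subset.antisymm (fun y hy => ?_) ?_
  swap
  · rintro _ ⟨a, ha, rfl⟩; exact hY.smul_mem ha hz
  have hc : Continuous fun g : SLR n => d⁻¹ * (g⁻¹ * d * g) := by fun_prop
  have h1 : ∀ᶠ g in 𝓝 (1 : SLR n), d⁻¹ * (g⁻¹ * d * g) ∈ {x : SLR n | x • y = y → x = 1} := by
    refine hc.continuousAt.eventually ?_
    simpa using stab_discrete y
  have h2 : ∀ᶠ g in 𝓝 (1 : SLR n), ∀ i, 0 < g.1 i i := by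
    rw [eventually_all]
    intro i
    refine (continuous_entry i i).continuousAt.eventually (lt_mem_nhds ?_)
    change (0 : ℝ) < (1 : Matrix (Fin n) (Fin n) ℝ) i i
    rw [one_apply_eq]; exact one_pos
  obtain ⟨x, ⟨g, ⟨hg1, hg2⟩, hgx⟩, ⟨a, ha, hax⟩⟩ :=
    mem_closure_iff_nhds.mp (hY.2.2 z hz hy) _ (smul_nhds y (h1.and h2))
  have hgx' : g • y = x := hgx
  have hax' : a • z = x := hax
  have h3 : d • x = x := hfix x (by rw [← hax']; exact hY.smul_mem ha hz)
  have h4 : d⁻¹ * (g⁻¹ * d * g) = 1 := by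
    refine hg1 ?_
    rw [mul_smul, mul_smul, mul_smul, hgx', h3, ← hgx', inv_smul_smul, inv_smul_eq_iff, hfix y hy]
  have h5 : d * g = g * d := by
    have h6 : g⁻¹ * d * g = d := by rw [inv_mul_eq_one] at h4; exact h4.symm
    rw [mul_assoc, inv_mul_eq_iff_eq_mul] at h6
    exact h6
  have hgA : g ∈ posDiag n := by
    refine ⟨fun i j hij => ?_, hg2⟩
    have h6 : (d * g).1 i j = (g * d).1 i j := by rw [h5]
    rw [val_mul, val_mul, posDiag_val hd, diagonal_mul, mul_diagonal] at h6
    have h7 : (d.1 i i - d.1 j j) * g.1 i j = 0 := by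
      rw [sub_mul, h6]; ring
    exact (mul_eq_zero.mp h7).resolve_left (sub_ne_zero.mpr (hreg i j hij))
  refine ⟨g⁻¹ * a, (posDiagSub n).mul_mem ((posDiagSub n).inv_mem hgA) ha, ?_⟩
  change (g⁻¹ * a) • z = y
  rw [mul_smul, hax', ← hgx', inv_smul_smul]

open Filter Topology in
/-- Recurrence: in a compact invariant set some point comes back arbitrarily close to itself after
arbitrarily many iterations of `a`. -/
lemma exists_return {Y : Set (SLR n ⧸ Γ)} (hYc : IsCompact Y) {a : SLR n}
    (ha : ∀ y ∈ Y, a • y ∈ Y) (hne : Y.Nonempty) {W : Set (SLR n)} (hW : W ∈ 𝓝 1) (m₀ : ℕ) :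
    ∃ m ≥ m₀, ∃ y ∈ Y, ∃ h ∈ W, h • a ^ m • y = y := by
  obtain ⟨y₀, hy₀⟩ := hne
  have hpow : ∀ k : ℕ, a ^ k • y₀ ∈ Y := by
    intro k
    induction k with
    | zero => simpa using hy₀
    | succ k ih => rw [pow_succ', mul_smul]; exact ha _ ih
  have hc : Tendsto (fun p : SLR n × SLR n => p.1 * p.2⁻¹) (𝓝 1 ×ˢ 𝓝 1) (𝓝 1) := by
    have h1 : Tendsto (fun p : SLR n × SLR n => p.1 * p.2⁻¹) (𝓝 1 ×ˢ 𝓝 1) (𝓝 (1 * 1⁻¹)) :=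
      tendsto_fst.mul tendsto_snd.inv
    simpa using h1
  obtain ⟨p, hp, q, hq, hpq⟩ := eventually_prod_iff.mp (hc.eventually hW)
  obtain ⟨x, -, hx⟩ := hYc.exists_mapClusterPt_of_frequently (l := atTop)
    (f := fun k : ℕ => a ^ k • y₀) (Eventually.of_forall hpow).frequently
  have hfr : ∃ᶠ k : ℕ in atTop, a ^ k • y₀ ∈ (fun g : SLR n => g • x) '' {g | p g ∧ q g} :=
    hx.frequently (smul_nhds x (hp.and hq))
  obtain ⟨k, -, ⟨g₁, hg₁, e₁⟩⟩ := frequently_atTop.mp hfr 0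
  obtain ⟨l, hl, ⟨g₂, hg₂, e₂⟩⟩ := frequently_atTop.mp hfr (k + m₀)
  have e₁' : g₁ • x = a ^ k • y₀ := e₁
  have e₂' : g₂ • x = a ^ l • y₀ := e₂
  refine ⟨l - k, by omega, a ^ k • y₀, hpow k, g₁ * g₂⁻¹, hpq hg₁.1 hg₂.2, ?_⟩
  rw [smul_smul (a ^ (l - k)), ← pow_add, Nat.sub_add_cancel (by omega), ← e₂', mul_smul,
    inv_smul_smul, e₁']

/-- Exponents for which `dgm` is proportional to `diag (ε ^ i)` with `ε = e⁻¹`. -/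
noncomputable def expo (n : ℕ) : Fin n → ℝ := fun i => -((i : ℕ) : ℝ)

lemma dgm_pow (v : Fin n → ℝ) (m : ℕ) : dgm v ^ m = dgm ((m : ℝ) • v) := by
  induction m with
  | zero => rw [pow_zero, Nat.cast_zero, zero_smul, dgm_zero]
  | succ m ih => rw [pow_succ, ih, ← dgm_add, Nat.cast_succ, add_smul, one_smul]

lemma dgm_expo_pow (m : ℕ) : ∃ c : ℝ, 0 < c ∧ (dgm (expo n) ^ m).1 =
    c • diagonal fun i : Fin n => Real.exp (-(m : ℝ)) ^ (i : ℕ) := by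
  refine ⟨Real.exp (-((∑ k, ((m : ℝ) • expo n) k) / n)), Real.exp_pos _, ?_⟩
  rw [dgm_pow, dgm_val, ← diagonal_smul]
  congr 1
  ext i
  change _ = Real.exp _ * Real.exp (-(m : ℝ)) ^ (i : ℕ)
  rw [← Real.exp_nat_mul, ← Real.exp_add]
  congr 1
  simp only [expo, Pi.smul_apply, smul_eq_mul]
  ring

open Filter Topology in
/-- Closing lemma: if elements of the return set near the identity are supported on a preorder `r`,
and the small elements supported on `r` preserve `Y`, then a regular element of `A` fixes a point
of `Y`. -/
lemma exists_regular_fixed {r : Fin n → Fin n → Prop} (hr : ∀ i, r i i)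
    (ht : ∀ i j k, r i j → r j k → r i k) {Y : Set (SLR n ⧸ Γ)} (hYc : IsCompact Y)
    (hY : IsMinimalOn (posDiag n) Y)
    (hL : ∀ᶠ g in 𝓝 (1 : SLR n), (∀ i j, ¬ r i j → g.1 i j = 0) →
      g ∈ MulAction.stabilizer (SLR n) Y)
    (hR : ∀ᶠ g in 𝓝 (1 : SLR n), g ∈ retSet (SLR n) Y → ∀ i j, ¬ r i j → g.1 i j = 0) :
    ∃ d ∈ posDiag n, (∀ i j, i ≠ j → d.1 i i ≠ d.1 j j) ∧ ∃ z ∈ Y, d • z = z := by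
  have hV : {p : Matrix (Fin n) (Fin n) ℝ | 0 < p.det ∧ ((∀ i j, ¬ r i j → (normM p).1 i j = 0) →
      normM p ∈ MulAction.stabilizer (SLR n) Y)} ∈ 𝓝 1 :=
    (det_pos_nhds n).and ((tendsto_normM n).eventually hL)
  obtain ⟨ε₀, hε₀, hdiag⟩ := diagonalise_nhds hr ht hV
  have hval1 : Tendsto (fun g : SLR n => g.1) (𝓝 1) (𝓝 (1 : Matrix (Fin n) (Fin n) ℝ)) :=
    (continuous_val n).tendsto (1 : SLR n)
  have hdiag' := hval1.eventually hdiag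
  -- choose the return time so large that the ratio `e ^ (-m)` is below `ε₀` and `1 / 4`
  have hexp : Tendsto (fun m : ℕ => Real.exp (-(m : ℝ))) atTop (𝓝 0) :=
    Real.tendsto_exp_neg_atTop_nhds_zero.comp tendsto_natCast_atTop_atTop
  obtain ⟨m₀, hm₀⟩ := eventually_atTop.mp (hexp.eventually
    ((gt_mem_nhds hε₀).and (gt_mem_nhds (by norm_num : (0 : ℝ) < 1 / 4))))
  obtain ⟨m, hm, y, hy, h, ⟨hh1, hh2⟩, hret⟩ := exists_return hYc
    (fun y hy => hY.smul_mem (dgm_mem (expo n)) hy) hY.1 (hR.and hdiag') m₀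
  obtain ⟨hε, hε4⟩ := hm₀ m hm
  set ε := Real.exp (-(m : ℝ)) with hεdef
  have hε0 : 0 < ε := Real.exp_pos _
  have hamy : dgm (expo n) ^ m • y ∈ Y := hY.smul_mem (by rw [dgm_pow]; exact dgm_mem _) hy
  have hhR : h ∈ retSet (SLR n) Y := ⟨_, hamy, by rw [hret]; exact hy⟩
  obtain ⟨p, d, ⟨hp1, hp2⟩, hps, hd, hpd⟩ := hh2 ε hε0 hε (hh1 hhR)
  obtain ⟨c, hc, ec⟩ := normM_val hp1
  have hpL := hp2 fun i j hij => by rw [ec, Matrix.smul_apply, hps i j hij, smul_zero]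
  obtain ⟨c', hc', ec'⟩ := dgm_expo_pow (n := n) m
  rw [← hεdef] at ec'
  set D := diagonal fun i : Fin n => ε ^ (i : ℕ) with hD
  let Δ := normM p * h * dgm (expo n) ^ m * (normM p)⁻¹
  have hΔ : Δ.1 = diagonal fun i => c' * (d i * ε ^ (i : ℕ)) := by
    have h1 : Δ.1 * (normM p).1 = (c' • (diagonal d * D)) * (normM p).1 := by
      rw [← val_mul]
      have h2 : Δ * normM p = normM p * h * dgm (expo n) ^ m := by simp [Δ]
      rw [h2, val_mul, val_mul, ec', ec, Matrix.mul_smul, Matrix.smul_mul, Matrix.smul_mul, hpd,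
        Matrix.smul_mul, Matrix.mul_smul]
    have h3 : (normM p).1 * ((normM p)⁻¹).1 = 1 := by
      rw [← val_mul, mul_inv_cancel, val_one]
    have h4 := congrArg (· * ((normM p)⁻¹).1) h1
    simp only [mul_assoc, h3, mul_one] at h4
    rw [h4, hD, diagonal_mul_diagonal, ← diagonal_smul]
    rfl
  have hΔe : ∀ i, Δ.1 i i = c' * (d i * ε ^ (i : ℕ)) := fun i => by
    rw [hΔ, diagonal_apply_eq]
  have hdpos : ∀ i, 0 < d i := fun i => by linarith [(hd i).1]
  have hlt : ∀ i j : Fin n, i < j → Δ.1 j j < Δ.1 i i := by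
    intro i j hij
    rw [hΔe, hΔe]
    refine mul_lt_mul_of_pos_left ?_ hc'
    have hpi : 0 < ε ^ (i : ℕ) := pow_pos hε0 _
    have h1 : ε ^ (j : ℕ) ≤ ε ^ (i : ℕ) * ε := by
      rw [← pow_succ]
      exact pow_le_pow_of_le_one hε0.le (by linarith) (Nat.succ_le_of_lt hij)
    calc d j * ε ^ (j : ℕ) ≤ 2 * (ε ^ (i : ℕ) * ε) :=
          mul_le_mul (hd j).2.le h1 (pow_pos hε0 _).le (by norm_num)
      _ < 1 / 2 * ε ^ (i : ℕ) := by nlinarith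
      _ ≤ d i * ε ^ (i : ℕ) := mul_le_mul_of_nonneg_right (hd i).1.le hpi.le
  refine ⟨Δ, ⟨fun i j hij => by rw [hΔ, diagonal_apply_ne _ hij], fun i => ?_⟩, fun i j hij => ?_,
    normM p • y, smul_mem_of_stab hpL hy, ?_⟩
  · rw [hΔe]
    exact mul_pos hc' (mul_pos (hdpos i) (pow_pos hε0 _))
  · rcases lt_or_gt_of_ne hij with h1 | h1
    · exact (hlt i j h1).ne'
    · exact (hlt j i h1).ne
  · simp only [Δ]
    rw [mul_smul, inv_smul_smul, mul_smul, mul_smul, hret]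

end Quotient

/-! ### The single orbit -/

/-- For a lattice `Γ` in `G = SL_n(ℝ)` and a compact `A`-minimal set `Y ⊆ G/Γ`: if for
every root `α` there is an `A_α`-minimal subset `Y_α ⊆ Y` with `A•Y_α = Y`, then `Y` is a
single (compact) `A`-orbit. -/
theorem statement_11 (n : ℕ) (hn : 2 ≤ n) (Γ : Subgroup (SLR n)) (hΓ : IsLattice Γ)
    (Y : Set (SLR n ⧸ Γ)) (hYc : IsCompact Y) (hYmin : IsMinimalOn (posDiag n) Y)
    (h : ∀ (i j : Fin n), i ≠ j →
      ∃ Yα ⊆ Y, IsCompact Yα ∧ IsMinimalOn (rootKer n i j) Yα ∧ posDiag n • Yα = Y) :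
    ∃ x : SLR n ⧸ Γ, Y = (· • x) '' posDiag n := by
  have := hΓ.1
  let L := MulAction.stabilizer (SLR n) Y
  let R := retSet (SLR n) Y
  let r : Fin n → Fin n → Prop := fun i j => ∀ (hij : i ≠ j) (s : ℝ), elemU n hij s ∈ L
  have hr : ∀ i, r i i := fun i hi => absurd rfl hi
  have ht : ∀ i j k, r i j → r j k → r i k := rel_trans
  have hA : posDiag n ⊆ L := fun a ha => hYmin.2.1 a ha
  have hRc : IsClosed R := isClosed_retSet hYc hYc.isClosed
  have hLR : ∀ l ∈ L, ∀ g ∈ R, l * g ∈ R := fun l hl g hg => retSet_mul_left hl hg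
  have hRA : ∀ v, ∀ g ∈ R, dgm v * g * (dgm v)⁻¹ ∈ R := fun v g hg =>
    retSet_mul_right (L.inv_mem (hA (dgm_mem v))) (hLR _ (hA (dgm_mem v)) _ hg)
  have hno : ∀ (i j : Fin n) (hij : i ≠ j) (s : ℝ), s ≠ 0 → elemU n hij s ∈ R → r i j := by
    intro i j hij s hs hu hij' x
    have hinv := elemU_invariance hYc hYmin hij (h i j hij) hs hu
    refine Set.Subset.antisymm ?_ fun y hy => ?_
    · rintro _ ⟨y, hy, rfl⟩; exact hinv x y hy
    · refine ⟨elemU n hij (-x) • y, hinv (-x) y hy, ?_⟩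
      change elemU n hij x • elemU n hij (-x) • y = y
      rw [elemU_neg, smul_inv_smul]
  have hL := supported_mem hA ht fun i j h => h
  have hR := near_supported hr hRc hRA hLR hL hno
  obtain ⟨d, hd, hreg, z, hz, hdz⟩ := exists_regular_fixed hr ht hYc hYmin hL hR
  exact ⟨z, orbit_of_regular hYmin hd hreg hz hdz⟩
end

section
/- Let Y ⊆ X be a compact A-minimal subset. The following three statements are equivalent: (a) Y is a single (compact) A-orbit; (b) for every root α, every A_α-minimal subset Y_α ⊆ Y satisfies A·Y_α = Y; (c) for every root α, there exists an A_α-minimal subset Y_α ⊆ Y such that A·Y_α = Y. -/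
/-!
Only (c) ⇒ (a) has content: (a) ⇒ (b) holds because a nonempty subset of an `A`-orbit has
`A`-saturation the whole orbit, and (b) ⇒ (c) because `A_α`-minimal subsets exist by Zorn's lemma.

Assume (c).

* **Root displacements are invariances** (`root_invariant`). If `u_α(s) y ∈ Y` for one `y ∈ Y` and
  one `s ≠ 0`, then the whole root group `U_α` preserves `Y`. By (c) the point `y` may be moved by
  `A` into the `A_α`-minimal set `Z`; since `A_α` commutes with `U_α`, `u_α(s) Z` is an
  `A`-translate of `Z` by minimality, and a contraction argument shows that it is `Z` itself
  (`smul_eq_self`). So `Z` contains a `ℤ`-orbit in `U_α`, which rescaling by `A` refines to a full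
  `U_α`-orbit in `Y` (`full_unip_orbit`); `A`-minimality spreads this over `Y`.
* **The incidence group** (`inc`, `genH`). The pairs `(i, j)` whose root group preserves `Y`
  form, with the diagonal, a transitive relation `P` (commutator relation). Near `1`, matrices
  supported on `P` are products of elements of `A` and of these root groups (`inc_subset_genH`,
  by Gaussian elimination), so they preserve `Y`.
* **Small displacements lie in the incidence group** (`small_displacement`). Otherwise there are
  `g → 1` outside it with `y, g y ∈ Y`; a factor of the incidence group clears the entries in `P`
  (`exists_transversal`), and conjugating by suitable elements of `A` makes exactly one of the
  remaining entries have size one while all others tend to zero (`renormalize`). The limit is a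
  displacement inside `Y` by a root group not recorded in `P`, which contradicts the first point.
* **Closing** (`exists_fixed`). Recurrence of a regular one-parameter orbit in `Y` gives
  `d g x = x` with `d ∈ A` strongly regular, `x ∈ Y` and `g` small, hence `g` in the incidence
  group. A contraction argument inside that group diagonalizes `d g` (`diagonalize`), and so a
  regular `b ∈ A` fixes a point of `Y`.
* **Conclusion** (`orbit_of_fixed`). Then `b` fixes all of `Y` by minimality. If `y, g y ∈ Y` with
  `g` small, the commutator of `g` and `b` is a small element of the discrete stabilizer of `y`,
  so `g` commutes with `b` and lies in `A`. Hence `Y` is locally an `A`-orbit, and by minimality it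
  is a single orbit.

Limits are taken along ultrafilters, so that no subsequences have to be extracted.
-/


open Matrix MeasureTheory Pointwise

open Filter Topology

namespace DiagMin

/-! ### The topology of `SL_n(ℝ)` and its diagonal subgroups -/

instance instTG (n : ℕ) : IsTopologicalGroup (SLR n) :=
  (inferInstance : @IsTopologicalGroup (Matrix.SpecialLinearGroup (Fin n) ℝ)
    Matrix.SpecialLinearGroup.instTopologicalSpace _)

instance instT2 (n : ℕ) : T2Space (SLR n) :=
  inferInstanceAs (T2Space {A : Matrix (Fin n) (Fin n) ℝ // A.det = 1})

lemma tendsto_SLR {n : ℕ} {ι : Type*} {l : Filter ι} {f : ι → SLR n} {g : SLR n} :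
    Tendsto f l (𝓝 g) ↔ ∀ i j, Tendsto (fun k => (f k).1 i j) l (𝓝 (g.1 i j)) := by
  have h : Topology.IsInducing (fun g : SLR n => (g.1 : Matrix (Fin n) (Fin n) ℝ)) :=
    Topology.IsInducing.subtypeVal
  rw [h.tendsto_nhds_iff]
  refine Iff.trans tendsto_pi_nhds ?_
  refine forall_congr' fun i => ?_
  exact tendsto_pi_nhds

lemma continuous_entry {n : ℕ} (i j : Fin n) : Continuous fun g : SLR n => g.1 i j := by
  rw [continuous_iff_continuousAt]
  intro g
  exact (tendsto_SLR (l := 𝓝 g) (f := id)).1 tendsto_id i j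

lemma one_entry {n : ℕ} (i j : Fin n) : (1 : SLR n).1 i j = if i = j then 1 else 0 := by
  change (1 : Matrix (Fin n) (Fin n) ℝ) i j = _
  rw [Matrix.one_apply]

lemma mul_val {n : ℕ} (g h : SLR n) : (g * h).1 = g.1 * h.1 := rfl

lemma posDiag_eq {n : ℕ} {a : SLR n} (ha : a ∈ posDiag n) :
    a.1 = Matrix.diagonal fun i => a.1 i i := by
  ext i j
  by_cases h : i = j
  · subst h; simp
  · rw [Matrix.diagonal_apply_ne _ h, ha.1 i j h]

lemma posDiag_inv_eq {n : ℕ} {a : SLR n} (ha : a ∈ posDiag n) :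
    (a⁻¹).1 = Matrix.diagonal fun i => (a.1 i i)⁻¹ := by
  have h1 : a.1 * Matrix.diagonal (fun i => (a.1 i i)⁻¹) = 1 := by
    conv_lhs => rw [posDiag_eq ha]
    rw [Matrix.diagonal_mul_diagonal, ← Matrix.diagonal_one]
    congr 1
    ext i
    simpa using mul_inv_cancel₀ (ha.2 i).ne'
  have h2 : (a⁻¹).1 * a.1 = 1 := by
    rw [← mul_val, inv_mul_cancel]; rfl
  calc (a⁻¹).1 = (a⁻¹).1 * (a.1 * Matrix.diagonal (fun i => (a.1 i i)⁻¹)) := by rw [h1, mul_one]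
    _ = _ := by rw [← mul_assoc, h2, one_mul]

/-- The diagonal group `A` as a subgroup. -/
def diagA (n : ℕ) : Subgroup (SLR n) where
  carrier := posDiag n
  one_mem' := by
    refine ⟨fun i j h => ?_, fun i => ?_⟩
    · rw [one_entry, if_neg h]
    · rw [one_entry, if_pos rfl]; exact one_pos
  mul_mem' := by
    intro a b ha hb
    have : (a * b).1 = Matrix.diagonal fun i => a.1 i i * b.1 i i := by
      rw [mul_val, posDiag_eq ha, posDiag_eq hb, Matrix.diagonal_mul_diagonal]
      simp
    refine ⟨fun i j h => ?_, fun i => ?_⟩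
    · rw [this, Matrix.diagonal_apply_ne _ h]
    · rw [this, Matrix.diagonal_apply_eq]; exact mul_pos (ha.2 i) (hb.2 i)
  inv_mem' := by
    intro a ha
    have := posDiag_inv_eq ha
    refine ⟨fun i j h => ?_, fun i => ?_⟩
    · change (a⁻¹).1 i j = 0
      rw [this, Matrix.diagonal_apply_ne _ h]
    · change 0 < (a⁻¹).1 i i
      rw [this, Matrix.diagonal_apply_eq]; exact inv_pos.2 (ha.2 i)

lemma mem_diagA {n : ℕ} {a : SLR n} : a ∈ diagA n ↔ a ∈ posDiag n := Iff.rfl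

lemma mul_diag_entry {n : ℕ} {a b : SLR n} (ha : a ∈ diagA n) (i j : Fin n) :
    (a * b).1 i j = a.1 i i * b.1 i j := by
  rw [mul_val]
  conv_lhs => rw [posDiag_eq ha]
  rw [Matrix.diagonal_mul]

lemma diag_mul_entry {n : ℕ} {a b : SLR n} (ha : a ∈ diagA n) (i j : Fin n) :
    (b * a).1 i j = b.1 i j * a.1 j j := by
  rw [mul_val]
  conv_lhs => rw [posDiag_eq ha]
  rw [Matrix.mul_diagonal]

lemma inv_entry {n : ℕ} {a : SLR n} (ha : a ∈ diagA n) (i : Fin n) :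
    (a⁻¹).1 i i = (a.1 i i)⁻¹ := by
  rw [posDiag_inv_eq ha, Matrix.diagonal_apply_eq]

lemma conj_entry {n : ℕ} {a g : SLR n} (ha : a ∈ diagA n) (i j : Fin n) :
    (a * g * a⁻¹).1 i j = a.1 i i * g.1 i j * (a.1 j j)⁻¹ := by
  rw [diag_mul_entry (inv_mem ha), mul_diag_entry ha, inv_entry ha]

lemma diagA_comm {n : ℕ} {a b : SLR n} (ha : a ∈ diagA n) (hb : b ∈ diagA n) :
    a * b = b * a := by
  apply Subtype.ext
  ext i j
  rw [mul_diag_entry ha, diag_mul_entry ha]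
  by_cases h : i = j
  · subst h; ring
  · rw [hb.1 i j h]; ring

/-- The kernel `A_α` as a subgroup. -/
def kerA (n : ℕ) (i j : Fin n) : Subgroup (SLR n) where
  carrier := rootKer n i j
  one_mem' := ⟨(diagA n).one_mem, by rw [one_entry, one_entry, if_pos rfl, if_pos rfl]⟩
  mul_mem' := by
    intro a b ha hb
    refine ⟨(diagA n).mul_mem ha.1 hb.1, ?_⟩
    rw [mul_diag_entry ha.1, mul_diag_entry ha.1, ha.2, hb.2]
  inv_mem' := by
    intro a ha
    refine ⟨(diagA n).inv_mem ha.1, ?_⟩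
    change (a⁻¹).1 i i = (a⁻¹).1 j j
    rw [inv_entry ha.1, inv_entry ha.1, ha.2]

lemma kerA_le {n : ℕ} {i j : Fin n} {a : SLR n} (ha : a ∈ kerA n i j) : a ∈ diagA n := ha.1

lemma elemU_entry {n : ℕ} {i j : Fin n} (hij : i ≠ j) (s : ℝ) (k l : Fin n) :
    (elemU n hij s).1 k l = (if k = l then 1 else 0) + if i = k ∧ j = l then s else 0 := by
  change Matrix.transvection i j s k l = _
  rw [Matrix.transvection, Matrix.add_apply, Matrix.one_apply, Matrix.single_apply]

lemma elemU_zero {n : ℕ} {i j : Fin n} (hij : i ≠ j) : elemU n hij 0 = 1 := by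
  apply Subtype.ext
  ext k l
  rw [elemU_entry, one_entry]; simp

lemma elemU_add {n : ℕ} {i j : Fin n} (hij : i ≠ j) (s t : ℝ) :
    elemU n hij s * elemU n hij t = elemU n hij (s + t) := by
  apply Subtype.ext
  exact Matrix.transvection_mul_transvection_same i j hij s t

lemma elemU_inv {n : ℕ} {i j : Fin n} (hij : i ≠ j) (s : ℝ) :
    (elemU n hij s)⁻¹ = elemU n hij (-s) := by
  rw [inv_eq_iff_mul_eq_one, elemU_add, add_neg_cancel, elemU_zero]

lemma continuous_elemU {n : ℕ} {i j : Fin n} (hij : i ≠ j) : Continuous (elemU n hij) := by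
  rw [continuous_iff_continuousAt]
  intro s
  refine tendsto_SLR.2 fun k l => ?_
  simp only [elemU_entry]
  refine Tendsto.add tendsto_const_nhds ?_
  split_ifs
  · exact tendsto_id
  · exact tendsto_const_nhds

/-- The defining relation `a u_α(s) a⁻¹ = u_α(α(a) s)` of the root group. -/
lemma conj_elemU {n : ℕ} {i j : Fin n} (hij : i ≠ j) {a : SLR n} (ha : a ∈ diagA n) (s : ℝ) :
    a * elemU n hij s = elemU n hij (a.1 i i / a.1 j j * s) * a := by
  apply Subtype.ext
  ext k l
  rw [mul_diag_entry ha, diag_mul_entry ha, elemU_entry, elemU_entry]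
  have h := (ha.2 j).ne'
  by_cases h1 : i = k ∧ j = l
  · obtain ⟨rfl, rfl⟩ := h1
    simp [hij]
    field_simp
  · rw [if_neg h1, if_neg h1]
    by_cases h2 : k = l
    · subst h2; ring
    · simp [h2]

lemma commutator_elemU {n : ℕ} {i j k : Fin n} (hij : i ≠ j) (hjk : j ≠ k) (hik : i ≠ k) (s : ℝ) :
    elemU n hij s * elemU n hjk 1 * elemU n hij (-s) * elemU n hjk (-1) = elemU n hik s := by
  apply Subtype.ext
  change (1 + single i j s) * (1 + single j k 1) * (1 + single i j (-s)) * (1 + single j k (-1)) =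
    1 + single i k s
  simp only [mul_add, add_mul, one_mul, mul_one, single_mul_single_same,
    single_mul_single_of_ne _ _ _ _ hjk.symm, single_mul_single_of_ne _ _ _ _ hij.symm,
    single_mul_single_of_ne _ _ _ _ hik.symm, add_zero, mul_neg]
  have e1 : (single i j (-s) : Matrix (Fin n) (Fin n) ℝ) = - single i j s := by
    ext a b; simp [single_apply]; split_ifs <;> simp
  have e2 : (single j k (-1) : Matrix (Fin n) (Fin n) ℝ) = - single j k 1 := by
    ext a b; simp [single_apply]; split_ifs <;> simp
  have e3 : (single i k (-s) : Matrix (Fin n) (Fin n) ℝ) = - single i k s := by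
    ext a b; simp [single_apply]; split_ifs <;> simp
  simp only [e1, e2, e3, neg_neg]
  abel

/-- The diagonal matrix with entries `exp (h i)`, where `∑ h i = 0`: the exponential
parametrization of `A`. -/
noncomputable def expA {n : ℕ} (h : Fin n → ℝ) (hs : ∑ i, h i = 0) : SLR n :=
  ⟨Matrix.diagonal fun i => Real.exp (h i), by
    rw [Matrix.det_diagonal, ← Real.exp_sum, hs, Real.exp_zero]⟩

lemma expA_entry {n : ℕ} (h : Fin n → ℝ) (hs : ∑ i, h i = 0) (i : Fin n) :
    (expA h hs).1 i i = Real.exp (h i) := by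
  change Matrix.diagonal _ i i = _
  rw [Matrix.diagonal_apply_eq]

lemma expA_mem {n : ℕ} (h : Fin n → ℝ) (hs : ∑ i, h i = 0) : expA h hs ∈ diagA n := by
  refine ⟨fun i j hij => ?_, fun i => ?_⟩
  · change Matrix.diagonal _ i j = _
    rw [Matrix.diagonal_apply_ne _ hij]
  · rw [expA_entry]; exact Real.exp_pos _

/-! ### Minimal sets -/

section Minimal

variable {G X : Type*} [Group G] [TopologicalSpace X] [MulAction G X]


lemma min_smul_mem {H : Subgroup G} {Z : Set X} (hZ : IsMinimalOn (H : Set G) Z) {g : G}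
    (hg : g ∈ H) {z : X} (hz : z ∈ Z) : g • z ∈ Z := by
  rw [← hZ.2.1 g hg]; exact ⟨z, hz, rfl⟩

lemma min_smul_eq {H : Subgroup G} {Z : Set X} (hZ : IsMinimalOn (H : Set G) Z) {g : G}
    (hg : g ∈ H) : g • Z = Z := hZ.2.1 g hg

lemma min_subset {H : Subgroup G} {Z F : Set X} (hZ : IsMinimalOn (H : Set G) Z)
    (hF : IsClosed F) {z : X} (hz : z ∈ Z) (h : ∀ g ∈ H, g • z ∈ F) : Z ⊆ F := by
  refine (hZ.2.2 z hz).trans (closure_minimal ?_ hF)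
  rintro _ ⟨g, hg, rfl⟩
  exact h g hg

lemma min_eq {H : Subgroup G} {Z W : Set X} (hZ : IsMinimalOn (H : Set G) Z)
    (hW : IsMinimalOn (H : Set G) W) (hZc : IsClosed Z) (hWc : IsClosed W) {z : X}
    (hz : z ∈ Z) (hw : z ∈ W) : Z = W :=
  (min_subset hZ hWc hz fun _ hg => min_smul_mem hW hg hw).antisymm
    (min_subset hW hZc hw fun _ hg => min_smul_mem hZ hg hz)

lemma min_translate [ContinuousConstSMul G X] {H : Subgroup G} {Z : Set X} (hZ : IsMinimalOn (H : Set G) Z) (c : G)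
    (hc : ∀ g ∈ H, g * c = c * g) : IsMinimalOn (H : Set G) (c • Z) := by
  refine ⟨hZ.1.smul_set, fun g hg => ?_, ?_⟩
  · change g • c • Z = c • Z
    rw [smul_smul, hc g hg, ← smul_smul, min_smul_eq hZ hg]
  · rintro _ ⟨z, hz, rfl⟩
    have h1 : (fun x : G => x • c • z) '' (H : Set G) = c • ((fun x : G => x • z) '' (H : Set G)) := by
      rw [← Set.image_smul, Set.image_image]
      refine Set.image_congr fun g hg => ?_
      rw [smul_smul, hc g hg, ← smul_smul]
    change c • Z ⊆ closure ((fun x : G => x • c • z) '' (H : Set G))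
    rw [h1, closure_smul]
    exact Set.smul_set_mono (hZ.2.2 z hz)

/-- Every nonempty compact invariant set contains a minimal one (Zorn's lemma). -/
lemma exists_minimal [ContinuousConstSMul G X] [T2Space X] (H : Subgroup G) {Y : Set X} (hY : IsCompact Y)
    (hne : Y.Nonempty) (hinv : ∀ g ∈ H, ∀ y ∈ Y, g • y ∈ Y) :
    ∃ Z ⊆ Y, IsCompact Z ∧ IsMinimalOn (H : Set G) Z := by
  let S : Set (Set X) := {Z | Z.Nonempty ∧ IsClosed Z ∧ Z ⊆ Y ∧ ∀ g ∈ H, ∀ y ∈ Z, g • y ∈ Z}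
  obtain ⟨Z, hZY, hZ⟩ := zorn_superset_nonempty S (by
    intro c hcS hc hcne
    refine ⟨⋂₀ c, ⟨?_, isClosed_sInter fun s hs => (hcS hs).2.1, ?_, ?_⟩,
      fun s hs => Set.sInter_subset_of_mem hs⟩
    · have : Nonempty c := hcne.to_subtype
      rw [Set.sInter_eq_iInter]
      refine IsCompact.nonempty_iInter_of_directed_nonempty_isCompact_isClosed _ ?_
        (fun s => (hcS s.2).1) (fun s => hY.of_isClosed_subset (hcS s.2).2.1 (hcS s.2).2.2.1)
        (fun s => (hcS s.2).2.1)
      intro s t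
      rcases hc.total s.2 t.2 with h | h
      · exact ⟨s, le_refl _, h⟩
      · exact ⟨t, h, le_refl _⟩
    · obtain ⟨s, hs⟩ := hcne
      exact (Set.sInter_subset_of_mem hs).trans (hcS hs).2.2.1
    · intro g hg y hy s hs
      exact (hcS hs).2.2.2 g hg y (hy s hs)) Y ⟨hne, hY.isClosed, le_refl _, hinv⟩
  have hZS := hZ.prop
  refine ⟨Z, hZY, hY.of_isClosed_subset hZS.2.1 hZY, hZS.1, fun g hg => ?_, fun z hz => ?_⟩
  · refine Set.Subset.antisymm ?_ ?_
    · rintro _ ⟨z, hz, rfl⟩; exact hZS.2.2.2 g hg z hz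
    · intro z hz
      exact ⟨g⁻¹ • z, hZS.2.2.2 _ (inv_mem hg) z hz, smul_inv_smul g z⟩
  · set O := (fun x : G => x • z) '' (H : Set G) with hO
    have hOZ : closure O ⊆ Z := by
      refine closure_minimal ?_ hZS.2.1
      rintro _ ⟨g, hg, rfl⟩; exact hZS.2.2.2 g hg z hz
    refine hZ.le_of_le ⟨⟨z, subset_closure ⟨1, one_mem H, one_smul G z⟩⟩, isClosed_closure,
      hOZ.trans hZY, fun g hg y hy => ?_⟩ hOZ
    have : g • closure O = closure O := by
      rw [← closure_smul]
      congr 1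
      refine Set.Subset.antisymm ?_ ?_
      · rintro _ ⟨_, ⟨k, hk, rfl⟩, rfl⟩
        exact ⟨g * k, mul_mem hg hk, mul_smul g k z⟩
      · rintro _ ⟨k, hk, rfl⟩
        refine ⟨(g⁻¹ * k) • z, ⟨g⁻¹ * k, mul_mem (inv_mem hg) hk, rfl⟩, ?_⟩
        change g • (g⁻¹ * k) • z = k • z
        rw [smul_smul, mul_inv_cancel_left]
    rw [← this]
    exact ⟨y, hy, rfl⟩

end Minimal

lemma exists_ultra_lim {ι X : Type*} [TopologicalSpace X] (𝒰 : Ultrafilter ι) {Y : Set X}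
    (hY : IsCompact Y) {f : ι → X} (h : ∀ᶠ k in (𝒰 : Filter ι), f k ∈ Y) :
    ∃ y ∈ Y, Tendsto f 𝒰 (𝓝 y) := by
  obtain ⟨y, hy, hlim⟩ := hY.ultrafilter_le_nhds (𝒰.map f) (Filter.le_principal_iff.2 h)
  exact ⟨y, hy, hlim⟩

/-! ### Unipotent displacements inside `Y` -/

section Unipotent

variable {n : ℕ} {X : Type*} [TopologicalSpace X] [MulAction (SLR n) X]
  [ContinuousSMul (SLR n) X]

lemma pow_conj_elemU {i j : Fin n} (hij : i ≠ j) {d : SLR n} (hd : d ∈ diagA n) (s : ℝ) (k : ℕ) :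
    d ^ k * elemU n hij s = elemU n hij ((d.1 i i / d.1 j j) ^ k * s) * d ^ k := by
  induction k generalizing s with
  | zero => simp
  | succ k ih =>
    rw [pow_succ, mul_assoc, conj_elemU hij hd, ← mul_assoc, ih, mul_assoc, pow_succ]
    congr 2
    ring

/-- If `d ∈ A` contracts `U_α` and preserves the closed set `W`, and `W` meets `U_α Y`, then `W`
already meets `Y`: forward `d`-orbits on a common `U_α`-orbit are asymptotic. -/
lemma meets_of_contract {i j : Fin n} (hij : i ≠ j) {d : SLR n} (hd : d ∈ diagA n)
    (hq : d.1 i i / d.1 j j < 1) {Y W : Set X} (hY : IsCompact Y)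
    (hYinv : ∀ g ∈ diagA n, ∀ y ∈ Y, g • y ∈ Y) (hW : IsClosed W) (hdW : ∀ w ∈ W, d • w ∈ W)
    {z : X} (hz : z ∈ Y) {r : ℝ} (hr : elemU n hij r • z ∈ W) : ∃ y ∈ Y, y ∈ W := by
  have hq0 : 0 ≤ d.1 i i / d.1 j j := (div_pos (hd.2 i) (hd.2 j)).le
  have hkY : ∀ k : ℕ, d ^ k • z ∈ Y := fun k => hYinv _ (pow_mem hd k) z hz
  have hkW : ∀ k : ℕ, d ^ k • elemU n hij r • z ∈ W := by
    intro k
    induction k with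
    | zero => simpa using hr
    | succ k ih => rw [pow_succ', mul_smul]; exact hdW _ ih
  let 𝒰 : Ultrafilter ℕ := Ultrafilter.of atTop
  have hle : (𝒰 : Filter ℕ) ≤ atTop := Ultrafilter.of_le _
  obtain ⟨y, hy, h1⟩ := exists_ultra_lim 𝒰 hY (f := fun k : ℕ => d ^ k • z)
    (Filter.Eventually.of_forall hkY)
  refine ⟨y, hy, ?_⟩
  have h2 : Tendsto (fun k : ℕ => elemU n hij ((d.1 i i / d.1 j j) ^ k * r)) 𝒰 (𝓝 1) := by
    rw [← elemU_zero hij]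
    refine ((continuous_elemU hij).tendsto 0).comp ?_
    have := (tendsto_pow_atTop_nhds_zero_of_lt_one hq0 hq).mul_const r
    rw [zero_mul] at this
    exact this.mono_left hle
  have h3 := h2.smul h1
  rw [one_smul] at h3
  refine hW.mem_of_tendsto h3 (Filter.Eventually.of_forall fun k => ?_)
  rw [smul_smul, ← pow_conj_elemU hij hd, mul_smul]
  exact hkW k

/-- An element of `A` with `α(d) < 1`. -/
lemma exists_contract {i j : Fin n} (hij : i ≠ j) : ∃ d ∈ diagA n, d.1 i i / d.1 j j < 1 := by
  let h : Fin n → ℝ := Pi.single j 1 - Pi.single i 1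
  have hs : ∑ k, h k = 0 := by simp [h, Finset.sum_sub_distrib]
  refine ⟨expA h hs, expA_mem h hs, ?_⟩
  rw [expA_entry, expA_entry, ← Real.exp_sub, Real.exp_lt_one_iff]
  simp [h, hij, hij.symm]

/-- Rescaling by `A` refines a discrete `U_α`-suborbit to a full one. -/
lemma full_unip_orbit [T2Space X] {i j : Fin n} (hij : i ≠ j) {Y : Set X} (hY : IsCompact Y)
    (hYinv : ∀ g ∈ diagA n, ∀ y ∈ Y, g • y ∈ Y) {z : X} (hz : z ∈ Y) {s : ℝ} (hs : s ≠ 0)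
    (h : ∀ m : ℤ, elemU n hij (m * s) • z ∈ Y) : ∃ y ∈ Y, ∀ r, elemU n hij r • y ∈ Y := by
  obtain ⟨d, hd, hq⟩ := exists_contract hij
  have hq0 : 0 < d.1 i i / d.1 j j := div_pos (hd.2 i) (hd.2 j)
  set q := d.1 i i / d.1 j j with hqdef
  have hkY : ∀ k : ℕ, d ^ k • z ∈ Y := fun k => hYinv _ (pow_mem hd k) z hz
  let 𝒰 : Ultrafilter ℕ := Ultrafilter.of atTop
  have hle : (𝒰 : Filter ℕ) ≤ atTop := Ultrafilter.of_le _
  obtain ⟨y, hy, h1⟩ := exists_ultra_lim 𝒰 hY (f := fun k : ℕ => d ^ k • z)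
    (Filter.Eventually.of_forall hkY)
  refine ⟨y, hy, fun r => ?_⟩
  let m : ℕ → ℤ := fun k => ⌊r / (q ^ k * s)⌋
  have hm : Tendsto (fun k : ℕ => q ^ k * (m k * s)) atTop (𝓝 r) := by
    have h0 : Tendsto (fun k : ℕ => q ^ k * |s|) atTop (𝓝 0) := by
      have := (tendsto_pow_atTop_nhds_zero_of_lt_one hq0.le hq).mul_const |s|
      rwa [zero_mul] at this
    rw [tendsto_iff_norm_sub_tendsto_zero]
    refine squeeze_zero (fun _ => norm_nonneg _) (fun k => ?_) h0
    have hqs : q ^ k * s ≠ 0 := mul_ne_zero (pow_pos hq0 k).ne' hs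
    have e : q ^ k * (m k * s) - r = (q ^ k * s) * ((m k : ℝ) - r / (q ^ k * s)) := by
      field_simp
    rw [e, Real.norm_eq_abs, abs_mul, abs_mul, abs_of_pos (pow_pos hq0 k)]
    have h3 : |(m k : ℝ) - r / (q ^ k * s)| ≤ 1 := by
      rw [abs_le]
      constructor
      · linarith [Int.lt_floor_add_one (r / (q ^ k * s))]
      · linarith [Int.floor_le (r / (q ^ k * s))]
    exact mul_le_of_le_one_right (by positivity) h3
  have h2 : Tendsto (fun k : ℕ => elemU n hij (q ^ k * (m k * s))) 𝒰 (𝓝 (elemU n hij r)) :=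
    ((continuous_elemU hij).tendsto r).comp (hm.mono_left hle)
  refine hY.isClosed.mem_of_tendsto (h2.smul h1) (Filter.Eventually.of_forall fun k => ?_)
  rw [smul_smul, hqdef, ← pow_conj_elemU hij hd, mul_smul]
  exact hYinv _ (pow_mem hd k) _ (h (m k))

lemma kerA_comm_elemU {i j : Fin n} (hij : i ≠ j) {a : SLR n} (ha : a ∈ kerA n i j) (s : ℝ) :
    a * elemU n hij s = elemU n hij s * a := by
  rw [conj_elemU hij ha.1, ha.2, div_self (ha.1.2 j).ne', one_mul]

/-- If `u_α(s) Z = a Z` for an `A_α`-minimal `Z`, then in fact `u_α(s) Z = Z`. When `α(a) ≠ 1`,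
`a⁻¹ u_α(s)` is `U_α`-conjugate to `a⁻¹`, so some translate `v⁻¹ Z` with `v ∈ U_α` is
`a`-invariant; by contraction it meets `Y`, hence is an `A`-translate of `Z`. -/
lemma smul_eq_self [T2Space X] {i j : Fin n} (hij : i ≠ j) {Y Z : Set X} (hY : IsCompact Y)
    (hYinv : ∀ g ∈ diagA n, ∀ y ∈ Y, g • y ∈ Y) (hZY : Z ⊆ Y) (hZc : IsCompact Z)
    (hZ : IsMinimalOn (kerA n i j : Set (SLR n)) Z)
    (hAZ : ∀ y ∈ Y, ∃ a ∈ diagA n, ∃ z ∈ Z, a • z = y) {a : SLR n} (ha : a ∈ diagA n) {s : ℝ}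
    (h : elemU n hij s • Z = a • Z) : elemU n hij s • Z = Z := by
  rw [h]
  have hai := ha.2 i
  have haj := ha.2 j
  by_cases h1 : a.1 i i = a.1 j j
  · exact min_smul_eq hZ (show a ∈ kerA n i j from ⟨ha, h1⟩)
  set q := a.1 i i / a.1 j j with hq
  have hq1 : q - 1 ≠ 0 := by
    rw [hq, sub_ne_zero]
    intro h2
    exact h1 ((div_eq_one_iff_eq haj.ne').1 h2)
  -- `u_α(s) u_α(r) = a u_α(r) a⁻¹` determines `r`.
  obtain ⟨r, hr⟩ : ∃ r, s + r = q * r := ⟨s / (q - 1), by field_simp; ring⟩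
  set v := elemU n hij r with hv
  have hWa : a • v⁻¹ • Z = v⁻¹ • Z := by
    have e1 : a * v⁻¹ = v⁻¹ * (elemU n hij (-s) * a) := by
      rw [hv, elemU_inv, conj_elemU hij ha, ← mul_assoc, elemU_add]
      congr 2
      rw [← hq]; linarith
    rw [smul_smul, e1, mul_smul, mul_smul, ← h, smul_smul (elemU n hij (-s)), elemU_add,
      neg_add_cancel, elemU_zero, one_smul]
  have hWa' : a⁻¹ • v⁻¹ • Z = v⁻¹ • Z := by
    conv_lhs => rw [← hWa]
    rw [inv_smul_smul]
  have hWc : IsClosed (v⁻¹ • Z) := hZc.isClosed.smul _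
  obtain ⟨z, hz⟩ := hZ.1
  have hzW : elemU n hij (-r) • z ∈ v⁻¹ • Z := by
    rw [hv, elemU_inv]; exact ⟨z, hz, rfl⟩
  obtain ⟨y, hy, hyW⟩ : ∃ y ∈ Y, y ∈ v⁻¹ • Z := by
    rcases lt_or_gt_of_ne h1 with hlt | hgt
    · refine meets_of_contract hij ha ((div_lt_one haj).2 hlt) hY hYinv hWc (fun w hw => ?_)
        (hZY hz) hzW
      rw [← hWa]; exact ⟨w, hw, rfl⟩
    · refine meets_of_contract hij (inv_mem ha) ?_ hY hYinv hWc (fun w hw => ?_)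
        (hZY hz) hzW
      · rw [inv_entry ha, inv_entry ha, inv_div_inv]
        exact (div_lt_one hai).2 hgt
      · rw [← hWa']; exact ⟨w, hw, rfl⟩
  obtain ⟨b, hb, z', hz', rfl⟩ := hAZ y hy
  have hWb : v⁻¹ • Z = b • Z := by
    refine min_eq (H := kerA n i j) (min_translate hZ _ fun g hg => ?_)
      (min_translate hZ _ fun g hg => diagA_comm hg.1 hb) hWc (hZc.isClosed.smul _) hyW
      ⟨z', hz', rfl⟩
    rw [hv, elemU_inv, kerA_comm_elemU hij hg]
  rw [hWb, smul_smul, diagA_comm ha hb, mul_smul] at hWa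
  exact smul_left_cancel b hWa

/-- One pair of distinct points of `Y` on a common `U_α`-orbit forces `Y` to be `U_α`-invariant. -/
lemma root_invariant [T2Space X] {i j : Fin n} (hij : i ≠ j) {Y Z : Set X} (hY : IsCompact Y)
    (hYmin : IsMinimalOn (diagA n : Set (SLR n)) Y) (hZY : Z ⊆ Y) (hZc : IsCompact Z)
    (hZ : IsMinimalOn (kerA n i j : Set (SLR n)) Z)
    (hAZ : ∀ y ∈ Y, ∃ a ∈ diagA n, ∃ z ∈ Z, a • z = y) {y : X} (hy : y ∈ Y) {s : ℝ} (hs : s ≠ 0)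
    (hsy : elemU n hij s • y ∈ Y) : ∀ r, ∀ y ∈ Y, elemU n hij r • y ∈ Y := by
  have hYinv : ∀ g ∈ diagA n, ∀ y ∈ Y, g • y ∈ Y := fun g hg y hy => min_smul_mem hYmin hg hy
  obtain ⟨a, ha, z, hz, rfl⟩ := hAZ y hy
  set t := (a⁻¹).1 i i / (a⁻¹).1 j j * s with ht
  have ht0 : t ≠ 0 :=
    mul_ne_zero (div_pos ((inv_mem ha : a⁻¹ ∈ diagA n).2 i) ((inv_mem ha : a⁻¹ ∈ diagA n).2 j)).ne' hs
  have hty : elemU n hij t • z ∈ Y := by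
    have := hYinv _ (inv_mem ha) _ hsy
    rwa [smul_smul, smul_smul, conj_elemU hij (inv_mem ha), mul_assoc, inv_mul_cancel, mul_one]
      at this
  obtain ⟨b, hb, z', hz', hbz⟩ := hAZ _ hty
  have hub : elemU n hij t • Z = b • Z := by
    refine min_eq (H := kerA n i j) (min_translate hZ _ fun g hg => kerA_comm_elemU hij hg t)
      (min_translate hZ _ fun g hg => diagA_comm hg.1 hb) (hZc.isClosed.smul _)
      (hZc.isClosed.smul _) ⟨z, hz, rfl⟩ ?_
    change elemU n hij t • z ∈ b • Z
    rw [← hbz]; exact ⟨z', hz', rfl⟩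
  have huZ := smul_eq_self hij hY hYinv hZY hZc hZ hAZ hb hub
  have hstab : ∀ m : ℤ, elemU n hij (m * t) • Z = Z := by
    have h1 : elemU n hij t ∈ MulAction.stabilizer (SLR n) Z := huZ
    intro m
    have h2 : elemU n hij (m * t) = elemU n hij t ^ m := by
      have hadd : ∀ a b : ℝ, elemU n hij (a + b) = elemU n hij a * elemU n hij b :=
        fun a b => (elemU_add hij a b).symm
      induction m using Int.induction_on with
      | zero => simp [elemU_zero]
      | succ k ih =>
        rw [_root_.zpow_add_one, ← ih, elemU_add]; congr 1; push_cast; ring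
      | pred k ih =>
        rw [_root_.zpow_sub_one, ← ih, elemU_inv, elemU_add]; congr 1; push_cast; ring
    rw [h2]
    exact zpow_mem h1 m
  obtain ⟨w, hw, hwr⟩ := full_unip_orbit hij hY hYinv (hZY hz) ht0 fun m => hZY (by
    have : elemU n hij (m * t) • z ∈ elemU n hij (m * t) • Z := ⟨z, hz, rfl⟩
    rwa [hstab m] at this)
  -- The points whose whole `U_α`-orbit lies in `Y` form a closed `A`-invariant set.
  have hsub : Y ⊆ ⋂ r, (fun y : X => elemU n hij r • y) ⁻¹' Y := by
    refine min_subset hYmin (isClosed_iInter fun r => hY.isClosed.preimage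
      (continuous_const_smul _)) hw fun g hg => Set.mem_iInter.2 fun r => ?_
    have e : elemU n hij r * g = g * elemU n hij ((g⁻¹).1 i i / (g⁻¹).1 j j * r) := by
      have := conj_elemU hij (inv_mem hg) r
      rw [← mul_right_inj g⁻¹, inv_mul_cancel_left, ← mul_assoc, this, mul_assoc, inv_mul_cancel,
        mul_one]
    change elemU n hij r • g • w ∈ Y
    rw [smul_smul, e, mul_smul]
    exact hYinv g hg _ (hwr _)
  exact fun r y hy => Set.mem_iInter.1 (hsub hy) r

end Unipotent

/-! ### Incidence groups of preorders -/

section Incidence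

variable {n : ℕ} (P : Fin n → Fin n → Prop)

/-- Matrices in `SL_n(ℝ)` supported on the relation `P`. For `P` a preorder this is the group
generated, near the identity, by `A` and the root groups `U_{ij}` with `P i j`. -/
def inc : Set (SLR n) := {g | ∀ i j, ¬ P i j → g.1 i j = 0}

variable {P}

lemma inc_mul (hT : ∀ i j k, P i j → P j k → P i k) {g h : SLR n} (hg : g ∈ inc P)
    (hh : h ∈ inc P) : g * h ∈ inc P := by
  intro i j hij
  rw [mul_val, Matrix.mul_apply]
  refine Finset.sum_eq_zero fun k _ => ?_
  by_cases h1 : P i k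
  · by_cases h2 : P k j
    · exact absurd (hT i k j h1 h2) hij
    · rw [hh k j h2, mul_zero]
  · rw [hg i k h1, zero_mul]

lemma diag_inc (hR : ∀ i, P i i) {a : SLR n} (ha : a ∈ diagA n) : a ∈ inc P := by
  intro i j hij
  refine ha.1 i j ?_
  rintro rfl
  exact hij (hR i)

lemma elemU_inc (hR : ∀ i, P i i) {i j : Fin n} (hij : i ≠ j) (hP : P i j) (s : ℝ) :
    elemU n hij s ∈ inc P := by
  intro k l hkl
  rw [elemU_entry]
  have h1 : k ≠ l := by rintro rfl; exact hkl (hR k)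
  have h2 : ¬ (i = k ∧ j = l) := by rintro ⟨rfl, rfl⟩; exact hkl hP
  rw [if_neg h1, if_neg h2, add_zero]

variable (P) in
/-- The subgroup generated by `A` and the root groups `U_{ij}` with `P i j`. -/
def genH : Subgroup (SLR n) :=
  Subgroup.closure ((diagA n : Set (SLR n)) ∪
    {g | ∃ (i j : Fin n) (hij : i ≠ j) (s : ℝ), P i j ∧ g = elemU n hij s})

lemma diag_genH {a : SLR n} (ha : a ∈ diagA n) : a ∈ genH P :=
  Subgroup.subset_closure (Or.inl ha)

lemma elemU_genH {i j : Fin n} (hij : i ≠ j) (hP : P i j) (s : ℝ) : elemU n hij s ∈ genH P :=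
  Subgroup.subset_closure (Or.inr ⟨i, j, hij, s, hP, rfl⟩)

lemma genH_inc (hR : ∀ i, P i i) (hT : ∀ i j k, P i j → P j k → P i k) {g : SLR n}
    (hg : g ∈ genH P) : g ∈ inc P := by
  let K : Subgroup (SLR n) :=
    { carrier := {g | g ∈ inc P ∧ g⁻¹ ∈ inc P}
      one_mem' := ⟨diag_inc hR (one_mem _), by rw [inv_one]; exact diag_inc hR (one_mem _)⟩
      mul_mem' := by
        rintro a b ⟨ha, ha'⟩ ⟨hb, hb'⟩
        exact ⟨inc_mul hT ha hb, by rw [_root_.mul_inv_rev]; exact inc_mul hT hb' ha'⟩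
      inv_mem' := by
        rintro a ⟨ha, ha'⟩
        exact ⟨ha', by rw [inv_inv]; exact ha⟩ }
  have hle : genH P ≤ K := by
    refine (Subgroup.closure_le K).2 ?_
    rintro g (hg | ⟨i, j, hij, s, hP, rfl⟩)
    · exact ⟨diag_inc hR hg, diag_inc hR (inv_mem hg)⟩
    · exact ⟨elemU_inc hR hij hP s, by rw [elemU_inv]; exact elemU_inc hR hij hP _⟩
  exact (hle hg).1

lemma genH_smul {X : Type*} [MulAction (SLR n) X] {Y : Set X}
    (hA : ∀ g ∈ diagA n, ∀ y ∈ Y, g • y ∈ Y)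
    (hU : ∀ (i j : Fin n) (hij : i ≠ j), P i j → ∀ s, ∀ y ∈ Y, elemU n hij s • y ∈ Y)
    {g : SLR n} (hg : g ∈ genH P) : ∀ y ∈ Y, g • y ∈ Y := by
  let K : Subgroup (SLR n) :=
    { carrier := {g | (∀ y ∈ Y, g • y ∈ Y) ∧ ∀ y ∈ Y, g⁻¹ • y ∈ Y}
      one_mem' := by simp
      mul_mem' := by
        rintro a b ⟨ha, ha'⟩ ⟨hb, hb'⟩
        refine ⟨fun y hy => ?_, fun y hy => ?_⟩
        · rw [mul_smul]; exact ha _ (hb y hy)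
        · rw [_root_.mul_inv_rev, mul_smul]; exact hb' _ (ha' y hy)
      inv_mem' := by
        rintro a ⟨ha, ha'⟩
        exact ⟨ha', by rw [inv_inv]; exact ha⟩ }
  have hle : genH P ≤ K := by
    refine (Subgroup.closure_le K).2 ?_
    rintro g (hg | ⟨i, j, hij, s, hP, rfl⟩)
    · exact ⟨hA g hg, hA _ (inv_mem hg)⟩
    · exact ⟨hU i j hij hP s, by rw [elemU_inv]; exact hU i j hij hP _⟩
  exact (hle hg).1

lemma diag_of_near_one : ∀ᶠ g in 𝓝 (1 : SLR n), (∀ i j, i ≠ j → g.1 i j = 0) → g ∈ diagA n := by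
  have h : ∀ᶠ g in 𝓝 (1 : SLR n), ∀ i, 0 < g.1 i i := by
    rw [Filter.eventually_all]
    intro i
    refine (continuous_entry i i).continuousAt.eventually (lt_mem_nhds ?_)
    change 0 < (1 : SLR n).1 i i
    rw [one_entry, if_pos rfl]; exact one_pos
  filter_upwards [h] with g hg h0
  exact ⟨h0, hg⟩

/-- Near the identity, Gaussian elimination stays inside the incidence group of `P`: columns are
cleared from left to right, those of index `< c` and the first `r` entries of column `c` being
already clear off the diagonal. -/
lemma gauss_aux (hR : ∀ i, P i i) (hT : ∀ i j k, P i j → P j k → P i k) (m c r : ℕ)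
    (hm : (n - c) * (n + 1) + (n - r) = m) (hr : r ≤ n) :
    ∀ᶠ h in 𝓝 (1 : SLR n), h ∈ inc P →
      (∀ i j : Fin n, i ≠ j → ((j : ℕ) < c ∨ ((j : ℕ) = c ∧ (i : ℕ) < r)) → h.1 i j = 0) →
      h ∈ genH P := by
  induction m using Nat.strong_induction_on generalizing c r with
  | _ m ih =>
  by_cases hc : n ≤ c
  · filter_upwards [diag_of_near_one (n := n)] with h hd _ h0
    exact diag_genH (hd fun i j hij => h0 i j hij (Or.inl (lt_of_lt_of_le j.2 hc)))
  push Not at hc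
  rcases hr.eq_or_lt with rfl | hrn
  · -- column `c` is clear: pass to the next one
    obtain ⟨t, ht⟩ : ∃ t, r - c = t + 1 := ⟨r - c - 1, by omega⟩
    have ht' : r - (c + 1) = t := by omega
    refine (ih (t * (r + 1) + r) ?_ (c + 1) 0 (by rw [ht', Nat.sub_zero]) (Nat.zero_le _)).mono
      fun h hh hi h0 => hh hi fun i j hij hj => h0 i j hij ?_
    · rw [← hm, ht, Nat.sub_self]; ring_nf; omega
    · rcases hj with hj | hj
      · rcases Nat.lt_succ_iff_lt_or_eq.1 hj with h1 | h1
        · exact Or.inl h1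
        · exact Or.inr ⟨h1, i.2⟩
      · exact absurd hj.2 (Nat.not_lt_zero _)
  have hih := ih ((n - c) * (n + 1) + (n - (r + 1))) (by omega) c (r + 1) rfl hrn
  by_cases hrc : r = c
  · refine hih.mono fun h hh hi h0 => hh hi fun i j hij hj => h0 i j hij ?_
    rcases hj with hj | ⟨hj, hi'⟩
    · exact Or.inl hj
    · refine Or.inr ⟨hj, ?_⟩
      have : (i : ℕ) ≠ j := fun h => hij (Fin.ext h)
      omega
  set i0 : Fin n := ⟨r, hrn⟩ with hi0
  set k0 : Fin n := ⟨c, hc⟩ with hk0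
  have hik : i0 ≠ k0 := fun h => hrc (congrArg Fin.val h)
  let F : SLR n → SLR n := fun h => elemU n hik (-(h.1 i0 k0 / h.1 k0 k0)) * h
  have hF : Tendsto F (𝓝 1) (𝓝 1) := by
    have h1 : Tendsto (fun h : SLR n => -(h.1 i0 k0 / h.1 k0 k0)) (𝓝 1) (𝓝 0) := by
      have h2 : Tendsto (fun h : SLR n => h.1 i0 k0) (𝓝 1) (𝓝 0) := by
        have := (continuous_entry i0 k0).tendsto (1 : SLR n)
        rwa [one_entry, if_neg hik] at this
      have h3 : Tendsto (fun h : SLR n => h.1 k0 k0) (𝓝 1) (𝓝 1) := by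
        have := (continuous_entry k0 k0).tendsto (1 : SLR n)
        rwa [one_entry, if_pos rfl] at this
      have := (h2.div h3 one_ne_zero).neg
      simpa using this
    have h4 := ((continuous_elemU hik).tendsto 0).comp h1
    rw [elemU_zero] at h4
    have := h4.mul (tendsto_id (x := 𝓝 (1 : SLR n)))
    rwa [one_mul] at this
  have hne : ∀ᶠ h in 𝓝 (1 : SLR n), h.1 k0 k0 ≠ 0 := by
    refine (continuous_entry k0 k0).continuousAt.eventually_ne ?_
    rw [one_entry, if_pos rfl]; exact one_ne_zero
  filter_upwards [hF.eventually hih, hne] with h hh hk hi h0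
  set s := -(h.1 i0 k0 / h.1 k0 k0) with hs
  have hu : elemU n hik s ∈ genH P := by
    by_cases hP : P i0 k0
    · exact elemU_genH hik hP s
    · rw [hs, hi _ _ hP, zero_div, neg_zero, elemU_zero]; exact one_mem _
  have hent : ∀ i j, (F h).1 i j = h.1 i j + if i = i0 then s * h.1 k0 j else 0 := by
    intro i j
    change (elemU n hik s * h).1 i j = _
    rw [mul_val]
    change (Matrix.transvection i0 k0 s * h.1) i j = _
    by_cases hii : i = i0
    · subst hii
      rw [Matrix.transvection_mul_apply_same, if_pos rfl]
    · rw [Matrix.transvection_mul_apply_of_ne _ _ _ _ hii, if_neg hii, add_zero]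
  have hFh : F h ∈ genH P := by
    refine hh (inc_mul hT (genH_inc hR hT hu) hi) fun i j hij hj => ?_
    rw [hent]
    by_cases hii : i = i0
    · rw [if_pos hii, hii]
      rcases hj with hj | ⟨hj, -⟩
      · have hkj : k0 ≠ j := by rintro rfl; exact lt_irrefl _ hj
        rw [h0 i0 j (hii ▸ hij) (Or.inl hj), h0 k0 j hkj (Or.inl hj)]; ring
      · have : j = k0 := Fin.ext hj
        rw [this, hs]; field_simp; ring
    · rw [if_neg hii, add_zero]
      refine h0 i j hij (hj.imp id fun hj => ⟨hj.1, ?_⟩)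
      have : (i : ℕ) ≠ r := fun h => hii (Fin.ext h)
      omega
  have : h = (elemU n hik s)⁻¹ * F h := (inv_mul_cancel_left _ _).symm
  rw [this]
  exact mul_mem (inv_mem hu) hFh

lemma inc_subset_genH (hR : ∀ i, P i i) (hT : ∀ i j k, P i j → P j k → P i k) :
    ∀ᶠ h in 𝓝 (1 : SLR n), h ∈ inc P → h ∈ genH P := by
  refine (gauss_aux hR hT _ 0 0 rfl (Nat.zero_le _)).mono fun h hh hi => hh hi fun i j _ hj => ?_
  rcases hj with hj | hj
  · exact absurd hj (Nat.not_lt_zero _)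
  · exact absurd hj.2 (Nat.not_lt_zero _)

/-- Matrices near `1` can be rescaled into `SL_n(ℝ)`, continuously at `1`. -/
lemma exists_normalize (hn : n ≠ 0) :
    ∃ N : Matrix (Fin n) (Fin n) ℝ → SLR n, Tendsto N (𝓝 1) (𝓝 1) ∧
      ∀ᶠ M in 𝓝 (1 : Matrix (Fin n) (Fin n) ℝ), ∃ c : ℝ, c ≠ 0 ∧ (N M).1 = c • M := by
  classical
  have hdet : Continuous fun M : Matrix (Fin n) (Fin n) ℝ => M.det := continuous_id.matrix_det
  have hpos : ∀ᶠ M in 𝓝 (1 : Matrix (Fin n) (Fin n) ℝ), 0 < M.det := by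
    refine hdet.continuousAt.eventually (lt_mem_nhds ?_)
    change 0 < (1 : Matrix (Fin n) (Fin n) ℝ).det
    rw [Matrix.det_one]; exact one_pos
  let e : ℝ := -(1 / n : ℝ)
  have key : ∀ M : Matrix (Fin n) (Fin n) ℝ, 0 < M.det → ((M.det ^ e) • M).det = 1 := by
    intro M hM
    have hn' : (n : ℝ) ≠ 0 := Nat.cast_ne_zero.2 hn
    rw [Matrix.det_smul, Fintype.card_fin, ← Real.rpow_natCast, ← Real.rpow_mul hM.le]
    have : e * n = -1 := by simp only [e]; field_simp
    rw [this, Real.rpow_neg_one, inv_mul_cancel₀ hM.ne']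
  let N : Matrix (Fin n) (Fin n) ℝ → SLR n := fun M =>
    if h : 0 < M.det then ⟨(M.det ^ e) • M, key M h⟩ else 1
  have hN : ∀ᶠ M in 𝓝 (1 : Matrix (Fin n) (Fin n) ℝ), (N M).1 = (M.det ^ e) • M := by
    filter_upwards [hpos] with M hM
    exact congrArg Subtype.val (dif_pos hM)
  refine ⟨N, ?_, ?_⟩
  · refine tendsto_SLR.2 fun i j => ?_
    have h1 : Tendsto (fun M : Matrix (Fin n) (Fin n) ℝ => M.det ^ e * M i j) (𝓝 1)
        (𝓝 ((1 : SLR n).1 i j)) := by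
      have h2 : Tendsto (fun M : Matrix (Fin n) (Fin n) ℝ => M.det ^ e) (𝓝 1) (𝓝 1) := by
        have := (hdet.tendsto 1).rpow_const (p := e) (Or.inl (by rw [Matrix.det_one]; norm_num))
        rwa [Matrix.det_one, Real.one_rpow] at this
      have h3 : Tendsto (fun M : Matrix (Fin n) (Fin n) ℝ => M i j) (𝓝 1)
          (𝓝 ((1 : Matrix (Fin n) (Fin n) ℝ) i j)) :=
        (continuous_id.matrix_elem i j).tendsto 1
      have := h2.mul h3
      rwa [one_mul] at this
    refine h1.congr' (hN.mono fun M hM => ?_)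
    change _ = (N M).1 i j
    rw [hM]; rfl
  · filter_upwards [hN, hpos] with M hM hp
    exact ⟨_, (Real.rpow_pos_of_pos hp e).ne', hM⟩

/-- Left multiplication by a small element of the incidence group kills all off-diagonal `P`-entries
of an element near `1`. The multiplier has as its `i`-th row the `i`-th row of the adjugate of the
block of `g` indexed by `{k | P i k}`. -/
lemma exists_transversal (hn : n ≠ 0) (hR : ∀ i, P i i) :
    ∃ F : SLR n → SLR n, Tendsto F (𝓝 1) (𝓝 1) ∧ ∀ᶠ g in 𝓝 (1 : SLR n), F g ∈ inc P ∧
      ∀ i j, i ≠ j → P i j → (F g * g).1 i j = 0 := by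
  classical
  obtain ⟨N, hN, hN'⟩ := exists_normalize hn
  let B : Fin n → SLR n → Matrix (Fin n) (Fin n) ℝ := fun i g =>
    Matrix.of fun k l => if P i k ∧ P i l then g.1 k l else if k = l then 1 else 0
  have hB1 : ∀ i, B i 1 = 1 := by
    intro i
    ext k l
    simp only [B, Matrix.of_apply, one_entry, Matrix.one_apply, ite_self]
  have hBc : ∀ i, Continuous (B i) := by
    intro i
    refine continuous_matrix fun k l => ?_
    simp only [B, Matrix.of_apply]
    split_ifs
    · exact continuous_entry k l
    · exact continuous_const
    · exact continuous_const
  let M : SLR n → Matrix (Fin n) (Fin n) ℝ := fun g =>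
    Matrix.of fun i j => if P i j then (B i g).adjugate i j else 0
  have hM1 : M 1 = 1 := by
    ext i j
    simp only [M, Matrix.of_apply, hB1, Matrix.adjugate_one]
    split_ifs with h
    · rfl
    · rw [Matrix.one_apply_ne]; rintro rfl; exact h (hR i)
  have hMc : Continuous M := by
    refine continuous_matrix fun i j => ?_
    simp only [M, Matrix.of_apply]
    split_ifs
    · exact ((hBc i).matrix_adjugate).matrix_elem i j
    · exact continuous_const
  have hMt : Tendsto M (𝓝 1) (𝓝 1) := by
    have := hMc.tendsto 1
    rwa [hM1] at this
  refine ⟨fun g => N (M g), hN.comp hMt, ?_⟩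
  filter_upwards [hMt.eventually hN'] with g ⟨c, hc, hcM⟩
  refine ⟨fun i j hij => ?_, fun i j hij hP => ?_⟩
  · rw [hcM, Matrix.smul_apply]
    simp only [M, Matrix.of_apply, if_neg hij, smul_zero]
  · rw [mul_val, hcM, Matrix.smul_mul, Matrix.smul_apply]
    have : (M g * g.1) i j = ((B i g).adjugate * B i g) i j := by
      rw [Matrix.mul_apply, Matrix.mul_apply]
      refine Finset.sum_congr rfl fun k _ => ?_
      by_cases hk : P i k
      · simp only [M, B, Matrix.of_apply, if_pos hk, if_pos (And.intro hk hP)]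
      · have hkj : k ≠ j := by rintro rfl; exact hk hP
        have e1 : M g i k = 0 := by simp only [M, Matrix.of_apply, if_neg hk]
        have e2 : B i g k j = 0 := by
          simp only [B, Matrix.of_apply, if_neg (fun h : P i k ∧ P i j => hk h.1), if_neg hkj]
        rw [e1, e2, zero_mul, mul_zero]
    rw [this, Matrix.adjugate_mul, Matrix.smul_apply, Matrix.one_apply_ne hij, smul_zero, smul_zero]

end Incidence

/-! ### Diagonalizing `d g` for a strongly regular `d` and small `g` -/

section Diagonalize

variable {n : ℕ}

/-- The `j`-th eigenvector equation for `d g`, written as a fixed point problem: `r i` stands for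
`d_j / d_i` when `I i` and for `d_i / d_j` otherwise, so that all coefficients are small and the
Banach fixed point theorem applies on the vectors close to `e_j` and supported on
`{i | P i j}`. -/
lemma column_fixed {P : Fin n → Fin n → Prop} (hR : ∀ i, P i i)
    (hT : ∀ i j k, P i j → P j k → P i k) (j : Fin n) {δ ε : ℝ} (hδ : 0 < δ) (hδ1 : δ ≤ 1)
    (hε : n * ε ≤ δ / 8) {g : Matrix (Fin n) (Fin n) ℝ}
    (hgε : ∀ i k, |g i k - (1 : Matrix (Fin n) (Fin n) ℝ) i k| ≤ ε)
    (hgP : ∀ i k, ¬ P i k → g i k = 0) (r : Fin n → ℝ) (hr : ∀ i, i ≠ j → |r i| ≤ 1 / 8)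
    (I : Fin n → Prop) :
    ∃ v : Fin n → ℝ, v j = 1 ∧ (∀ i, i ≠ j → |v i| ≤ δ) ∧ (∀ i, ¬ P i j → v i = 0) ∧
      |(g *ᵥ v) j - 1| ≤ 1 / 8 ∧
      (∀ i, i ≠ j → I i → r i * (g *ᵥ v) j * v i = (g *ᵥ v) i) ∧
      (∀ i, i ≠ j → ¬ I i → (g *ᵥ v) j * v i = r i * (g *ᵥ v) i) := by
  classical
  let e : (Fin n → ℝ) → Fin n → ℝ := fun v i =>
    ∑ k, (g i k - (1 : Matrix (Fin n) (Fin n) ℝ) i k) * v k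
  have he : ∀ v i, (g *ᵥ v) i = v i + e v i := by
    intro v i
    have h1 : v i = ∑ k, (1 : Matrix (Fin n) (Fin n) ℝ) i k * v k := by
      simp [Matrix.one_apply]
    simp only [e, Matrix.mulVec, dotProduct]
    conv_rhs => rw [h1]
    rw [← Finset.sum_add_distrib]
    refine Finset.sum_congr rfl fun k _ => by ring
  have heb : ∀ (v : Fin n → ℝ) i (C : ℝ), 0 ≤ C → (∀ k, |v k| ≤ C) → |e v i| ≤ δ / 8 * C := by
    intro v i C hC hv
    calc |e v i| ≤ ∑ k, |(g i k - (1 : Matrix (Fin n) (Fin n) ℝ) i k) * v k| :=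
          Finset.abs_sum_le_sum_abs _ _
      _ ≤ ∑ _k : Fin n, ε * C := by
          refine Finset.sum_le_sum fun k _ => ?_
          rw [abs_mul]
          exact mul_le_mul (hgε i k) (hv k) (abs_nonneg _) ((abs_nonneg _).trans (hgε i k))
      _ = n * ε * C := by simp [mul_assoc]
      _ ≤ δ / 8 * C := mul_le_mul_of_nonneg_right hε hC
  have hes : ∀ v w i, e v i - e w i = e (v - w) i := by
    intro v w i
    simp only [e, ← Finset.sum_sub_distrib, Pi.sub_apply]
    exact Finset.sum_congr rfl fun k _ => by ring
  let T : (Fin n → ℝ) → Fin n → ℝ := fun v i =>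
    if i = j then 1 else if I i then r i * (1 + e v j) * v i - e v i
      else r i * (v i + e v i) - e v j * v i
  let s : Set (Fin n → ℝ) := {v | v j = 1 ∧ (∀ i, i ≠ j → |v i| ≤ δ) ∧ ∀ i, ¬ P i j → v i = 0}
  have hs1 : ∀ v ∈ s, ∀ k, |v k| ≤ 1 := by
    intro v hv k
    by_cases hk : k = j
    · rw [hk, hv.1, abs_one]
    · exact (hv.2.1 k hk).trans hδ1
  have hse : ∀ v ∈ s, ∀ i, |e v i| ≤ δ / 8 := by
    intro v hv i
    have := heb v i 1 zero_le_one (hs1 v hv)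
    rwa [mul_one] at this
  have hsc : IsClosed s := by
    refine (isClosed_eq (continuous_apply j) continuous_const).inter (IsClosed.inter ?_ ?_)
    · have : {v : Fin n → ℝ | ∀ i, i ≠ j → |v i| ≤ δ} = ⋂ i, ⋂ (_ : i ≠ j), {v | |v i| ≤ δ} := by
        ext; simp
      change IsClosed {v : Fin n → ℝ | ∀ i, i ≠ j → |v i| ≤ δ}
      rw [this]
      exact isClosed_iInter fun i => isClosed_iInter fun _ =>
        isClosed_le (continuous_apply i).abs continuous_const
    · have : {v : Fin n → ℝ | ∀ i, ¬ P i j → v i = 0} = ⋂ i, ⋂ (_ : ¬ P i j), {v | v i = 0} := by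
        ext; simp
      change IsClosed {v : Fin n → ℝ | ∀ i, ¬ P i j → v i = 0}
      rw [this]
      exact isClosed_iInter fun i => isClosed_iInter fun _ =>
        isClosed_eq (continuous_apply i) continuous_const
  have hTs : Set.MapsTo T s s := by
    intro v hv
    have hej := abs_le.1 (hse v hv j)
    refine ⟨by simp [T], fun i hi => ?_, fun i hi => ?_⟩
    · have hvi := hv.2.1 i hi
      have hei := hse v hv i
      have hri := hr i hi
      have hej' := hse v hv j
      simp only [T, if_neg hi]
      split_ifs
      · have h1 : |1 + e v j| ≤ 9 / 8 := by rw [abs_le]; constructor <;> linarith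
        calc |r i * (1 + e v j) * v i - e v i| ≤ |r i| * |1 + e v j| * |v i| + |e v i| := by
              rw [← abs_mul, ← abs_mul]; exact abs_sub _ _
          _ ≤ 1 / 8 * (9 / 8) * δ + δ / 8 := by gcongr
          _ ≤ δ := by linarith
      · calc |r i * (v i + e v i) - e v j * v i| ≤ |r i| * (|v i| + |e v i|) + |e v j| * |v i| := by
              refine (abs_sub _ _).trans ?_
              rw [abs_mul, abs_mul]
              gcongr
              exact abs_add_le _ _
          _ ≤ 1 / 8 * (δ + δ / 8) + 1 / 8 * δ := by
              gcongr
              exact hej'.trans (by linarith)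
          _ ≤ δ := by linarith
    · have hij : i ≠ j := by rintro rfl; exact hi (hR i)
      have he0 : e v i = 0 := by
        refine Finset.sum_eq_zero fun k _ => ?_
        by_cases hk : P k j
        · have hik : ¬ P i k := fun h => hi (hT i k j h hk)
          have hne : i ≠ k := by rintro rfl; exact hi hk
          rw [hgP i k hik, Matrix.one_apply_ne hne, sub_zero, zero_mul]
        · rw [hv.2.2 k hk, mul_zero]
      simp only [T, if_neg hij, he0, hv.2.2 i hi]
      simp
  have hLip : LipschitzWith (1 / 2) (hTs.restrict T s s) := by
    refine LipschitzWith.of_dist_le_mul fun v w => ?_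
    obtain ⟨v, hv⟩ := v
    obtain ⟨w, hw⟩ := w
    change dist (T v) (T w) ≤ _ * dist v w
    set D := dist v w with hD
    have hD0 : 0 ≤ D := dist_nonneg
    have hdk : ∀ k, |v k - w k| ≤ D := fun k => by
      rw [← Real.dist_eq]; exact dist_le_pi_dist v w k
    have hde : ∀ i, |e v i - e w i| ≤ D / 8 := by
      intro i
      rw [hes]
      refine (heb _ i D hD0 hdk).trans ?_
      have := mul_le_mul_of_nonneg_right hδ1 hD0
      linarith
    have hhalf : ((1 / 2 : NNReal) : ℝ) = 1 / 2 := by norm_num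
    rw [hhalf]
    refine (dist_pi_le_iff (by positivity)).2 fun i => ?_
    rw [Real.dist_eq]
    by_cases hi : i = j
    · simp only [T, if_pos hi, sub_self, abs_zero]; positivity
    have hri := hr i hi
    have hej := abs_le.1 (hse v hv j)
    have hejv : |e v j| ≤ 1 / 8 := (hse v hv j).trans (by linarith)
    have hwi : |w i| ≤ 1 := hs1 w hw i
    have hdi := hdk i
    have hdei := hde i
    have hdej := hde j
    simp only [T, if_neg hi]
    split_ifs
    · have h1 : |1 + e v j| ≤ 9 / 8 := by rw [abs_le]; constructor <;> linarith
      have e1 : r i * (1 + e v j) * v i - e v i - (r i * (1 + e w j) * w i - e w i) =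
          r i * ((1 + e v j) * (v i - w i) + (e v j - e w j) * w i) - (e v i - e w i) := by ring
      rw [e1]
      calc _ ≤ |r i| * (|1 + e v j| * |v i - w i| + |e v j - e w j| * |w i|) + |e v i - e w i| := by
            refine (abs_sub _ _).trans ?_
            rw [abs_mul]
            gcongr
            refine (abs_add_le _ _).trans ?_
            rw [abs_mul, abs_mul]
        _ ≤ 1 / 8 * (9 / 8 * D + D / 8 * 1) + D / 8 := by gcongr
        _ ≤ 1 / 2 * D := by linarith
    · have e1 : r i * (v i + e v i) - e v j * v i - (r i * (w i + e w i) - e w j * w i) =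
          r i * ((v i - w i) + (e v i - e w i)) -
            (e v j * (v i - w i) + (e v j - e w j) * w i) := by ring
      rw [e1]
      calc _ ≤ |r i| * (|v i - w i| + |e v i - e w i|) +
              (|e v j| * |v i - w i| + |e v j - e w j| * |w i|) := by
            refine (abs_sub _ _).trans ?_
            rw [abs_mul]
            gcongr
            · exact abs_add_le _ _
            · refine (abs_add_le _ _).trans ?_
              rw [abs_mul, abs_mul]
        _ ≤ 1 / 8 * (D + D / 8) + (1 / 8 * D + D / 8 * 1) := by gcongr
        _ ≤ 1 / 2 * D := by linarith
  have hx : (Pi.single j 1 : Fin n → ℝ) ∈ s := by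
    refine ⟨by simp, fun i hi => ?_, fun i hi => ?_⟩
    · simp [hi, hδ.le]
    · have : i ≠ j := by rintro rfl; exact hi (hR i)
      simp [this]
  obtain ⟨v, hv, hfix, -, -⟩ := ContractingWith.exists_fixedPoint' hsc.isComplete hTs
    ⟨by rw [← NNReal.coe_lt_coe]; norm_num, hLip⟩ hx (edist_ne_top _ _)
  have hfix' : ∀ i, T v i = v i := fun i => congrFun hfix i
  refine ⟨v, hv.1, hv.2.1, hv.2.2, ?_, fun i hi hI => ?_, fun i hi hI => ?_⟩
  · rw [he, hv.1, add_sub_cancel_left]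
    exact (hse v hv j).trans (by linarith)
  · have := hfix' i
    simp only [T, if_neg hi, if_pos hI] at this
    rw [he, he, hv.1]; linarith
  · have := hfix' i
    simp only [T, if_neg hi, if_neg hI] at this
    rw [he, he, hv.1]; linarith

lemma nhds_one_entry {V : Set (Matrix (Fin n) (Fin n) ℝ)}
    (hV : V ∈ 𝓝 (1 : Matrix (Fin n) (Fin n) ℝ)) :
    ∃ δ > 0, ∀ M : Matrix (Fin n) (Fin n) ℝ,
      (∀ i j, |M i j - (1 : Matrix (Fin n) (Fin n) ℝ) i j| ≤ δ) → M ∈ V := by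
  have hV' : (V : Set (Fin n → Fin n → ℝ)) ∈
      @nhds (Fin n → Fin n → ℝ) _ (1 : Matrix (Fin n) (Fin n) ℝ) := hV
  obtain ⟨δ, hδ, h⟩ := Metric.nhds_basis_closedBall.mem_iff.1 hV'
  refine ⟨δ, hδ, fun M hM => h ?_⟩
  refine Metric.mem_closedBall.2 ((dist_pi_le_iff hδ.le).2 fun i => (dist_pi_le_iff hδ.le).2 fun j => ?_)
  rw [Real.dist_eq]
  exact hM i j

/-- Algebraic closing lemma: if `d ∈ A` has widely separated entries and `g` is small and lies in
the incidence group of `P`, then `d g` is conjugate into `A`, to a regular element, by a small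
element of the incidence group. -/
lemma diagonalize (hn : n ≠ 0) {P : Fin n → Fin n → Prop} (hR : ∀ i, P i i)
    (hT : ∀ i j k, P i j → P j k → P i k) {V : Set (SLR n)} (hV : V ∈ 𝓝 (1 : SLR n)) :
    ∃ U ∈ 𝓝 (1 : SLR n), ∀ g ∈ U, g ∈ inc P → ∀ d ∈ diagA n,
      (∀ i j, i ≠ j → d.1 i i / d.1 j j ≤ 1 / 8 ∨ d.1 j j / d.1 i i ≤ 1 / 8) →
      ∃ h ∈ V, h ∈ inc P ∧ ∃ b ∈ diagA n, (∀ i j, i ≠ j → b.1 i i ≠ b.1 j j) ∧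
        d * g * h = h * b := by
  classical
  obtain ⟨N, hN, hN'⟩ := exists_normalize hn
  obtain ⟨δ', hδ'0, hδ'⟩ := nhds_one_entry ((hN.eventually hV).and hN')
  set δ := min δ' 1 with hδdef
  have hδ0 : 0 < δ := lt_min hδ'0 one_pos
  have hδ1 : δ ≤ 1 := min_le_right _ _
  have hn0 : (0 : ℝ) < n := Nat.cast_pos.2 (Nat.pos_of_ne_zero hn)
  set ε := δ / (8 * n) with hεdef
  have hε0 : 0 < ε := by positivity
  have hnε : n * ε ≤ δ / 8 := by rw [hεdef]; apply le_of_eq; field_simp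
  refine ⟨{g | ∀ i k, |g.1 i k - (1 : Matrix (Fin n) (Fin n) ℝ) i k| ≤ ε}, ?_, ?_⟩
  · simp only [Set.ofPred_forall]
    refine Filter.iInter_mem.2 fun i => Filter.iInter_mem.2 fun k => ?_
    have h1 : Tendsto (fun g : SLR n => |g.1 i k - (1 : Matrix (Fin n) (Fin n) ℝ) i k|) (𝓝 1)
        (𝓝 0) := by
      have := (((continuous_entry i k).sub continuous_const).abs).tendsto (1 : SLR n)
        (f := fun g : SLR n => |g.1 i k - (1 : Matrix (Fin n) (Fin n) ℝ) i k|)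
      have e0 : |(1 : SLR n).1 i k - (1 : Matrix (Fin n) (Fin n) ℝ) i k| = 0 := by
        rw [one_entry, Matrix.one_apply, sub_self, abs_zero]
      rwa [e0] at this
    exact (h1.eventually (gt_mem_nhds hε0)).mono fun g hg => le_of_lt hg
  intro g hg hgP d hd hsep
  have hcol : ∀ j, ∃ v : Fin n → ℝ, v j = 1 ∧ (∀ i, i ≠ j → |v i| ≤ δ) ∧
      (∀ i, ¬ P i j → v i = 0) ∧ |(g.1 *ᵥ v) j - 1| ≤ 1 / 8 ∧
      ∀ i, d.1 i i * (g.1 *ᵥ v) i = d.1 j j * (g.1 *ᵥ v) j * v i := by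
    intro j
    let I : Fin n → Prop := fun i => d.1 j j / d.1 i i ≤ 1 / 8
    let r : Fin n → ℝ := fun i => if I i then d.1 j j / d.1 i i else d.1 i i / d.1 j j
    have hr : ∀ i, i ≠ j → |r i| ≤ 1 / 8 := by
      intro i hi
      simp only [r]
      split_ifs with hI
      · rw [abs_of_pos (div_pos (hd.2 j) (hd.2 i))]; exact hI
      · rw [abs_of_pos (div_pos (hd.2 i) (hd.2 j))]
        exact (hsep i j hi).resolve_right hI
    obtain ⟨v, h1, h2, h3, h4, h5, h6⟩ := column_fixed hR hT j hδ0 hδ1 hnε hg hgP r hr I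
    refine ⟨v, h1, h2, h3, h4, fun i => ?_⟩
    have hdi := (hd.2 i).ne'
    have hdj := (hd.2 j).ne'
    by_cases hi : i = j
    · subst hi; rw [h1, mul_one]
    · by_cases hI : I i
      · have := h5 i hi hI
        simp only [r, if_pos hI] at this
        rw [← this]; field_simp
      · have := h6 i hi hI
        simp only [r, if_neg hI] at this
        rw [mul_assoc, this]; field_simp
  choose v hv1 hvδ hvP hvj hveq using hcol
  let M : Matrix (Fin n) (Fin n) ℝ := Matrix.of fun i j => v j i
  let lam : Fin n → ℝ := fun j => d.1 j j * (g.1 *ᵥ v j) j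
  have hM : ∀ i j, |M i j - (1 : Matrix (Fin n) (Fin n) ℝ) i j| ≤ δ' := by
    intro i j
    change |v j i - _| ≤ _
    by_cases hij : i = j
    · subst hij; rw [hv1, Matrix.one_apply_eq, sub_self, abs_zero]; exact hδ'0.le
    · rw [Matrix.one_apply_ne hij, sub_zero]
      exact (hvδ j i hij).trans (min_le_left _ _)
  obtain ⟨hMV, c, hc, hcM⟩ := hδ' M hM
  set h := N M with hh
  have hlam : d.1 * g.1 * h.1 = h.1 * Matrix.diagonal lam := by
    rw [hcM, Matrix.mul_smul, Matrix.smul_mul]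
    congr 1
    ext i j
    rw [Matrix.mul_diagonal, mul_assoc]
    conv_lhs => rw [posDiag_eq hd]
    rw [Matrix.diagonal_mul, Matrix.mul_apply]
    have := hveq j i
    change d.1 i i * ∑ k, g.1 i k * v j k = v j i * (d.1 j j * (g.1 *ᵥ v j) j)
    rw [mul_comm (v j i), ← this]
    rfl
  let b : SLR n := h⁻¹ * (d * g * h)
  have hb : b.1 = Matrix.diagonal lam := by
    change (h⁻¹).1 * (d.1 * g.1 * h.1) = _
    rw [hlam, ← mul_assoc, ← mul_val, inv_mul_cancel]
    exact one_mul _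
  have hgv : ∀ j, 7 / 8 ≤ (g.1 *ᵥ v j) j ∧ (g.1 *ᵥ v j) j ≤ 9 / 8 := by
    intro j
    have := abs_le.1 (hvj j)
    constructor <;> linarith
  have hblam : ∀ i, b.1 i i = lam i := fun i => by rw [hb, Matrix.diagonal_apply_eq]
  have hlt : ∀ i j, d.1 i i / d.1 j j ≤ 1 / 8 → lam i < lam j := by
    intro i j hij
    have hj := hd.2 j
    have hi := hd.2 i
    rw [div_le_iff₀ hj] at hij
    have h1 : lam i ≤ d.1 i i * (9 / 8) := mul_le_mul_of_nonneg_left (hgv i).2 hi.le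
    have h2 : d.1 j j * (7 / 8) ≤ lam j := mul_le_mul_of_nonneg_left (hgv j).1 hj.le
    linarith
  refine ⟨h, hMV, fun i j hij => ?_, b, ⟨fun i j hij => ?_, fun i => ?_⟩, fun i j hij => ?_, ?_⟩
  · rw [hcM, Matrix.smul_apply]
    change c • v j i = 0
    rw [hvP j i hij, smul_zero]
  · rw [hb, Matrix.diagonal_apply_ne _ hij]
  · rw [hblam]
    exact mul_pos (hd.2 i) (by linarith [(hgv i).1])
  · rw [hblam, hblam]
    rcases hsep i j hij with h1 | h1
    · exact (hlt i j h1).ne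
    · exact (hlt j i h1).ne'
  · exact (mul_inv_cancel_left h _).symm

end Diagonalize

/-! ### Renormalizing displacements transverse to `Y` -/

section Renormalize

variable {n : ℕ}

/-- For weights `c ≥ 0` supported off the diagonal, some direction `h` in the Lie algebra of `A`
has its weighted root values `c_{ij} (h_i - h_j)` maximized by exactly one pair. -/
lemma exists_generic (c : Fin n × Fin n → ℝ) (hc0 : ∀ q, 0 ≤ c q) (p : Fin n × Fin n)
    (hp : p.1 ≠ p.2) (hcp : 0 < c p) :
    ∃ h : Fin n → ℝ, ∑ i, h i = 0 ∧ ∃ p0 : Fin n × Fin n, p0.1 ≠ p0.2 ∧ 0 < c p0 ∧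
      0 < h p0.1 - h p0.2 ∧
      ∀ q, q ≠ p0 → c q * (h q.1 - h q.2) < c p0 * (h p0.1 - h p0.2) := by
  classical
  let L : Fin n × Fin n → Module.Dual ℝ (Fin n → ℝ) := fun q =>
    c q • ((LinearMap.proj q.1 : (Fin n → ℝ) →ₗ[ℝ] ℝ) - LinearMap.proj q.2)
  have hL : ∀ q x, L q x = c q * (x q.1 - x q.2) := fun q x => rfl
  obtain ⟨x, hx⟩ := Module.Dual.exists_forall_ne_zero_of_forall_exists
    (ι := {w : (Fin n × Fin n) × (Fin n × Fin n) // w.1 ≠ w.2 ∧ w.1.1 ≠ w.1.2 ∧ 0 < c w.1})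
    (fun w => L w.1.1 - L w.1.2) (by
      rintro ⟨⟨⟨i, j⟩, ⟨k, l⟩⟩, hne, hij, hcij⟩
      dsimp only at hne hij hcij ⊢
      by_contra! hcon
      have h1 := hcon (Pi.single i 1)
      have h2 := hcon (Pi.single j 1)
      have hkl := hc0 (k, l)
      rw [LinearMap.sub_apply, hL, hL] at h1 h2
      simp only [Pi.single_apply, if_true, if_neg hij, if_neg hij.symm] at h1 h2
      have hk : k = i := by
        by_contra hk
        rw [if_neg hk] at h1
        split_ifs at h1 <;> linarith
      have hl : l = j := by
        by_contra hl
        rw [if_neg hl] at h2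
        split_ifs at h2 <;> linarith
      exact hne (by rw [hk, hl]))
  have hx' : ∀ q q', q ≠ q' → q.1 ≠ q.2 → 0 < c q → L q x ≠ L q' x := by
    intro q q' h1 h2 h3 h4
    refine hx ⟨(q, q'), h1, h2, h3⟩ ?_
    rw [LinearMap.sub_apply, h4, sub_self]
  -- Replace `x` by `-x` if necessary, so that the weighted root `p` is positive.
  obtain ⟨y, hy, hyp⟩ : ∃ y : Fin n → ℝ, (∀ q q', q ≠ q' → q.1 ≠ q.2 → 0 < c q → L q y ≠ L q' y) ∧
      0 < L p y := by
    have h0 : L p x ≠ 0 := by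
      have h1 := hx' p (p.1, p.1) (fun h => hp (congrArg Prod.snd h).symm) hp hcp
      have h2 : L (p.1, p.1) x = 0 := by rw [hL]; simp
      rwa [h2] at h1
    rcases lt_or_gt_of_ne h0 with h | h
    · refine ⟨-x, fun q q' h1 h2 h3 h4 => hx' q q' h1 h2 h3 ?_, ?_⟩
      · rw [map_neg, map_neg] at h4; exact neg_injective h4
      · rw [map_neg]; exact neg_pos.2 h
    · exact ⟨x, hx', h⟩
  have : Nonempty (Fin n × Fin n) := ⟨p⟩
  obtain ⟨p0, hp0⟩ := Finite.exists_max fun q => L q y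
  have hpos : 0 < L p0 y := hyp.trans_le (hp0 p)
  have hpos' := hpos
  rw [hL] at hpos'
  have hcp0 : 0 < c p0 := (hc0 p0).lt_of_ne (by rintro h; rw [← h, zero_mul] at hpos'; exact hpos'.false)
  have hd : 0 < y p0.1 - y p0.2 := (mul_pos_iff_of_pos_left hcp0).1 hpos'
  have hne : p0.1 ≠ p0.2 := by intro h; rw [h, sub_self] at hd; exact hd.false
  have hn0 : (n : ℝ) ≠ 0 := Nat.cast_ne_zero.2 (by rintro rfl; exact p.1.elim0)
  refine ⟨fun i => y i - (∑ k, y k) / n, ?_, p0, hne, hcp0, ?_, fun q hq => ?_⟩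
  · rw [Finset.sum_sub_distrib, Finset.sum_const, Finset.card_univ, Fintype.card_fin, nsmul_eq_mul]
    field_simp
    simp
  · dsimp only; rwa [sub_sub_sub_cancel_right]
  · dsimp only
    rw [sub_sub_sub_cancel_right, sub_sub_sub_cancel_right]
    exact (hp0 q).lt_of_ne (hy p0 q hq.symm hne hcp0).symm

/-- A sequence of non-diagonal matrices tending to `1` can be conjugated by elements of `A` so that
it converges to a nontrivial element of a single root group. The entries tend to zero at possibly
different rates; the weights `c` compare the orders of magnitude of their logarithms, and a direction
`h` generic for the limiting weights makes one entry dominate. -/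
lemma renormalize {ι : Type*} (𝒰 : Ultrafilter ι) {g : ι → SLR n} (hg : Tendsto g 𝒰 (𝓝 1))
    (hnd : ∀ᶠ k in (𝒰 : Filter ι), ∃ q : Fin n × Fin n, q.1 ≠ q.2 ∧ (g k).1 q.1 q.2 ≠ 0) :
    ∃ (i j : Fin n) (hij : i ≠ j) (s : ℝ) (a : ι → SLR n), s ≠ 0 ∧ (∀ k, a k ∈ diagA n) ∧
      (∀ᶠ k in (𝒰 : Filter ι), (g k).1 i j ≠ 0) ∧
      Tendsto (fun k => a k * g k * (a k)⁻¹) 𝒰 (𝓝 (elemU n hij s)) := by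
  classical
  let ε : ι → Fin n × Fin n → ℝ := fun k q => |(g k).1 q.1 q.2|
  have hεnn : ∀ k q, 0 ≤ ε k q := fun k q => abs_nonneg _
  have hε0 : ∀ q : Fin n × Fin n, q.1 ≠ q.2 → Tendsto (fun k => ε k q) 𝒰 (𝓝 0) := by
    intro q hq
    have h1 := (tendsto_SLR.1 hg q.1 q.2).abs
    rwa [one_entry, if_neg hq, abs_zero] at h1
  have hε1 : ∀ᶠ k in (𝒰 : Filter ι), ∀ q : Fin n × Fin n, q.1 ≠ q.2 → ε k q < 1 := by
    rw [Filter.eventually_all]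
    intro q
    by_cases hq : q.1 = q.2
    · exact Filter.Eventually.of_forall fun k h => absurd hq h
    · exact ((hε0 q hq).eventually (gt_mem_nhds one_pos)).mono fun k hk _ => hk
  obtain ⟨p, hp⟩ : ∃ p : Fin n × Fin n, ∀ᶠ k in (𝒰 : Filter ι),
      p.1 ≠ p.2 ∧ 0 < ε k p ∧ ∀ q : Fin n × Fin n, q.1 ≠ q.2 → ε k q ≤ ε k p := by
    refine Ultrafilter.eventually_exists_iff.1 (hnd.mono ?_)
    rintro k ⟨q, hq, hq0⟩
    obtain ⟨p, hp, hmax⟩ := Finset.exists_max_image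
      (Finset.univ.filter fun q : Fin n × Fin n => q.1 ≠ q.2) (ε k) ⟨q, by simp [hq]⟩
    refine ⟨p, (Finset.mem_filter.1 hp).2, ?_, fun q hq => hmax q (by simp [hq])⟩
    exact (abs_pos.2 hq0).trans_le (hmax q (by simp [hq]))
  obtain ⟨k0, hk0⟩ := hp.exists
  have hpne := hk0.1
  -- Since `Real.log 0 = 0`, the weight below vanishes at the zero entries, as it should.
  let c : ι → Fin n × Fin n → ℝ := fun k q =>
    if q.1 = q.2 then 0 else Real.log (ε k p) / Real.log (ε k q)
  have hc01 : ∀ᶠ k in (𝒰 : Filter ι), c k ∈ Set.Icc (0 : Fin n × Fin n → ℝ) 1 := by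
    filter_upwards [hε1, hp] with k h1 hk
    obtain ⟨-, h2, h3⟩ := hk
    have hlp : Real.log (ε k p) < 0 := Real.log_neg h2 (h1 p hpne)
    rw [← Set.pi_univ_Icc]
    intro q _
    by_cases hq : q.1 = q.2
    · simp [c, hq]
    · simp only [c, if_neg hq, Pi.zero_apply, Pi.one_apply]
      rcases (hεnn k q).eq_or_lt with h0 | h0
      · rw [← h0, Real.log_zero, div_zero]; exact ⟨le_rfl, zero_le_one⟩
      · have hlq : Real.log (ε k q) < 0 := Real.log_neg h0 (h1 q hq)
        exact ⟨div_nonneg_of_nonpos hlp.le hlq.le,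
          (div_le_one_of_neg hlq).2 (Real.log_le_log h0 (h3 q hq))⟩
  obtain ⟨C, hC, hlim⟩ := exists_ultra_lim 𝒰 isCompact_Icc hc01
  have hlim' : ∀ q, Tendsto (fun k => c k q) 𝒰 (𝓝 (C q)) := fun q => (tendsto_pi_nhds.1 hlim) q
  have hCp : C p = 1 := by
    refine tendsto_nhds_unique (hlim' p) (tendsto_const_nhds.congr' ?_)
    filter_upwards [hε1, hp] with k h1 hk
    obtain ⟨-, h2, h3⟩ := hk
    simp only [c, if_neg hpne]
    rw [div_self (Real.log_neg h2 (h1 p hpne)).ne]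
  obtain ⟨h, hsum, p0, hp0, hCp0, hΔ, hmax⟩ := exists_generic C (fun q => hC.1 q) p hpne
    (by rw [hCp]; exact one_pos)
  set Δ := h p0.1 - h p0.2 with hΔdef
  let t : ι → ℝ := fun k => -Real.log (ε k p0) / Δ
  have hts : ∀ k, ∑ i, t k * h i = 0 := fun k => by rw [← Finset.mul_sum, hsum, mul_zero]
  let a : ι → SLR n := fun k => expA (fun i => t k * h i) (hts k)
  have ha : ∀ k, a k ∈ diagA n := fun k => expA_mem _ _
  have hent : ∀ k i j, (a k * g k * (a k)⁻¹).1 i j = Real.exp (t k * (h i - h j)) * (g k).1 i j := by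
    intro k i j
    rw [conj_entry (ha k), expA_entry, expA_entry, ← Real.exp_neg, mul_sub, sub_eq_add_neg,
      Real.exp_add]
    ring
  have hcp0 : ∀ᶠ k in (𝒰 : Filter ι), 0 < c k p0 := (hlim' p0).eventually (lt_mem_nhds hCp0)
  have hεp0 : ∀ᶠ k in (𝒰 : Filter ι), 0 < ε k p0 := by
    filter_upwards [hcp0] with k hk
    refine (hεnn k p0).lt_of_ne fun h0 => ?_
    simp only [c, if_neg hp0, ← h0, Real.log_zero, div_zero] at hk
    exact hk.false
  have hone : ∀ᶠ k in (𝒰 : Filter ι), Real.exp (t k * Δ) * |(g k).1 p0.1 p0.2| = 1 := by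
    filter_upwards [hεp0] with k hk
    change _ * ε k p0 = 1
    simp only [t]
    rw [div_mul_cancel₀ _ hΔ.ne', Real.exp_neg, Real.exp_log hk, inv_mul_cancel₀ hk.ne']
  obtain ⟨s, hs, hs'⟩ : ∃ s : ℝ, s ≠ 0 ∧
      ∀ᶠ k in (𝒰 : Filter ι), Real.exp (t k * Δ) * (g k).1 p0.1 p0.2 = s := by
    have h1 : ∀ᶠ k in (𝒰 : Filter ι), Real.exp (t k * Δ) * (g k).1 p0.1 p0.2 = 1 ∨
        Real.exp (t k * Δ) * (g k).1 p0.1 p0.2 = -1 := by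
      filter_upwards [hone] with k hk
      refine (abs_eq zero_le_one).1 ?_
      rw [abs_mul, abs_of_pos (Real.exp_pos _), hk]
    rcases Ultrafilter.eventually_or.1 h1 with h2 | h2
    · exact ⟨1, one_ne_zero, h2⟩
    · exact ⟨-1, neg_ne_zero.2 one_ne_zero, h2⟩
  refine ⟨p0.1, p0.2, hp0, s, a, hs, ha, hεp0.mono fun k hk => abs_pos.1 hk, ?_⟩
  rw [tendsto_SLR]
  intro i j
  simp only [hent]
  rw [elemU_entry]
  by_cases hij : i = j
  · subst hij
    have hne : ¬ (p0.1 = i ∧ p0.2 = i) := fun hh => hp0 (hh.1.trans hh.2.symm)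
    rw [if_pos rfl, if_neg hne, add_zero]
    have h1 := tendsto_SLR.1 hg i i
    rw [one_entry, if_pos rfl] at h1
    simpa using h1
  by_cases hq : (i, j) = p0
  · subst hq
    rw [if_neg hij, if_pos ⟨rfl, rfl⟩, zero_add]
    exact tendsto_const_nhds.congr' (hs'.mono fun k hk => hk.symm)
  have hne : ¬ (p0.1 = i ∧ p0.2 = j) := fun hh => hq (Prod.ext hh.1.symm hh.2.symm)
  rw [if_neg hij, if_neg hne, add_zero]
  -- The entry `(i, j)` has absolute value `ε ^ (1 - x)`, with `x` tending to a limit `< 1`.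
  have hm := hmax (i, j) hq
  dsimp only at hm
  have hden : 0 < C p0 * Δ := mul_pos hCp0 hΔ
  have hx : Tendsto (fun k => c k (i, j) * (h i - h j) / (c k p0 * Δ)) 𝒰
      (𝓝 (C (i, j) * (h i - h j) / (C p0 * Δ))) :=
    ((hlim' _).mul_const _).div ((hlim' p0).mul_const _) hden.ne'
  have hx1 : C (i, j) * (h i - h j) / (C p0 * Δ) < 1 := (div_lt_one hden).2 hm
  have hpow : Tendsto (fun k => ε k (i, j) ^ (1 - c k (i, j) * (h i - h j) / (c k p0 * Δ))) 𝒰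
      (𝓝 0) := by
    have h1 := (hε0 (i, j) hij).rpow (tendsto_const_nhds.sub hx) (Or.inr (sub_pos.2 hx1))
    rwa [Real.zero_rpow (sub_pos.2 hx1).ne'] at h1
  rw [tendsto_zero_iff_abs_tendsto_zero]
  refine hpow.congr' ?_
  filter_upwards [hcp0, hεp0, hε1, hx.eventually (gt_mem_nhds hx1), hp] with k h1 h2 h3 h4 h5
  simp only [Function.comp]
  rw [abs_mul, abs_of_pos (Real.exp_pos _)]
  change _ = _ * ε k (i, j)
  rcases (hεnn k (i, j)).eq_or_lt with h0 | h0
  · rw [← h0, Real.zero_rpow (sub_pos.2 h4).ne', mul_zero]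
  · have hl : Real.log (ε k (i, j)) ≠ 0 := (Real.log_neg h0 (h3 (i, j) hij)).ne
    have hl0 : Real.log (ε k p0) ≠ 0 := (Real.log_neg h2 (h3 p0 hp0)).ne
    have hlp : Real.log (ε k p) ≠ 0 := (Real.log_neg h5.2.1 (h3 p hpne)).ne
    rw [Real.rpow_def_of_pos h0]
    conv_rhs => rw [← Real.exp_log h0]
    rw [← Real.exp_add]
    congr 1
    have hc1 : c k (i, j) = Real.log (ε k p) / Real.log (ε k (i, j)) := if_neg hij
    have hc2 : c k p0 = Real.log (ε k p) / Real.log (ε k p0) := if_neg hp0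
    rw [hc1, hc2]
    simp only [t]
    have := hΔ.ne'
    field_simp
    ring

/-- If every nontrivial root displacement inside `Y` comes from a root group recorded by `P`, and
those groups preserve `Y`, then all small displacements inside `Y` lie in the incidence group. -/
lemma small_displacement {X : Type*} [TopologicalSpace X] [MulAction (SLR n) X]
    [ContinuousSMul (SLR n) X] [T2Space X] (hn : n ≠ 0) {P : Fin n → Fin n → Prop}
    (hR : ∀ i, P i i) (hT : ∀ i j k, P i j → P j k → P i k) {Y : Set X} (hY : IsCompact Y)
    (hYA : ∀ g ∈ diagA n, ∀ y ∈ Y, g • y ∈ Y)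
    (hYP : ∀ g ∈ genH P, ∀ y ∈ Y, g • y ∈ Y)
    (hroot : ∀ (i j : Fin n) (hij : i ≠ j) (y : X) (s : ℝ), y ∈ Y → s ≠ 0 →
      elemU n hij s • y ∈ Y → P i j) :
    ∀ᶠ g in 𝓝 (1 : SLR n), ∀ y ∈ Y, g • y ∈ Y → g ∈ inc P := by
  by_contra hcon
  have hne : (𝓝 (1 : SLR n) ⊓ 𝓟 {g | ¬ ∀ y ∈ Y, g • y ∈ Y → g ∈ inc P}).NeBot :=
    Filter.frequently_iff_neBot.1 (Filter.not_eventually.1 hcon)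
  let 𝒰 := Ultrafilter.of (𝓝 (1 : SLR n) ⊓ 𝓟 {g | ¬ ∀ y ∈ Y, g • y ∈ Y → g ∈ inc P})
  have h𝒰 : (𝒰 : Filter (SLR n)) ≤ _ := Ultrafilter.of_le _
  have h1 : Tendsto id (𝒰 : Filter (SLR n)) (𝓝 1) := h𝒰.trans inf_le_left
  have h2 : ∀ᶠ g in (𝒰 : Filter (SLR n)), ∃ y, y ∈ Y ∧ g • y ∈ Y ∧ g ∉ inc P := by
    have h3 : ∀ᶠ g in (𝒰 : Filter (SLR n)), ¬ ∀ y ∈ Y, g • y ∈ Y → g ∈ inc P :=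
      h𝒰.trans inf_le_right (Filter.mem_principal_self _)
    filter_upwards [h3] with g hg
    push Not at hg
    exact hg
  obtain ⟨F, hF, hF'⟩ := exists_transversal hn hR
  have hFu : Tendsto F 𝒰 (𝓝 1) := hF.comp h1
  have hFg : Tendsto (fun g => F g * g) 𝒰 (𝓝 1) := by
    have := hFu.mul h1
    rwa [mul_one] at this
  have hFH : ∀ᶠ g in (𝒰 : Filter (SLR n)), F g ∈ genH P := by
    filter_upwards [hFu.eventually (inc_subset_genH hR hT), h1.eventually hF'] with g h3 h4
    exact h3 h4.1
  have hnd : ∀ᶠ g in (𝒰 : Filter (SLR n)), ∃ q : Fin n × Fin n, q.1 ≠ q.2 ∧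
      (F g * g).1 q.1 q.2 ≠ 0 := by
    filter_upwards [h2, hFH, hFg.eventually diag_of_near_one] with g h3 h4 h5
    by_contra! h6
    obtain ⟨y, -, -, hg⟩ := h3
    refine hg (genH_inc hR hT ?_)
    have h7 : F g * g ∈ genH P := diag_genH (h5 fun i j hij => h6 (i, j) hij)
    exact (Subgroup.mul_mem_cancel_left _ h4).1 h7
  obtain ⟨i, j, hij, s, a, hs, ha, hent, hlim⟩ := renormalize 𝒰 hFg hnd
  have : Nonempty X := by obtain ⟨g, y, -⟩ := h2.exists; exact ⟨y⟩
  let y : SLR n → X := fun g => Classical.epsilon fun y => y ∈ Y ∧ g • y ∈ Y ∧ g ∉ inc P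
  have hy : ∀ᶠ g in (𝒰 : Filter (SLR n)), y g ∈ Y ∧ g • y g ∈ Y ∧ g ∉ inc P :=
    h2.mono fun g hg => Classical.epsilon_spec hg
  obtain ⟨z, hz, hzlim⟩ := exists_ultra_lim 𝒰 hY (f := fun g => a g • y g)
    (hy.mono fun g hg => hYA _ (ha g) _ hg.1)
  have hz' : elemU n hij s • z ∈ Y := by
    have h3 := hlim.smul hzlim
    refine hY.isClosed.mem_of_tendsto h3 ?_
    filter_upwards [hy, hFH] with g h4 h5
    rw [smul_smul, inv_mul_cancel_right, mul_smul, mul_smul]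
    exact hYA _ (ha g) _ (hYP _ h5 _ h4.2.1)
  have hP := hroot i j hij z s hz hs hz'
  obtain ⟨g, h3, h4⟩ := (hent.and (h1.eventually hF')).exists
  exact h3 (h4.2 i j hij hP)

end Renormalize

/-! ### A regular element fixing `Y`, and the equivalence -/

section Closing

variable {n : ℕ}

/-- The relation on indices recording the root groups `U_{ij}` that preserve `Y`. -/
def rootRel {X : Type*} [MulAction (SLR n) X] (Y : Set X) (i j : Fin n) : Prop :=
  i = j ∨ ∃ hij : i ≠ j, ∀ r, ∀ y ∈ Y, elemU n hij r • y ∈ Y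

lemma rootRel_trans {X : Type*} [MulAction (SLR n) X] {Y : Set X} (i j k : Fin n)
    (h1 : rootRel Y i j) (h2 : rootRel Y j k) : rootRel Y i k := by
  rcases h1 with rfl | ⟨hij, h1⟩
  · exact h2
  rcases h2 with rfl | ⟨hjk, h2⟩
  · exact Or.inr ⟨hij, h1⟩
  by_cases hik : i = k
  · exact Or.inl hik
  refine Or.inr ⟨hik, fun r y hy => ?_⟩
  rw [← commutator_elemU hij hjk hik r, mul_smul, mul_smul, mul_smul]
  exact h1 _ _ (h2 _ _ (h1 _ _ (h2 _ _ hy)))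

lemma genH_preserves {X : Type*} [MulAction (SLR n) X] {Y : Set X}
    (hYA : ∀ g ∈ diagA n, ∀ y ∈ Y, g • y ∈ Y) : ∀ g ∈ genH (rootRel (n := n) Y), ∀ y ∈ Y, g • y ∈ Y := by
  intro g hg
  refine genH_smul hYA (fun i j hij hP => ?_) hg
  rcases hP with hP | ⟨_, hP⟩
  · exact absurd hP hij
  · exact hP

variable (n) in
lemma exists_spaced : ∃ h : Fin n → ℝ, ∑ i, h i = 0 ∧ ∀ i j, i < j → 7 ≤ h j - h i := by
  refine ⟨fun i => 7 * (i : ℕ) - (∑ k : Fin n, 7 * ((k : ℕ) : ℝ)) / n, ?_, fun i j hij => ?_⟩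
  · rcases Nat.eq_zero_or_pos n with rfl | hn
    · simp
    · have hn0 : (n : ℝ) ≠ 0 := Nat.cast_ne_zero.2 hn.ne'
      rw [Finset.sum_sub_distrib, Finset.sum_const, Finset.card_univ, Fintype.card_fin,
        nsmul_eq_mul]
      field_simp
      simp
  · have h1 : (i : ℕ) + 1 ≤ (j : ℕ) := hij
    have h2 : ((i : ℕ) : ℝ) + 1 ≤ ((j : ℕ) : ℝ) := by exact_mod_cast h1
    linarith

variable {X : Type*} [TopologicalSpace X] [MulAction (SLR n) X]

/-- Closing up a recurrent orbit: some point of `Y` is fixed by a regular element of `A`. -/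
lemma exists_fixed (hn : n ≠ 0) {P : Fin n → Fin n → Prop} (hR : ∀ i, P i i)
    (hT : ∀ i j k, P i j → P j k → P i k) {Y : Set X} (hY : IsCompact Y) (hne : Y.Nonempty)
    (hYA : ∀ g ∈ diagA n, ∀ y ∈ Y, g • y ∈ Y) (hYP : ∀ g ∈ genH P, ∀ y ∈ Y, g • y ∈ Y)
    (hopen : ∀ x : X, ∀ V ∈ 𝓝 (1 : SLR n), (fun g => g • x) '' V ∈ 𝓝 x)
    (hsmall : ∀ᶠ g in 𝓝 (1 : SLR n), ∀ y ∈ Y, g • y ∈ Y → g ∈ inc P) :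
    ∃ b ∈ diagA n, (∀ i j, i ≠ j → b.1 i i ≠ b.1 j j) ∧ ∃ y ∈ Y, b • y = y := by
  obtain ⟨U, hU, hdiag⟩ := diagonalize hn hR hT (inc_subset_genH hR hT)
  obtain ⟨V, hV, hVU⟩ := exists_nhds_split_inv (Filter.inter_mem hU hsmall)
  obtain ⟨h, hsum, hsp⟩ := exists_spaced n
  obtain ⟨x, hx⟩ := hne
  have hms : ∀ m : ℝ, ∑ i, m * h i = 0 := fun m => by rw [← Finset.mul_sum, hsum, mul_zero]
  let a : ℕ → SLR n := fun m => expA (fun i => (m : ℝ) * h i) (hms m)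
  have ha : ∀ m, a m ∈ diagA n := fun m => expA_mem _ _
  let 𝒰 : Ultrafilter ℕ := Ultrafilter.of atTop
  have hle : (𝒰 : Filter ℕ) ≤ atTop := Ultrafilter.of_le _
  obtain ⟨z, hz, hlim⟩ := exists_ultra_lim 𝒰 hY (f := fun m => a m • x)
    (Filter.Eventually.of_forall fun m => hYA _ (ha m) x hx)
  have hev : ∀ᶠ m in (𝒰 : Filter ℕ), a m • x ∈ (fun g : SLR n => g • z) '' V :=
    hlim (hopen z V hV)
  obtain ⟨m, g1, hg1, hm1⟩ := hev.exists
  obtain ⟨m', ⟨g2, hg2, hm2⟩, hmm⟩ := (hev.and (hle (eventually_gt_atTop m))).exists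
  have hmm' : m < m' := hmm
  dsimp only at hm1 hm2
  have hgx : (g2 / g1) • a m • x = a m' • x := by
    rw [← hm1, ← hm2, smul_smul, div_mul_cancel]
  obtain ⟨hgU, hgs⟩ := hVU g2 hg2 g1 hg1
  have hgP : g2 / g1 ∈ inc P := hgs (a m • x) (hYA _ (ha m) x hx) (by
    rw [hgx]; exact hYA _ (ha m') x hx)
  set d : SLR n := a m * (a m')⁻¹ with hd
  have hdA : d ∈ diagA n := mul_mem (ha m) (inv_mem (ha m'))
  have hent : ∀ i j, d.1 i i / d.1 j j = Real.exp (((m : ℝ) - m') * (h i - h j)) := by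
    intro i j
    rw [hd, mul_diag_entry (ha m), mul_diag_entry (ha m), inv_entry (ha m'), inv_entry (ha m'),
      expA_entry, expA_entry, expA_entry, expA_entry, ← Real.exp_neg, ← Real.exp_neg,
      ← Real.exp_add, ← Real.exp_add, ← Real.exp_sub]
    congr 1
    ring
  have hone : (m : ℝ) + 1 ≤ m' := by exact_mod_cast hmm'
  have h18 : ∀ i j, i < j → d.1 j j / d.1 i i ≤ 1 / 8 := by
    intro i j hij
    rw [hent]
    have h1 := hsp i j hij
    have h2 : ((m : ℝ) - m') * (h j - h i) ≤ -7 := by nlinarith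
    have h3 : (8 : ℝ) ≤ Real.exp 7 := by
      have := Real.add_one_le_exp (7 : ℝ); linarith
    calc Real.exp (((m : ℝ) - m') * (h j - h i)) ≤ Real.exp (-7) := Real.exp_le_exp.2 h2
      _ = 1 / Real.exp 7 := by rw [Real.exp_neg, one_div]
      _ ≤ 1 / 8 := one_div_le_one_div_of_le (by norm_num) h3
  obtain ⟨k, hk, hkP, b, hb, hreg, heq⟩ := hdiag _ hgU hgP d hdA fun i j hij => by
    rcases lt_or_gt_of_ne hij with h1 | h1
    · exact Or.inr (h18 i j h1)
    · exact Or.inl (h18 j i h1)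
  refine ⟨b, hb, hreg, k⁻¹ • a m • x, hYP _ (inv_mem (hk hkP)) _ (hYA _ (ha m) x hx), ?_⟩
  have hfix : (d * (g2 / g1)) • a m • x = a m • x := by
    rw [mul_smul, hgx, hd, mul_smul, inv_smul_smul]
  have hb' : b * k⁻¹ = k⁻¹ * (d * (g2 / g1)) := by
    rw [eq_inv_mul_iff_mul_eq, ← mul_assoc, ← heq, mul_inv_cancel_right]
  rw [smul_smul, hb', mul_smul, hfix]

/-- If a regular `b ∈ A` fixes a compact `A`-minimal set pointwise and stabilizers are discrete,
then the set is locally, hence globally, a single `A`-orbit. -/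
lemma orbit_of_fixed [T2Space X] [ContinuousSMul (SLR n) X] {Y : Set X}
    (hYmin : IsMinimalOn (diagA n : Set (SLR n)) Y)
    (hopen : ∀ x : X, ∀ V ∈ 𝓝 (1 : SLR n), (fun g => g • x) '' V ∈ 𝓝 x)
    (hstab : ∀ x : X, ∀ᶠ c in 𝓝 (1 : SLR n), c • x = x → c = 1)
    {b : SLR n} (hb : b ∈ diagA n) (hreg : ∀ i j, i ≠ j → b.1 i i ≠ b.1 j j) {y0 : X}
    (hy0 : y0 ∈ Y) (hfix : b • y0 = y0) : Y = (fun g : SLR n => g • y0) '' posDiag n := by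
  have hYA : ∀ g ∈ diagA n, ∀ y ∈ Y, g • y ∈ Y := fun g hg y hy => min_smul_mem hYmin hg hy
  have hbY : ∀ y ∈ Y, b • y = y := by
    have hcl : IsClosed {y : X | b • y = y} := isClosed_eq (continuous_const_smul b) continuous_id
    refine min_subset hYmin hcl hy0 fun g hg => ?_
    change b • g • y0 = g • y0
    rw [smul_smul, diagA_comm hb hg, mul_smul, hfix]
  have hcomm : Tendsto (fun g : SLR n => g⁻¹ * b * g * b⁻¹) (𝓝 1) (𝓝 1) := by
    have h1 : Continuous fun g : SLR n => g⁻¹ * b * g * b⁻¹ :=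
      ((continuous_inv.mul continuous_const).mul continuous_id).mul continuous_const
    have h2 := h1.tendsto 1
    simpa using h2
  have hloc : ∀ᶠ g in 𝓝 (1 : SLR n), g • y0 ∈ Y → g ∈ diagA n := by
    filter_upwards [hcomm.eventually (hstab y0), diag_of_near_one] with g h1 h2 hg
    have h3 : g⁻¹ * b * g * b⁻¹ = 1 := by
      refine h1 ?_
      have h4 : b⁻¹ • y0 = y0 := by rw [inv_smul_eq_iff, hfix]
      rw [mul_smul, h4, mul_smul, mul_smul, hbY _ hg, inv_smul_smul]
    have h5 : b * g = g * b := by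
      rw [mul_inv_eq_one, mul_assoc, inv_mul_eq_iff_eq_mul] at h3
      exact h3
    refine h2 fun i j hij => ?_
    have h6 : (b * g).1 i j = (g * b).1 i j := by rw [h5]
    rw [mul_diag_entry hb, diag_mul_entry hb, mul_comm] at h6
    by_contra h7
    exact hreg i j hij (mul_left_cancel₀ h7 h6)
  refine Set.Subset.antisymm (fun y hy => ?_) ?_
  · have h1 : y0 ∈ closure ((· • y) '' (diagA n : Set (SLR n))) := hYmin.2.2 y hy hy0
    obtain ⟨w, ⟨g, hg, rfl⟩, ⟨a, ha, hag⟩⟩ := mem_closure_iff_nhds.1 h1 _ (hopen y0 _ hloc)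
    dsimp only at hag
    have hgA : g ∈ diagA n := hg (by rw [← hag]; exact hYA a ha y hy)
    refine ⟨a⁻¹ * g, mul_mem (inv_mem ha) hgA, ?_⟩
    change (a⁻¹ * g) • y0 = y
    rw [mul_smul, inv_smul_eq_iff, hag]
  · rintro _ ⟨a, ha, rfl⟩
    exact hYA a ha y0 hy0

/-- The implication (c) ⇒ (a), for any space on which `SL_n(ℝ)` acts with open orbit maps and
discrete stabilizers. -/
lemma orbit_of_roots [T2Space X] [ContinuousSMul (SLR n) X] (hn : n ≠ 0) {Y : Set X}
    (hY : IsCompact Y) (hYmin : IsMinimalOn (diagA n : Set (SLR n)) Y)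
    (hopen : ∀ x : X, ∀ V ∈ 𝓝 (1 : SLR n), (fun g => g • x) '' V ∈ 𝓝 x)
    (hstab : ∀ x : X, ∀ᶠ c in 𝓝 (1 : SLR n), c • x = x → c = 1)
    (hc : ∀ i j : Fin n, i ≠ j → ∃ Z ⊆ Y, IsCompact Z ∧ IsMinimalOn (kerA n i j : Set (SLR n)) Z ∧
      ∀ y ∈ Y, ∃ a ∈ diagA n, ∃ z ∈ Z, a • z = y) :
    ∃ x : X, Y = (fun g : SLR n => g • x) '' posDiag n := by
  have hYA : ∀ g ∈ diagA n, ∀ y ∈ Y, g • y ∈ Y := fun g hg y hy => min_smul_mem hYmin hg hy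
  have hR : ∀ i, rootRel (n := n) Y i i := fun i => Or.inl rfl
  have hYP := genH_preserves (n := n) hYA
  have hsmall := small_displacement hn hR rootRel_trans hY hYA hYP
    fun i j hij y s hy hs hsy => by
      obtain ⟨Z, hZY, hZc, hZ, hAZ⟩ := hc i j hij
      exact Or.inr ⟨hij, root_invariant hij hY hYmin hZY hZc hZ hAZ hy hs hsy⟩
  obtain ⟨b, hb, hreg, y, hy, hfix⟩ :=
    exists_fixed hn hR rootRel_trans hY hYmin.1 hYA hYP hopen hsmall
  exact ⟨y, orbit_of_fixed hYmin hopen hstab hb hreg hy hfix⟩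

end Closing

section Quotient

variable {n : ℕ} {Γ : Subgroup (SLR n)}

lemma quotient_t2 [DiscreteTopology Γ] : T2Space (SLR n ⧸ Γ) := by
  have hcl : IsClosed (Γ : Set (SLR n)) := Subgroup.isClosed_of_discrete
  rw [t2Space_iff_of_isOpenQuotientMap QuotientGroup.isOpenQuotientMap_mk]
  have : {q : SLR n × SLR n | (QuotientGroup.mk q.1 : SLR n ⧸ Γ) = QuotientGroup.mk q.2} =
      (fun q : SLR n × SLR n => q.1⁻¹ * q.2) ⁻¹' Γ := by
    ext q
    exact QuotientGroup.eq
  rw [this]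
  exact hcl.preimage (continuous_fst.inv.mul continuous_snd)

lemma quotient_open (x : SLR n ⧸ Γ) (V : Set (SLR n)) (hV : V ∈ 𝓝 (1 : SLR n)) :
    (fun g : SLR n => g • x) '' V ∈ 𝓝 x := by
  induction x using QuotientGroup.induction_on with
  | H w =>
    have h1 : (fun g : SLR n => g * w⁻¹) ⁻¹' V ∈ 𝓝 w := by
      refine (continuous_mul_const w⁻¹).continuousAt ?_
      rwa [mul_inv_cancel]
    refine Filter.mem_of_superset
      ((QuotientGroup.isOpenQuotientMap_mk (N := Γ)).isOpenMap.image_mem_nhds h1) ?_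
    rintro _ ⟨g, hg, rfl⟩
    refine ⟨g * w⁻¹, hg, ?_⟩
    change ((g * w⁻¹ * w : SLR n) : SLR n ⧸ Γ) = _
    rw [inv_mul_cancel_right]

lemma quotient_stab [DiscreteTopology Γ] (x : SLR n ⧸ Γ) :
    ∀ᶠ c in 𝓝 (1 : SLR n), c • x = x → c = 1 := by
  induction x using QuotientGroup.induction_on with
  | H w =>
    have h1 : ∀ᶠ g in 𝓝 (1 : SLR n), g ∈ Γ → g = 1 := by
      obtain ⟨U, hU, hU1⟩ := isOpen_induced_iff.1 (isOpen_discrete ({1} : Set Γ))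
      have h2 : (1 : SLR n) ∈ U := by
        have : (1 : Γ) ∈ Subtype.val ⁻¹' U := by rw [hU1]; rfl
        exact this
      filter_upwards [hU.mem_nhds h2] with g hg hgΓ
      have : (⟨g, hgΓ⟩ : Γ) ∈ ({1} : Set Γ) := by rw [← hU1]; exact hg
      exact congrArg Subtype.val this
    have h2 : Tendsto (fun c : SLR n => w⁻¹ * c * w) (𝓝 1) (𝓝 1) := by
      have h3 : Continuous fun c : SLR n => w⁻¹ * c * w :=
        (continuous_const.mul continuous_id).mul continuous_const
      simpa using h3.tendsto 1
    filter_upwards [h2.eventually h1] with c hc hcw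
    have h3 : w⁻¹ * c * w = 1 := by
      refine hc ?_
      have h4 : ((w : SLR n) : SLR n ⧸ Γ) = ((c * w : SLR n) : SLR n ⧸ Γ) := hcw.symm
      rw [QuotientGroup.eq, ← mul_assoc] at h4
      exact h4
    rw [mul_assoc, inv_mul_eq_one] at h3
    exact (mul_eq_right.1 h3.symm)

end Quotient

end DiagMin
/-- For a lattice `Γ` in `G = SL_n(ℝ)` and a compact `A`-minimal set `Y ⊆ G/Γ`, the
following are equivalent: (a) `Y` is a single compact `A`-orbit; (b) for every root `α`,
every `A_α`-minimal subset `Y_α ⊆ Y` satisfies `A•Y_α = Y`; (c) for every root `α`, some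
`A_α`-minimal subset `Y_α ⊆ Y` satisfies `A•Y_α = Y`. -/
theorem statement_12 (n : ℕ) (hn : 2 ≤ n) (Γ : Subgroup (SLR n)) (hΓ : IsLattice Γ)
    (Y : Set (SLR n ⧸ Γ)) (hYc : IsCompact Y) (hYmin : IsMinimalOn (posDiag n) Y) :
    ((∃ x : SLR n ⧸ Γ, Y = (· • x) '' posDiag n) ↔
      (∀ (i j : Fin n), i ≠ j → ∀ Yα ⊆ Y, IsCompact Yα →
        IsMinimalOn (rootKer n i j) Yα → posDiag n • Yα = Y)) ∧
    ((∃ x : SLR n ⧸ Γ, Y = (· • x) '' posDiag n) ↔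
      (∀ (i j : Fin n), i ≠ j →
        ∃ Yα ⊆ Y, IsCompact Yα ∧ IsMinimalOn (rootKer n i j) Yα ∧
          posDiag n • Yα = Y)) := by
  have := hΓ.1
  have hT2 : T2Space (SLR n ⧸ Γ) := DiagMin.quotient_t2
  have hn0 : n ≠ 0 := by omega
  have hYmin' : IsMinimalOn (DiagMin.diagA n : Set (SLR n)) Y := hYmin
  have hYA : ∀ g ∈ DiagMin.diagA n, ∀ y ∈ Y, g • y ∈ Y :=
    fun g hg y hy => DiagMin.min_smul_mem hYmin' hg hy
  have hab : (∃ x : SLR n ⧸ Γ, Y = (· • x) '' posDiag n) →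
      ∀ (i j : Fin n), i ≠ j → ∀ Yα ⊆ Y, IsCompact Yα →
        IsMinimalOn (rootKer n i j) Yα → posDiag n • Yα = Y := by
    rintro ⟨x, hx⟩ i j - Yα hYα - hmin
    refine Set.Subset.antisymm ?_ fun y hy => ?_
    · rintro _ ⟨a, ha, z, hz, rfl⟩
      exact hYA a ha z (hYα hz)
    · obtain ⟨z, hz⟩ := hmin.1
      have hzY := hYα hz
      rw [hx] at hzY hy
      obtain ⟨a, ha, rfl⟩ := hzY
      obtain ⟨c, hc, rfl⟩ := hy
      refine Set.mem_smul.2 ⟨c * a⁻¹,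
        (DiagMin.diagA n).mul_mem hc ((DiagMin.diagA n).inv_mem ha), a • x, hz, ?_⟩
      change (c * a⁻¹) • a • x = c • x
      rw [smul_smul, inv_mul_cancel_right]
  have hbc : (∀ (i j : Fin n), i ≠ j → ∀ Yα ⊆ Y, IsCompact Yα →
        IsMinimalOn (rootKer n i j) Yα → posDiag n • Yα = Y) →
      ∀ (i j : Fin n), i ≠ j → ∃ Yα ⊆ Y, IsCompact Yα ∧ IsMinimalOn (rootKer n i j) Yα ∧
          posDiag n • Yα = Y := by
    intro h i j hij
    obtain ⟨Z, hZY, hZc, hZ⟩ := DiagMin.exists_minimal (DiagMin.kerA n i j) hYc hYmin.1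
      fun g hg y hy => hYA g (DiagMin.kerA_le hg) y hy
    exact ⟨Z, hZY, hZc, hZ, h i j hij Z hZY hZc hZ⟩
  have hca : (∀ (i j : Fin n), i ≠ j → ∃ Yα ⊆ Y, IsCompact Yα ∧
      IsMinimalOn (rootKer n i j) Yα ∧ posDiag n • Yα = Y) →
      ∃ x : SLR n ⧸ Γ, Y = (· • x) '' posDiag n := by
    intro h
    refine DiagMin.orbit_of_roots hn0 hYc hYmin' DiagMin.quotient_open DiagMin.quotient_stab
      fun i j hij => ?_
    obtain ⟨Z, hZY, hZc, hZ, hAZ⟩ := h i j hij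
    refine ⟨Z, hZY, hZc, hZ, fun y hy => ?_⟩
    rw [← hAZ] at hy
    exact Set.mem_smul.1 hy
  exact ⟨⟨hab, fun h => hca (hbc h)⟩, ⟨fun h => hbc (hab h), hca⟩⟩
end
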